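/- For every integer α ≥ 1 there exists an integer x such that, in the d_5 tower, L_{2α+1} ≡ x·L_{2α−1} (mod 7^α), where congruence of Laurent series means all corresponding coefficients are congruent. -/

import Mathlib

noncomputable section

/-- `J b = ∏_{k=1}^∞ (1 - q^{b·k})` as a formal power series with integer coefficients. -/
def J (b : ℕ) : PowerSeries ℤ :=
  PowerSeries.mk fun n =>
    PowerSeries.coeff n
      (∏ k ∈ Finset.range (n + 1), (1 - (PowerSeries.X : PowerSeries ℤ) ^ (b * (k + 1))))

/-!
Write `κ` and `β` for the weight `4` eta quotients generating the modular forms on `Γ₀(2)` of weight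
divisible by `4`, and `h` for the square root of the Eisenstein series `E₆` that is `1` modulo `7`.
A suitable power of `h` is `1` modulo any given power of `7`, and in weight `k` the operator `U₇`
agrees with the Hecke operator `T₇` modulo `7 ^ (k - 1)`. Hence, once eta factors are removed, both
steps of the tower preserve the property of being, modulo every power of `7`, a form in `κ` and `β`
divided by a power of `h`. The odd-indexed terms become series of weight `-7` and the even-indexed
ones series of weight `0`, with controlled denominators.

Modulo `7`, two consecutive steps have rank one on the series of weight `-7`: their image is spanned
by a vector `v` which they multiply by the unit `-3`. These are finitely many congruences between
modular forms, decided on finitely many coefficients by Sturm's bound. For an operator `T` with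
this property, `T ^ (n + 1) x` is a multiple of `T ^ n v` modulo `7 ^ (n + 1)` for all `x`, and
therefore a multiple of `T ^ n x` modulo `7 ^ n`. The first term of the tower is divisible by `7`,
which gains the last power of `7`.
-/

open PowerSeries Finset

section DiskSum

variable {R : Type*} [CommRing R] [Algebra R ℂ] {f g : R⟦X⟧} {F G : ℂ → ℂ}

/-- The power series `g` converges to the function `F` on the open unit disk. Coefficients in any
ring over which `ℂ` is an algebra are allowed, so that `ℤ` and `ℂ` are treated uniformly. -/
def HasDiskSum (g : R⟦X⟧) (F : ℂ → ℂ) : Prop :=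
  ∀ q : ℂ, ‖q‖ < 1 → HasSum (fun n => algebraMap R ℂ (coeff n g) * q ^ n) (F q)

namespace HasDiskSum

lemma congr (hf : HasDiskSum f F) (hFG : ∀ q, ‖q‖ < 1 → F q = G q) : HasDiskSum f G :=
  fun q hq => hFG q hq ▸ hf q hq

lemma map_algebraMap (hf : HasDiskSum f F) : HasDiskSum (f.map (algebraMap R ℂ)) F := fun q hq => by
  simpa using hf q hq

lemma add (hf : HasDiskSum f F) (hg : HasDiskSum g G) :
    HasDiskSum (f + g) (fun q => F q + G q) := fun q hq => by
  simpa [add_mul] using (hf q hq).add (hg q hq)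

lemma sub (hf : HasDiskSum f F) (hg : HasDiskSum g G) :
    HasDiskSum (f - g) (fun q => F q - G q) := fun q hq => by
  simpa [sub_mul] using (hf q hq).sub (hg q hq)

lemma C_mul (hf : HasDiskSum f F) (c : R) :
    HasDiskSum (C c * f) (fun q => algebraMap R ℂ c * F q) := fun q hq => by
  simpa [mul_assoc] using (hf q hq).mul_left (algebraMap R ℂ c)

lemma mul (hf : HasDiskSum f F) (hg : HasDiskSum g G) :
    HasDiskSum (f * g) (fun q => F q * G q) := fun q hq => by
  have hf_norm := (hf q hq).summable.norm
  have hg_norm := (hg q hq).summable.norm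
  have hsum := (summable_norm_sum_mul_antidiagonal_of_summable_norm hf_norm hg_norm).of_norm.hasSum
  rw [← tsum_mul_tsum_eq_tsum_sum_antidiagonal_of_summable_norm hf_norm hg_norm,
    (hf q hq).tsum_eq, (hg q hq).tsum_eq] at hsum
  refine hsum.congr_fun fun n => ?_
  rw [coeff_mul, map_sum, Finset.sum_mul]
  refine Finset.sum_congr rfl fun x hx => ?_
  rw [← mem_antidiagonal.1 hx, pow_add, map_mul]
  ring

lemma const (c : R) : HasDiskSum (C c) (fun _ => algebraMap R ℂ c) := fun q _ => by
  simpa using hasSum_single (f := fun n => algebraMap R ℂ (coeff n (C c)) * q ^ n) 0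
    fun n hn => by simp [coeff_C, hn]

lemma one : HasDiskSum (1 : R⟦X⟧) (fun _ => 1) := by simpa using const (1 : R)

lemma zero : HasDiskSum (0 : R⟦X⟧) (fun _ => 0) := by simpa using const (0 : R)

lemma X : HasDiskSum (PowerSeries.X : R⟦X⟧) (fun q => q) := fun q _ => by
  simpa using hasSum_single (f := fun n => algebraMap R ℂ (coeff n PowerSeries.X) * q ^ n) 1
    fun n hn => by simp [coeff_X, hn]

lemma pow (hf : HasDiskSum f F) (n : ℕ) : HasDiskSum (f ^ n) (fun q => F q ^ n) := by
  induction n with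
  | zero => simpa using one
  | succ n ih => simpa [pow_succ] using ih.mul hf

lemma prod {ι : Type*} (s : Finset ι) {f : ι → R⟦X⟧} {F : ι → ℂ → ℂ}
    (h : ∀ i ∈ s, HasDiskSum (f i) (F i)) :
    HasDiskSum (∏ i ∈ s, f i) (fun q => ∏ i ∈ s, F i q) := by
  induction s using Finset.cons_induction with
  | empty => simpa using one
  | cons a s ha ih =>
    simp only [prod_cons]
    exact (h a (by simp)).mul (ih fun i hi => h i (by simp [hi]))

lemma expand (hf : HasDiskSum f F) (p : ℕ) (hp : p ≠ 0) :
    HasDiskSum (f.expand p hp) (fun q => F (q ^ p)) := fun q hq => by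
  have hsum := hf (q ^ p) (by rw [norm_pow]; exact pow_lt_one₀ (norm_nonneg _) hq hp)
  rw [← (mul_right_injective₀ hp).hasSum_iff]
  · convert hsum using 2 with n
    simp [coeff_expand_mul, pow_mul]
  · intro n hn
    rw [coeff_expand_of_not_dvd, map_zero, zero_mul]
    rintro ⟨k, rfl⟩
    exact hn ⟨k, rfl⟩

lemma hasFPowerSeriesOnBall (hf : HasDiskSum f F) : HasFPowerSeriesOnBall F
    (FormalMultilinearSeries.ofScalars ℂ fun n => algebraMap R ℂ (coeff n f)) 0 1 := by
  refine ⟨ENNReal.le_of_forall_nnreal_lt fun r hr => ?_, one_pos, fun {y} hy => ?_⟩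
  · refine FormalMultilinearSeries.le_radius_of_summable_norm _ ?_
    have hr' : ‖(r : ℂ)‖ < 1 := by simpa using hr
    simpa [FormalMultilinearSeries.ofScalars_norm] using (hf r hr').summable.norm
  · have hy' : ‖y‖ < 1 := by simpa [← ofReal_norm, ENNReal.ofReal_lt_one] using hy
    simpa [FormalMultilinearSeries.ofScalars_apply_eq, mul_comm] using hf y hy'

lemma unique [FaithfulSMul R ℂ] (hf : HasDiskSum f F) (hg : HasDiskSum g F) : f = g := by
  have hseries := hf.hasFPowerSeriesOnBall.hasFPowerSeriesAt.eq_formalMultilinearSeries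
    hg.hasFPowerSeriesOnBall.hasFPowerSeriesAt
  ext n
  have hcoeff := congrArg (fun p => FormalMultilinearSeries.coeff p n) hseries
  exact FaithfulSMul.algebraMap_injective R ℂ
    (by simpa [FormalMultilinearSeries.coeff_ofScalars] using hcoeff)

lemma differentiableAt (hf : HasDiskSum f F) {q : ℂ} (hq : ‖q‖ < 1) :
    DifferentiableAt ℂ F q := by
  refine hf.hasFPowerSeriesOnBall.differentiableOn.differentiableAt
    (Metric.isOpen_eball.mem_nhds ?_)
  simpa [← ofReal_norm, ENNReal.ofReal_lt_one] using hq

lemma differentiableOn (hf : HasDiskSum f F) : DifferentiableOn ℂ F (Metric.ball 0 1) :=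
  fun _ hq => (hf.differentiableAt (by simpa using hq)).differentiableWithinAt

end HasDiskSum

lemma hasDiskSum_taylor (hF : DifferentiableOn ℂ F (Metric.ball 0 1)) :
    HasDiskSum (PowerSeries.mk fun n => (n.factorial : ℂ)⁻¹ * iteratedDeriv n F 0) F :=
  fun q hq => by
  refine (Complex.hasSum_taylorSeries_on_ball hF (z := q) (by simpa using hq)).congr_fun fun n => ?_
  simp only [coeff_mk, Algebra.algebraMap_self_apply, smul_eq_mul, sub_zero]
  ring

namespace HasDiskSum

lemma inv {g' : R⟦X⟧} [FaithfulSMul R ℂ] (hf : HasDiskSum f F) (hF : ∀ q, ‖q‖ < 1 → F q ≠ 0)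
    (hg : f * g' = 1) : HasDiskSum g' (fun q => (F q)⁻¹) := by
  have htaylor := hasDiskSum_taylor (F := fun q => (F q)⁻¹) fun q hq =>
    ((hf.differentiableAt (by simpa using hq)).inv
      (hF q (by simpa using hq))).differentiableWithinAt
  have hone := ((hf.map_algebraMap.mul htaylor).congr (G := fun _ => 1)
    fun q hq => mul_inv_cancel₀ (hF q hq)).unique one
  have hg' : g'.map (algebraMap R ℂ) * f.map (algebraMap R ℂ) = 1 := by
    rw [← map_mul, mul_comm, hg, map_one]
  rw [← left_inv_eq_right_inv hg' hone] at htaylor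
  exact fun q hq => by simpa using htaylor q hq

lemma norm_coeff_le (hf : HasDiskSum f F) {B : ℝ} (hB : ∀ q : ℂ, ‖q‖ = 1 / 2 → ‖F q‖ ≤ B) (n : ℕ) :
    ‖algebraMap R ℂ (coeff n f)‖ ≤ B * 2 ^ n := by
  have hcauchy := Complex.norm_iteratedDeriv_le_of_forall_mem_sphere_norm_le (c := 0)
    (R := 1 / 2) (C := B) n (by norm_num) (f := F)
    (hf.differentiableOn.mono (Metric.closedBall_subset_ball (by norm_num))
      |>.diffContOnCl_ball subset_rfl)
    fun z hz => hB z (by simpa using hz)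
  have hcoeff := congrArg (coeff n)
    (hf.map_algebraMap.unique (hasDiskSum_taylor hf.differentiableOn))
  rw [coeff_map, coeff_mk] at hcoeff
  rw [hcoeff, norm_mul, norm_inv, Complex.norm_natCast, inv_mul_le_iff₀ (by positivity)]
  refine hcauchy.trans (le_of_eq ?_)
  rw [one_div, inv_pow]
  field_simp

lemma of_tendstoUniformlyOn {u : ℕ → R⟦X⟧} {E : ℕ → ℂ → ℂ} (hu : ∀ N, HasDiskSum (u N) (E N))
    (hF : DifferentiableOn ℂ F (Metric.ball 0 1))
    (hlim : TendstoUniformlyOn E F Filter.atTop (Metric.sphere 0 (1 / 2)))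
    (hcoeff : ∀ n, ∀ᶠ N in Filter.atTop, coeff n (u N) = coeff n f) : HasDiskSum f F := by
  have htaylor := hasDiskSum_taylor hF
  set g := PowerSeries.mk fun n => (n.factorial : ℂ)⁻¹ * iteratedDeriv n F 0
  suffices hfg : f.map (algebraMap R ℂ) = g by
    rw [← hfg] at htaylor
    exact fun q hq => by simpa using htaylor q hq
  ext n
  rw [eq_comm, ← sub_eq_zero, ← norm_le_zero_iff]
  refine le_of_forall_pos_le_add fun ε hε => ?_
  rw [Metric.tendstoUniformlyOn_iff] at hlim
  obtain ⟨N, hclose, hN⟩ := ((hlim (ε / 2 ^ n) (by positivity)).and (hcoeff n)).exists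
  have hdiff := (htaylor.sub (hu N).map_algebraMap).norm_coeff_le (B := ε / 2 ^ n)
    (fun q hq => by simpa [dist_eq_norm] using (hclose q (by simpa using hq)).le) n
  rw [map_sub, coeff_map, hN, ← coeff_map, Algebra.algebraMap_self_apply] at hdiff
  refine hdiff.trans (le_of_eq ?_)
  field_simp
  ring

end HasDiskSum

end DiskSum

section EulerFunction

/-- Euler's function `∏ (1 - q ^ n)` on the open unit disk, the analytic counterpart of `J 1`. -/
def eulerFun (q : ℂ) : ℂ := ∏' n : ℕ, (1 - q ^ (n + 1))

lemma coeff_prod_one_sub_X_pow {b : ℕ} (hb : b ≠ 0) {n N : ℕ} (hN : n + 1 ≤ N) :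
    coeff n (∏ k ∈ range N, (1 - (X : ℤ⟦X⟧) ^ (b * (k + 1)))) = coeff n (J b) := by
  induction N, hN using Nat.le_induction with
  | base => simp [J]
  | succ N hN ih =>
    rw [prod_range_succ, mul_sub, mul_one, map_sub, ih, coeff_mul_X_pow', if_neg, sub_zero]
    have : N + 1 ≤ b * (N + 1) := Nat.le_mul_of_pos_left _ (Nat.pos_of_ne_zero hb)
    lia

lemma J_eq_expand {b : ℕ} (hb : b ≠ 0) : J b = (J 1).expand b hb := by
  ext n
  have hprod : (∏ k ∈ range (n + 1), (1 - (X : ℤ⟦X⟧) ^ (b * (k + 1))))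
      = (∏ k ∈ range (n + 1), (1 - (X : ℤ⟦X⟧) ^ (1 * (k + 1)))).expand b hb := by
    simp [← pow_mul]
  rw [← coeff_prod_one_sub_X_pow hb le_rfl, hprod, coeff_expand, coeff_expand]
  split_ifs with h
  · exact coeff_prod_one_sub_X_pow one_ne_zero (by gcongr; exact Nat.div_le_self n b)
  · rfl

lemma tendstoUniformlyOn_eulerFun :
    TendstoUniformlyOn (fun (N : ℕ) (q : ℂ) => ∏ k ∈ range N, (1 - q ^ (k + 1))) eulerFun
      Filter.atTop (Metric.sphere 0 (1 / 2)) := by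
  have hlim := ModularForm.multipliableLocallyUniformlyOn_one_sub_pow.hasProdLocallyUniformlyOn
    |>.tendstoLocallyUniformlyOn_finsetRange
  exact (tendstoLocallyUniformlyOn_iff_forall_isCompact Metric.isOpen_ball).1 hlim _
    (Metric.sphere_subset_closedBall.trans (Metric.closedBall_subset_ball (by norm_num)))
    (isCompact_sphere _ _)

lemma hasDiskSum_J_one : HasDiskSum (J 1) eulerFun :=
  HasDiskSum.of_tendstoUniformlyOn
    (fun N => HasDiskSum.prod (range N) fun k _ => HasDiskSum.one.sub (HasDiskSum.X.pow (k + 1)))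
    ModularForm.differentiableOn_tprod_one_sub_pow tendstoUniformlyOn_eulerFun fun n => by
      filter_upwards [Filter.eventually_ge_atTop (n + 1)] with N hN
      simpa using coeff_prod_one_sub_X_pow one_ne_zero hN

lemma hasDiskSum_J {b : ℕ} (hb : b ≠ 0) : HasDiskSum (J b) (fun q => eulerFun (q ^ b)) := by
  rw [J_eq_expand hb]
  exact hasDiskSum_J_one.expand b hb

lemma eulerFun_ne_zero {q : ℂ} (hq : ‖q‖ < 1) : eulerFun q ≠ 0 := by
  simp only [eulerFun, sub_eq_add_neg]
  refine tprod_one_add_ne_zero_of_summable (f := fun n : ℕ => -q ^ (n + 1)) (fun n h => ?_) ?_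
  · have hroot : q ^ (n + 1) = 1 := by linear_combination -h
    have hlt : ‖q ^ (n + 1)‖ < 1 := by
      rw [norm_pow]
      exact pow_lt_one₀ (norm_nonneg _) hq (by lia)
    simp [hroot] at hlt
  · simpa using (summable_nat_add_iff 1).mpr (summable_geometric_of_lt_one (norm_nonneg _) hq)

end EulerFunction

section Nome

/-- The nome `exp (2πiz)`, the local parameter at the cusp `∞`. -/
def nome (z : ℂ) : ℂ := Complex.exp (2 * Real.pi * Complex.I * z)

lemma norm_nome_lt_one {z : ℂ} (hz : 0 < z.im) : ‖nome z‖ < 1 := by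
  simpa [nome] using UpperHalfPlane.norm_exp_two_pi_I_lt_one ⟨z, hz⟩

lemma nome_add (z w : ℂ) : nome (z + w) = nome z * nome w := by
  rw [nome, mul_add, Complex.exp_add]
  rfl

lemma nome_add_intCast (z : ℂ) (n : ℤ) : nome (z + n) = nome z := by
  have hn : nome n = 1 := by
    rw [nome, mul_comm]
    exact Complex.exp_int_mul_two_pi_mul_I n
  rw [nome_add, hn, mul_one]

lemma nome_add_one (z : ℂ) : nome (z + 1) = nome z := by simpa using nome_add_intCast z 1

lemma nome_pow (z : ℂ) (n : ℕ) : nome z ^ n = nome (n * z) := by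
  rw [nome, ← Complex.exp_nat_mul, nome]
  congr 1
  ring

lemma nome_ne_zero (z : ℂ) : nome z ≠ 0 := Complex.exp_ne_zero _

lemma nome_half : nome (1 / 2) = -1 := by
  rw [nome, show 2 * (Real.pi : ℂ) * Complex.I * (1 / 2) = Real.pi * Complex.I by ring,
    Complex.exp_pi_mul_I]

lemma exists_nome_eq {q : ℂ} (h0 : q ≠ 0) (h1 : ‖q‖ < 1) : ∃ z : ℂ, 0 < z.im ∧ nome z = q := by
  refine ⟨Function.Periodic.invQParam 1 q,
    Function.Periodic.im_invQParam_pos_of_norm_lt_one one_pos h1 h0, ?_⟩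
  simpa [Function.Periodic.qParam, nome] using
    Function.Periodic.qParam_right_inv (h := 1) one_ne_zero h0

lemma differentiable_nome : Differentiable ℂ nome := by
  unfold nome
  fun_prop

open UpperHalfPlane in
lemma tendsto_nome_atImInfty {c : ℝ} (hc : 0 < c) (d : ℂ) :
    Filter.Tendsto (fun τ : ℍ => nome (c * τ + d)) atImInfty (nhds 0) := by
  rw [tendsto_zero_iff_norm_tendsto_zero]
  have hnorm : (fun τ : ℍ => ‖nome (c * τ + d)‖)
      = fun τ : ℍ => Real.exp (-(2 * Real.pi * (c * τ.im + d.im))) := by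
    funext τ
    simp [nome, Complex.norm_exp]
  rw [hnorm]
  exact Real.tendsto_exp_neg_atTop_nhds_zero.comp <|
    (Filter.tendsto_atTop_add_const_right _ _
      (Filter.tendsto_comap.const_mul_atTop hc)).const_mul_atTop (by positivity)

lemma ne_zero_of_im_pos {z : ℂ} (hz : 0 < z.im) : z ≠ 0 := by
  rintro rfl
  simp at hz

lemma im_neg_one_div_pos {z : ℂ} (hz : 0 < z.im) : 0 < (-1 / z).im := by
  rw [neg_div, one_div, Complex.neg_im, Complex.inv_im, neg_div, neg_neg]
  exact div_pos hz (Complex.normSq_pos.2 (ne_zero_of_im_pos hz))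

variable {R : Type*} [CommRing R] [Algebra R ℂ] {f : R⟦X⟧} {F : ℂ → ℂ}

lemma HasDiskSum.eq_zero_of_nome [FaithfulSMul R ℂ] (hf : HasDiskSum f F)
    (h : ∀ z : ℂ, 0 < z.im → F (nome z) = 0) : f = 0 := by
  have hX : HasDiskSum (PowerSeries.X * f) (fun _ => 0) := by
    refine (HasDiskSum.X.mul hf).congr fun q hq => ?_
    by_cases h0 : q = 0
    · simp [h0]
    · obtain ⟨z, hz, rfl⟩ := exists_nome_eq h0 hq
      rw [h z hz, mul_zero]
  have := (FaithfulSMul.algebraMap_injective R ℂ).isDomain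
  exact (mul_eq_zero.1 (hX.unique HasDiskSum.zero)).resolve_left X_ne_zero

lemma HasDiskSum.differentiableAt_comp_nome (hf : HasDiskSum f F) {u : ℂ → ℂ}
    (hu : Differentiable ℂ u) {z : ℂ} (hz : 0 < (u z).im) :
    DifferentiableAt ℂ (fun w => F (nome (u w))) z :=
  DifferentiableAt.comp z (f := fun w => nome (u w)) (hf.differentiableAt (norm_nome_lt_one hz))
    ((differentiable_nome.comp hu) z)

lemma HasDiskSum.exists_of_X_pow_mul {n : ℕ} (hf : HasDiskSum (PowerSeries.X ^ n * f) F) :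
    ∃ G, HasDiskSum f G ∧ ∀ q, ‖q‖ < 1 → F q = q ^ n * G q := by
  have hsum (q : ℂ) (hq : ‖q‖ < 1) : Summable fun m => algebraMap R ℂ (coeff m f) * q ^ m := by
    by_cases h0 : q = 0
    · subst h0
      exact summable_of_ne_finset_zero (s := {0}) fun m hm => by
        simp [show m ≠ 0 by simpa using hm]
    refine (((summable_nat_add_iff n).2 (hf q hq).summable).mul_left (q ^ n)⁻¹).congr fun m => ?_
    rw [add_comm m n, coeff_X_pow_mul', if_pos (by lia), Nat.add_sub_cancel_left, pow_add]
    field_simp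
  have hG : HasDiskSum f (fun q => ∑' m, algebraMap R ℂ (coeff m f) * q ^ m) :=
    fun q hq => (hsum q hq).hasSum
  exact ⟨_, hG, fun q hq => (hf q hq).unique (((HasDiskSum.X.pow n).mul hG) q hq)⟩

end Nome

section Eta

open ModularForm

lemma eta_eq_nome_mul_eulerFun (z : ℂ) : eta z = nome (z / 24) * eulerFun (nome z) := by
  unfold eta eulerFun
  congr 1
  · rw [Function.Periodic.qParam, nome]
    push_cast
    ring_nf
  · simp_rw [eta_q_eq_pow]
    rfl

lemma eta_pow_twentyFour (z : ℂ) : eta z ^ 24 = nome z * eulerFun (nome z) ^ 24 := by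
  rw [eta_eq_nome_mul_eulerFun, mul_pow, nome_pow]
  congr 2
  push_cast
  ring

lemma eta_neg_one_div_pow_eight {z : ℂ} (hz : 0 < z.im) :
    eta (-1 / z) ^ 8 = z ^ 4 * eta z ^ 8 := by
  have hS : eta (-1 / z) = (Complex.sqrt Complex.I)⁻¹ * (Complex.sqrt z * eta z) := by
    simpa using eta_comp_eq_csqrt_I_inv hz
  have hsqrt (w : ℂ) (hw : w ≠ 0) : Complex.sqrt w ^ 8 = w ^ 4 := by
    rw [sqrt_eq_exp hw, ← Complex.exp_nat_mul, ← Complex.exp_log hw, ← Complex.exp_nat_mul,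
      Complex.exp_log hw]
    push_cast
    ring_nf
  rw [hS, mul_pow, mul_pow, inv_pow, hsqrt _ Complex.I_ne_zero, hsqrt _ (ne_zero_of_im_pos hz),
    Complex.I_pow_four]
  ring

lemma eta_neg_one_div_pow_twentyFour {z : ℂ} (hz : 0 < z.im) :
    eta (-1 / z) ^ 24 = z ^ 12 * eta z ^ 24 := by
  rw [show (24 : ℕ) = 8 * 3 by rfl, pow_mul, eta_neg_one_div_pow_eight hz, mul_pow]
  ring

lemma eta_add_one_pow_twentyFour (z : ℂ) : eta (z + 1) ^ 24 = eta z ^ 24 := by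
  rw [eta_pow_twentyFour, eta_pow_twentyFour, nome_add_one]

end Eta

section LevelOne

open UpperHalfPlane ModularForm MatrixGroups

variable {f : ℂ → ℂ}

lemma slash_zero_eq_self (hT : ∀ z : ℂ, 0 < z.im → f (z + 1) = f z)
    (hS : ∀ z : ℂ, 0 < z.im → f (-1 / z) = f z) (γ : SL(2, ℤ)) :
    ((fun τ : ℍ => f τ) ∣[(0 : ℤ)] γ) = fun τ : ℍ => f τ := by
  refine SlashInvariantForm.slash_action_generators_SL2Z ?_ ?_ γ
  · ext τ
    rw [SL_slash_apply, modular_S_smul, ← hS τ τ.im_pos, neg_div, one_div, neg_inv]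
    simp
  · ext τ
    rw [SL_slash_apply, modular_T_smul, ← hT τ τ.im_pos]
    simp [add_comm]

lemma eq_zero_of_levelOne_weight_zero (hd : DifferentiableOn ℂ f {z | 0 < z.im})
    (hT : ∀ z : ℂ, 0 < z.im → f (z + 1) = f z) (hS : ∀ z : ℂ, 0 < z.im → f (-1 / z) = f z)
    (hlim : Filter.Tendsto (fun τ : ℍ => f τ) atImInfty (nhds 0)) {z : ℂ} (hz : 0 < z.im) :
    f z = 0 := by
  have hslash := slash_zero_eq_self hT hS
  let F : ModularForm 𝒮ℒ 0 :=
    { toFun := fun τ : ℍ => f τ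
      slash_action_eq' := fun _ ⟨γ, hγ⟩ ↦ hγ ▸ hslash γ
      holo' := by
        rw [UpperHalfPlane.mdifferentiable_iff]
        exact hd.congr fun w hw => by simp [ofComplex_apply_of_im_pos hw]
      bdd_at_cusps' := fun {c} hc => by
        rw [Subgroup.IsArithmetic.isCusp_iff_isCusp_SL2Z] at hc
        rw [OnePoint.isBoundedAt_iff_forall_SL2Z hc]
        intro γ _
        rw [hslash γ]
        exact hlim.isBigO_one ℝ }
  obtain ⟨c, hc⟩ := ModularFormClass.levelOne_weight_zero_const F
  have hfc (τ : ℍ) : f τ = c := congrFun hc τ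
  simp_rw [hfc] at hlim
  rw [← tendsto_nhds_unique tendsto_const_nhds hlim]
  exact hfc ⟨z, hz⟩

end LevelOne

section InversionPair

variable {k : ℕ} {G G' : ℂ → ℂ}

/-- `G` and `G'` are, in terms of the nome, the expansions at the two cusps of `Γ₀(2)` of a
modular form of weight `k`: they are exchanged by `z ↦ -1 / z`, the cusp `0` having width `2`. -/
def IsInversionPair (k : ℕ) (G G' : ℂ → ℂ) : Prop :=
  ∀ z : ℂ, 0 < z.im → G (nome (-1 / z)) = z ^ k * G' (nome (z / 2))

lemma IsInversionPair.apply_neg_one_div_half (h : IsInversionPair k G G') (hk : Even k) {z : ℂ}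
    (hz : 0 < z.im) : G' (nome (-1 / z / 2)) = z ^ k * G (nome z) := by
  have hz0 := ne_zero_of_im_pos hz
  have hinv := h (-1 / z) (im_neg_one_div_pos hz)
  rw [show -1 / (-1 / z) = z by field_simp] at hinv
  rw [hinv, ← mul_assoc, ← mul_pow, show z * (-1 / z) = -1 by field_simp, hk.neg_one_pow, one_mul]

lemma IsInversionPair.apply_neg_one_div_add_one_half (h : IsInversionPair k G G') (hk : Even k)
    {z : ℂ} (hz : 0 < z.im) :
    G' (nome ((-1 / z + 1) / 2)) = z ^ k * G' (nome ((z + 1) / 2)) := by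
  have hz0 := ne_zero_of_im_pos hz
  have hz1 : 0 < (z - 1).im := by simpa using hz
  have hz10 := ne_zero_of_im_pos hz1
  have hdiv : -1 / z + 1 = (z - 1) / z := by field_simp; ring
  have hback := h.apply_neg_one_div_half hk (z := -1 / (-1 / z + 1))
    (im_neg_one_div_pos (by simpa using im_neg_one_div_pos hz))
  have hshift : nome (-1 / (-1 / z + 1)) = nome (-1 / (z - 1)) := by
    rw [← nome_add_one, hdiv]
    congr 1
    field_simp
    ring
  have hhalf : nome ((z - 1) / 2) = nome ((z + 1) / 2) := by
    rw [← nome_add_one]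
    congr 1
    ring
  have hfactor : -1 / (-1 / z + 1) * (z - 1) = -z := by
    rw [hdiv]
    field_simp
  rw [hshift, h _ hz1, hhalf, ← mul_assoc, ← mul_pow, hfactor, hk.neg_pow] at hback
  rw [← hback, hdiv]
  congr 3
  field_simp

end InversionPair

section ModularPair

variable {R : Type*} [CommRing R] [Algebra R ℂ] {k l : ℕ} {g h : R⟦X⟧} {g' h' : ℂ⟦X⟧}

/-- `g` and `g'` are the `q`-expansions at the cusps `∞` and `0` of a modular form of weight `k`
on `Γ₀(2)`. -/
def IsModularPair (k : ℕ) (g : R⟦X⟧) (g' : ℂ⟦X⟧) : Prop :=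
  ∃ G G' : ℂ → ℂ, HasDiskSum g G ∧ HasDiskSum g' G' ∧ IsInversionPair k G G'

namespace IsModularPair

lemma add (hg : IsModularPair k g g') (hh : IsModularPair k h h') :
    IsModularPair k (g + h) (g' + h') := by
  obtain ⟨G, G', hG, hG', hGG'⟩ := hg
  obtain ⟨H, H', hH, hH', hHH'⟩ := hh
  exact ⟨_, _, hG.add hH, hG'.add hH', fun z hz => by simp only [hGG' z hz, hHH' z hz]; ring⟩

lemma sub (hg : IsModularPair k g g') (hh : IsModularPair k h h') :
    IsModularPair k (g - h) (g' - h') := by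
  obtain ⟨G, G', hG, hG', hGG'⟩ := hg
  obtain ⟨H, H', hH, hH', hHH'⟩ := hh
  exact ⟨_, _, hG.sub hH, hG'.sub hH', fun z hz => by simp only [hGG' z hz, hHH' z hz]; ring⟩

lemma mul (hg : IsModularPair k g g') (hh : IsModularPair l h h') :
    IsModularPair (k + l) (g * h) (g' * h') := by
  obtain ⟨G, G', hG, hG', hGG'⟩ := hg
  obtain ⟨H, H', hH, hH', hHH'⟩ := hh
  exact ⟨_, _, hG.mul hH, hG'.mul hH', fun z hz => by simp only [hGG' z hz, hHH' z hz]; ring⟩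

lemma C_mul (hg : IsModularPair k g g') (c : R) :
    IsModularPair k (C c * g) (C (algebraMap R ℂ c) * g') := by
  obtain ⟨G, G', hG, hG', hGG'⟩ := hg
  exact ⟨_, _, hG.C_mul c, hG'.C_mul _, fun z hz => by
    simp only [hGG' z hz, Algebra.algebraMap_self_apply]; ring⟩

lemma one : IsModularPair 0 (1 : R⟦X⟧) 1 :=
  ⟨_, _, HasDiskSum.one, HasDiskSum.one, fun _ _ => by simp⟩

lemma pow (hg : IsModularPair k g g') (n : ℕ) : IsModularPair (k * n) (g ^ n) (g' ^ n) := by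
  induction n with
  | zero => simpa using one
  | succ n ih => simpa [pow_succ, mul_add] using ih.mul hg

lemma left_eq_zero [FaithfulSMul R ℂ] (hk : Even k) (hg : IsModularPair k g 0) : g = 0 := by
  obtain ⟨G, G', hG, hG', hGG'⟩ := hg
  refine hG.eq_zero_of_nome fun z hz => ?_
  have hnome : 0 < (-1 / z / 2).im := by simpa using im_neg_one_div_pos hz
  have hvanish := (hG' _ (norm_nome_lt_one hnome)).unique
    (HasDiskSum.zero (R := ℂ) _ (norm_nome_lt_one hnome))
  rw [hGG'.apply_neg_one_div_half hk hz] at hvanish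
  exact (mul_eq_zero.1 hvanish).resolve_left (pow_ne_zero _ (ne_zero_of_im_pos hz))

lemma right_eq_zero (hg : IsModularPair k (0 : R⟦X⟧) g') : g' = 0 := by
  obtain ⟨G, G', hG, hG', hGG'⟩ := hg
  refine hG'.eq_zero_of_nome fun z hz => ?_
  have h2z : 0 < (2 * z).im := by simpa using hz
  have hnome := norm_nome_lt_one (im_neg_one_div_pos h2z)
  have hvanish := (hG _ hnome).unique (HasDiskSum.zero (R := R) _ hnome)
  rw [hGG' _ h2z, mul_div_cancel_left₀ _ two_ne_zero] at hvanish
  exact (mul_eq_zero.1 hvanish).resolve_left (pow_ne_zero _ (ne_zero_of_im_pos h2z))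

lemma right_unique (hg : IsModularPair k g g') (hh : IsModularPair k g h') : g' = h' :=
  sub_eq_zero.1 (right_eq_zero (R := R) (by simpa using hg.sub hh))

end IsModularPair

end ModularPair

section Sturm

open UpperHalfPlane ModularForm

variable {R : Type*} [CommRing R] [Algebra R ℂ] {m : ℕ} {g : R⟦X⟧} {g' : ℂ⟦X⟧} {G G' : ℂ → ℂ}

/-- The norm from `Γ₀(2)` to level one of the weight `4m` form with expansions `G` and `G'`,
divided by `Δ ^ m` to bring it to weight zero. -/
def levelOneQuotient (m : ℕ) (G G' : ℂ → ℂ) (z : ℂ) : ℂ :=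
  G (nome z) * G' (nome (z / 2)) * G' (nome ((z + 1) / 2)) / (eta z ^ 24) ^ m

lemma differentiableOn_levelOneQuotient (hG : HasDiskSum g G) (hG' : HasDiskSum g' G') :
    DifferentiableOn ℂ (levelOneQuotient m G G') {z | 0 < z.im} := fun z (hz : 0 < z.im) => by
  have hG_diff := hG.differentiableAt_comp_nome (u := fun w => w) differentiable_id hz
  have hG'_diff := hG'.differentiableAt_comp_nome (u := fun w => w / 2) (z := z)
    (by fun_prop) (by simpa using hz)
  have hG'_diff' := hG'.differentiableAt_comp_nome (u := fun w => (w + 1) / 2) (z := z)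
    (by fun_prop) (by simpa using hz)
  exact (((hG_diff.mul hG'_diff).mul hG'_diff').div
    (((differentiableAt_eta_of_mem_upperHalfPlaneSet hz).pow 24).pow m)
    (pow_ne_zero _ (pow_ne_zero _ (eta_ne_zero hz)))).differentiableWithinAt

lemma levelOneQuotient_add_one (z : ℂ) :
    levelOneQuotient m G G' (z + 1) = levelOneQuotient m G G' z := by
  have hhalf : nome ((z + 1 + 1) / 2) = nome (z / 2) := by
    rw [show (z + 1 + 1) / 2 = z / 2 + 1 by ring, nome_add_one]
  rw [levelOneQuotient, hhalf, nome_add_one, eta_add_one_pow_twentyFour, levelOneQuotient]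
  ring

lemma levelOneQuotient_neg_one_div (h : IsInversionPair (4 * m) G G') {z : ℂ} (hz : 0 < z.im) :
    levelOneQuotient m G G' (-1 / z) = levelOneQuotient m G G' z := by
  have hk : Even (4 * m) := ⟨2 * m, by ring⟩
  have hz0 := ne_zero_of_im_pos hz
  have heta := eta_ne_zero hz
  rw [levelOneQuotient, h z hz, h.apply_neg_one_div_half hk hz,
    h.apply_neg_one_div_add_one_half hk hz, eta_neg_one_div_pow_twentyFour hz, mul_pow,
    levelOneQuotient]
  field_simp
  ring

lemma tendsto_levelOneQuotient {g : R⟦X⟧} (hG : HasDiskSum (X ^ (m + 1) * g) G)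
    (hG' : HasDiskSum g' G') :
    Filter.Tendsto (fun τ : ℍ => levelOneQuotient m G G' τ) atImInfty (nhds 0) := by
  obtain ⟨G₁, hG₁, hGG₁⟩ := hG.exists_of_X_pow_mul
  have hcontG' := (hG'.differentiableAt (q := 0) (by simp)).continuousAt.tendsto
  have hcontG₁ := (hG₁.differentiableAt (q := 0) (by simp)).continuousAt.tendsto
  have hcontEuler := (hasDiskSum_J_one.differentiableAt (q := 0) (by simp)).continuousAt.tendsto
  have hnome := tendsto_nome_atImInfty one_pos 0
  have hnome_half := tendsto_nome_atImInfty one_half_pos 0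
  have hnome_half' := tendsto_nome_atImInfty one_half_pos (1 / 2)
  have hlim := hnome.mul (((hcontG₁.comp hnome).mul ((hcontG'.comp hnome_half).mul
    (hcontG'.comp hnome_half'))).div ((hcontEuler.comp hnome).pow (24 * m))
      (pow_ne_zero _ (eulerFun_ne_zero (by simp))))
  rw [zero_mul] at hlim
  refine hlim.congr fun τ => ?_
  have hnome_ne := nome_ne_zero τ
  have heuler_ne := eulerFun_ne_zero (norm_nome_lt_one τ.im_pos)
  have hhalf : ((1 / 2 : ℝ) : ℂ) * τ = τ / 2 := by push_cast; ring
  simp only [Function.comp_apply, Complex.ofReal_one, one_mul, add_zero, Pi.div_apply, hhalf]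
  rw [levelOneQuotient, hGG₁ _ (norm_nome_lt_one τ.im_pos), eta_pow_twentyFour, ← add_div,
    mul_pow, ← pow_mul]
  field_simp
  ring

lemma expand_mul_mul_rescale_eq_zero {g : R⟦X⟧} (hG : HasDiskSum (X ^ (m + 1) * g) G)
    (hG' : HasDiskSum g' G') (h : IsInversionPair (4 * m) G G') :
    (((X ^ (m + 1) * g).map (algebraMap R ℂ)).expand 2 two_ne_zero) * g' * rescale (-1) g' = 0 := by
  have hrescale : HasDiskSum (rescale (-1) g') (fun q => G' (-q)) := fun q hq => by
    refine (hG' (-q) (by simpa using hq)).congr_fun fun n => ?_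
    rw [coeff_rescale, neg_pow q, Algebra.algebraMap_self_apply, Algebra.algebraMap_self_apply]
    ring
  refine (((hG.map_algebraMap.expand 2 two_ne_zero).mul hG').mul hrescale).eq_zero_of_nome
    fun z hz => ?_
  have h2z : 0 < (2 * z).im := by simpa using hz
  have hquot := eq_zero_of_levelOne_weight_zero (differentiableOn_levelOneQuotient hG hG')
    (fun z _ => levelOneQuotient_add_one z) (fun z hz => levelOneQuotient_neg_one_div h hz)
    (tendsto_levelOneQuotient hG hG') h2z
  have hneg : nome ((2 * z + 1) / 2) = -nome z := by
    rw [show (2 * z + 1) / 2 = z + 1 / 2 by ring, nome_add, nome_half]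
    ring
  have hsq : nome (2 * z) = nome z ^ 2 := by
    rw [nome_pow]
    norm_num
  rw [levelOneQuotient, hsq, hneg, mul_div_cancel_left₀ _ two_ne_zero, div_eq_zero_iff] at hquot
  exact hquot.resolve_right (pow_ne_zero _ (pow_ne_zero _ (eta_ne_zero h2z)))

theorem IsModularPair.eq_zero_of_X_pow_dvd [FaithfulSMul R ℂ] (h : IsModularPair (4 * m) g g')
    (hg : X ^ (m + 1) ∣ g) : g = 0 := by
  have hk : Even (4 * m) := ⟨2 * m, by ring⟩
  obtain ⟨g₁, rfl⟩ := hg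
  obtain ⟨G, G', hG, hG', hGG'⟩ := id h
  have hprod := expand_mul_mul_rescale_eq_zero hG hG' hGG'
  rcases mul_eq_zero.1 hprod with hprod | hrescale
  · rcases mul_eq_zero.1 hprod with hexpand | rfl
    · ext n
      refine FaithfulSMul.algebraMap_injective R ℂ ?_
      simpa only [coeff_expand_mul, coeff_map, map_zero] using congrArg (coeff (2 * n)) hexpand
    · exact h.left_eq_zero hk
  · have hg' : g' = 0 := by
      ext n
      simpa [coeff_rescale] using congrArg (coeff n) hrescale
    subst hg'
    exact h.left_eq_zero hk

end Sturm

section AtkinOperator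

variable {R : Type*} [CommRing R]

/-- The Atkin operator `U_m`, sending `∑ a(n) q^n` to `∑ a(mn) q^n`. -/
def atkinU (m : ℕ) : R⟦X⟧ →ₗ[R] R⟦X⟧ where
  toFun f := PowerSeries.mk fun n => coeff (m * n) f
  map_add' f g := by ext; simp
  map_smul' c f := by ext; simp

@[simp]
lemma coeff_atkinU (m n : ℕ) (f : R⟦X⟧) : coeff n (atkinU m f) = coeff (m * n) f := by
  simp [atkinU]

lemma sum_nome_div_pow {m : ℕ} (hm : m ≠ 0) (n : ℕ) :
    ∑ j ∈ range m, nome (j / m) ^ n = if m ∣ n then (m : ℂ) else 0 := by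
  have hroot : IsPrimitiveRoot (nome (1 / m)) m := by
    convert Complex.isPrimitiveRoot_exp m hm using 1
    rw [nome]
    ring_nf
  have hpow (j : ℕ) : nome (j / m) ^ n = (nome (1 / m) ^ n) ^ j := by
    rw [← pow_mul, mul_comm, pow_mul, nome_pow (1 / m) j, mul_one_div]
  simp_rw [hpow]
  split_ifs with h
  · rw [(hroot.pow_eq_one_iff_dvd n).2 h]
    simp
  · have hne : nome (1 / m) ^ n ≠ 1 := fun h' => h ((hroot.pow_eq_one_iff_dvd n).1 h')
    rw [geom_sum_eq hne, ← pow_mul, mul_comm, pow_mul, hroot.pow_eq_one]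
    simp

variable [Algebra R ℂ] {m : ℕ} {f : R⟦X⟧} {F : ℂ → ℂ}

lemma HasDiskSum.summable_atkinU (hf : HasDiskSum f F) (hm : m ≠ 0) {q : ℂ} (hq : ‖q‖ < 1) :
    Summable fun n => algebraMap R ℂ (coeff n (atkinU m f)) * q ^ n := by
  obtain ⟨r, rfl⟩ := IsAlgClosed.exists_pow_nat_eq q (Nat.pos_of_ne_zero hm)
  have hr : ‖r‖ < 1 := by
    rw [norm_pow] at hq
    exact (pow_lt_one_iff_of_nonneg (norm_nonneg r) hm).1 hq
  exact ((hf r hr).summable.comp_injective (mul_right_injective₀ hm)).congr fun n => by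
    simp [pow_mul]

lemma HasDiskSum.hasSum_atkinU_nome (hf : HasDiskSum f F) (hm : m ≠ 0) {z : ℂ} (hz : 0 < z.im) :
    HasSum (fun n => algebraMap R ℂ (coeff n (atkinU m f)) * nome z ^ n)
      (1 / m * ∑ j ∈ range m, F (nome ((z + j) / m))) := by
  have hm' : (m : ℂ) ≠ 0 := Nat.cast_ne_zero.2 hm
  have him (j : ℕ) : 0 < ((z + j) / m).im := by
    simpa using div_pos hz (Nat.cast_pos.2 (Nat.pos_of_ne_zero hm))
  have hterm (n : ℕ) : 1 / m * ∑ j ∈ range m, algebraMap R ℂ (coeff n f) * nome ((z + j) / m) ^ n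
      = if m ∣ n then algebraMap R ℂ (coeff n f) * nome (z / m) ^ n else 0 := by
    simp_rw [add_div, nome_add, mul_pow, ← mul_assoc]
    rw [← Finset.mul_sum, sum_nome_div_pow hm]
    split_ifs
    · field_simp
    · ring
  have hsum := (hasSum_sum fun j (_ : j ∈ range m) => hf _ (norm_nome_lt_one (him j))).mul_left
    (1 / m : ℂ)
  simp_rw [hterm] at hsum
  rw [← (mul_right_injective₀ hm).hasSum_iff] at hsum
  · refine hsum.congr_fun fun n => ?_
    have hpow : nome z = nome (z / m) ^ m := by rw [nome_pow, mul_div_cancel₀ _ hm']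
    simp [pow_mul, hpow]
  · intro n hn
    rw [if_neg]
    rintro ⟨k, rfl⟩
    exact hn ⟨k, rfl⟩

lemma HasDiskSum.exists_atkinU (hf : HasDiskSum f F) (hm : m ≠ 0) :
    ∃ G, HasDiskSum (atkinU m f) G ∧ ∀ z : ℂ, 0 < z.im →
      G (nome z) = 1 / m * ∑ j ∈ range m, F (nome ((z + j) / m)) :=
  ⟨_, fun _ hq => (hf.summable_atkinU hm hq).hasSum,
    fun _ hz => (hf.hasSum_atkinU_nome hm hz).tsum_eq⟩

end AtkinOperator

section Hecke

variable {R : Type*} [CommRing R] {k : ℕ} {G G' : ℂ → ℂ}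

/-- The Hecke operator `T₇ = U₇ + 7^(k-1) V₇` in weight `k ≥ 1`. -/
def heckeSeven (k : ℕ) : R⟦X⟧ →ₗ[R] R⟦X⟧ :=
  atkinU 7 + (7 : R) ^ (k - 1) • (PowerSeries.expand 7 (by norm_num)).toLinearMap

lemma heckeSeven_apply (k : ℕ) (f : R⟦X⟧) :
    heckeSeven k f = atkinU 7 f + C (7 ^ (k - 1)) * f.expand 7 (by norm_num) := by
  simp [heckeSeven, smul_eq_C_mul]

lemma IsInversionPair.apply_neg_one_div_of_add_eq (h : IsInversionPair k G G') (hk : Even k)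
    {j s : ℤ} {x w : ℂ} (hw : 0 < w.im) (hx : 0 < x.im) (hxw : -1 / (w + 2 * s) + j = -1 / x) :
    G (nome (-1 / w)) = (w * (-1 / (w + 2 * s)) * x) ^ k * G' (nome (x / 2)) := by
  have hu : 0 < (w + 2 * s).im := by simpa using hw
  have hu0 := ne_zero_of_im_pos hu
  have hback := h.apply_neg_one_div_half hk (im_neg_one_div_pos hu)
  rw [show -1 / (-1 / (w + 2 * s)) = w + 2 * s by field_simp, add_div,
    mul_div_cancel_left₀ _ two_ne_zero, nome_add_intCast] at hback
  rw [h w hw, hback, ← nome_add_intCast _ j, hxw, h x hx]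
  ring

lemma IsInversionPair.apply_add_div_seven (h : IsInversionPair k G G') (hk : Even k) {j s : ℤ}
    (hjs : j * s = 4) {z : ℂ} (hz : 0 < z.im) :
    G (nome ((-1 / z + j) / 7)) = z ^ k * G' (nome ((z / 2 - s) / 7)) := by
  have hjs' : (j : ℂ) * s = 4 := by exact_mod_cast hjs
  have hz0 := ne_zero_of_im_pos hz
  have hv_im : 0 < ((-1 / z + j) / 7).im := by simpa using im_neg_one_div_pos hz
  have hv0 := ne_zero_of_im_pos hv_im
  have hx_im : 0 < ((z - 2 * s) / 7).im := by simpa using hz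
  have hzs : z - 2 * s ≠ 0 := ne_zero_of_im_pos (by simpa using hz)
  obtain ⟨d, hd⟩ : ∃ d : ℂ, d = j * z - 1 := ⟨_, rfl⟩
  have hv : (-1 / z + j) / 7 = d / (7 * z) := by
    rw [hd]
    field_simp
    ring
  have hd0 : d ≠ 0 := fun hd0 => hv0 (by rw [hv, hd0, zero_div])
  have hshift : -1 / ((-1 / z + j) / 7) + 2 * s = (z - 2 * s) / d := by
    rw [hv, div_div_eq_mul_div, div_add' _ _ _ hd0, div_left_inj' hd0, hd]
    linear_combination (2 * z) * hjs'
  have hxw : -1 / (-1 / ((-1 / z + j) / 7) + 2 * s) + j = -1 / ((z - 2 * s) / 7) := by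
    rw [hshift, div_div_eq_mul_div, div_div_eq_mul_div, div_add' _ _ _ hzs, div_left_inj' hzs, hd]
    linear_combination (-2) * hjs'
  have happly := h.apply_neg_one_div_of_add_eq hk (im_neg_one_div_pos hv_im) hx_im hxw
  have hfactor : -1 / (d / (7 * z)) * (-1 / ((z - 2 * s) / d)) * ((z - 2 * s) / 7) = z := by
    field_simp
  rw [hshift, hv, hfactor, show -1 / (-1 / (d / (7 * z))) = d / (7 * z) by field_simp] at happly
  rw [hv, happly]
  congr 3
  ring

lemma nome_add_div_seven_congr {i j : ℤ} (hij : i ≡ j [ZMOD 7]) (w : ℂ) :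
    nome ((w + i) / 7) = nome ((w + j) / 7) := by
  obtain ⟨d, hd⟩ := hij.dvd
  obtain rfl : j = i + 7 * d := by lia
  push_cast
  rw [show (w + (i + 7 * d)) / 7 = (w + i) / 7 + d by ring, nome_add_intCast]

/-- Every nonzero residue modulo `7` is represented by a divisor of `4`, so that
`IsInversionPair.apply_add_div_seven` covers all the nontrivial terms. -/
lemma IsInversionPair.sum_apply_add_div_seven (h : IsInversionPair k G G') (hk : Even k) {z : ℂ}
    (hz : 0 < z.im) :
    ∑ j ∈ range 7, G (nome ((-1 / z + j) / 7)) + z ^ k * G' (nome (z / 2 / 7))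
      = (7 * z) ^ k * G' (nome (7 * (z / 2)))
        + z ^ k * ∑ j ∈ range 7, G' (nome ((z / 2 + j) / 7)) := by
  have hz0 := ne_zero_of_im_pos hz
  have hzero : G (nome (-1 / z / 7)) = (7 * z) ^ k * G' (nome (7 * (z / 2))) := by
    rw [show -1 / z / 7 = -1 / (7 * z) by field_simp, h _ (by simpa using hz), mul_div_assoc]
  have hunit {a s i n : ℤ} (has : a * s = 4) (hai : a ≡ i [ZMOD 7]) (hsn : -s ≡ n [ZMOD 7]) :
      G (nome ((-1 / z + i) / 7)) = z ^ k * G' (nome ((z / 2 + n) / 7)) := by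
    rw [← nome_add_div_seven_congr hai, ← nome_add_div_seven_congr hsn,
      h.apply_add_div_seven hk has hz]
    push_cast
    rfl
  have h1 := hunit (a := 1) (s := 4) (i := 1) (n := 3) rfl (by decide) (by decide)
  have h2 := hunit (a := 2) (s := 2) (i := 2) (n := 5) rfl (by decide) (by decide)
  have h3 := hunit (a := -4) (s := -1) (i := 3) (n := 1) rfl (by decide) (by decide)
  have h4 := hunit (a := 4) (s := 1) (i := 4) (n := 6) rfl (by decide) (by decide)
  have h5 := hunit (a := -2) (s := -2) (i := 5) (n := 2) rfl (by decide) (by decide)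
  have h6 := hunit (a := -1) (s := -4) (i := 6) (n := 4) rfl (by decide) (by decide)
  push_cast at h1 h2 h3 h4 h5 h6
  simp only [Finset.sum_range_succ, Finset.sum_range_zero]
  push_cast
  simp only [add_zero, zero_add]
  rw [hzero, h1, h2, h3, h4, h5, h6]
  ring

lemma IsModularPair.heckeSeven [Algebra R ℂ] (hk : Even k) (hk1 : 1 ≤ k) {g : R⟦X⟧} {g' : ℂ⟦X⟧}
    (hg : IsModularPair k g g') : IsModularPair k (heckeSeven k g) (heckeSeven k g') := by
  obtain ⟨G, G', hG, hG', hGG'⟩ := hg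
  obtain ⟨F, hF, hFG⟩ := hG.exists_atkinU (m := 7) (by norm_num)
  obtain ⟨F', hF', hFG'⟩ := hG'.exists_atkinU (m := 7) (by norm_num)
  rw [heckeSeven_apply, heckeSeven_apply]
  refine ⟨_, _, hF.add ((hG.expand 7 (by norm_num)).C_mul _),
    hF'.add ((hG'.expand 7 (by norm_num)).C_mul _), fun z hz => ?_⟩
  have hsum := hGG'.sum_apply_add_div_seven hk hz
  have hseven : 7 ^ k * G (nome (7 * (-1 / z))) = z ^ k * G' (nome (z / 2 / 7)) := by
    have hz0 := ne_zero_of_im_pos hz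
    rw [show 7 * (-1 / z) = -1 / (z / 7) by field_simp, hGG' _ (by simpa using hz), div_pow,
      show z / 7 / 2 = z / 2 / 7 by ring]
    field_simp
  obtain ⟨l, rfl⟩ : ∃ l, k = l + 1 := ⟨k - 1, by lia⟩
  beta_reduce
  rw [hFG _ (im_neg_one_div_pos hz), hFG' _ (by simpa using hz), nome_pow, nome_pow]
  rw [mul_pow] at hsum
  simp only [Nat.add_sub_cancel, map_pow, map_ofNat, Nat.cast_ofNat]
  linear_combination (1 / 7) * hsum + (1 / 7) * hseven

end Hecke

section EtaQuotients

open ModularForm (eta)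

/-- The inverse of `J b`, for `b ≠ 0`. -/
def Jinv (b : ℕ) : ℤ⟦X⟧ := invOfUnit (J b) 1

lemma constantCoeff_J {b : ℕ} (hb : b ≠ 0) : constantCoeff (J b) = 1 := by
  rw [← coeff_zero_eq_constantCoeff_apply]
  simp [J, hb]

lemma J_mul_Jinv {b : ℕ} (hb : b ≠ 0) : J b * Jinv b = 1 :=
  mul_invOfUnit _ _ (by rw [constantCoeff_J hb, Units.val_one])

/-- The modular form `η(z)¹⁶ / η(2z)⁸` of weight `4` on `Γ₀(2)`. -/
def kappa : ℤ⟦X⟧ := J 1 ^ 16 * Jinv 2 ^ 8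

/-- The modular form `η(2z)¹⁶ / η(z)⁸` of weight `4` on `Γ₀(2)`. -/
def beta : ℤ⟦X⟧ := PowerSeries.X * (J 2 ^ 16 * Jinv 1 ^ 8)

lemma hasDiskSum_Jinv {b : ℕ} (hb : b ≠ 0) :
    HasDiskSum (Jinv b) (fun q => (eulerFun (q ^ b))⁻¹) :=
  (hasDiskSum_J hb).inv (fun q hq => eulerFun_ne_zero <| by
    rw [norm_pow]
    exact pow_lt_one₀ (norm_nonneg _) hq hb) (J_mul_Jinv hb)

lemma hasDiskSum_kappa :
    HasDiskSum kappa (fun q => eulerFun q ^ 16 * (eulerFun (q ^ 2))⁻¹ ^ 8) :=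
  ((hasDiskSum_J_one).pow 16).mul ((hasDiskSum_Jinv two_ne_zero).pow 8)

lemma hasDiskSum_beta :
    HasDiskSum beta (fun q => q * (eulerFun (q ^ 2) ^ 16 * (eulerFun q)⁻¹ ^ 8)) := by
  simpa only [pow_one, beta] using HasDiskSum.X.mul
    (((hasDiskSum_J two_ne_zero).pow 16).mul ((hasDiskSum_Jinv one_ne_zero).pow 8))

lemma eta_pow_sixteen_div_eta_two_mul (z : ℂ) :
    eulerFun (nome z) ^ 16 * (eulerFun (nome z ^ 2))⁻¹ ^ 8 = eta z ^ 16 / eta (2 * z) ^ 8 := by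
  have hnome : nome (2 * z / 24) = nome (z / 24) ^ 2 := by
    rw [nome_pow]
    push_cast
    rw [mul_div_assoc]
  have h0 := nome_ne_zero (z / 24)
  rw [eta_eq_nome_mul_eulerFun, eta_eq_nome_mul_eulerFun, hnome, nome_pow z]
  push_cast
  field_simp

lemma eta_two_mul_pow_sixteen_div_eta (z : ℂ) :
    nome z * (eulerFun (nome z ^ 2) ^ 16 * (eulerFun (nome z))⁻¹ ^ 8)
      = eta (2 * z) ^ 16 / eta z ^ 8 := by
  have hnome : nome (2 * z / 24) = nome (z / 24) ^ 2 := by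
    rw [nome_pow]
    push_cast
    rw [mul_div_assoc]
  have hnome' : nome z = nome (z / 24) ^ 24 := by
    rw [nome_pow]
    congr 1
    push_cast
    ring
  have h0 := nome_ne_zero (z / 24)
  rw [eta_eq_nome_mul_eulerFun, eta_eq_nome_mul_eulerFun, hnome, nome_pow z]
  push_cast
  nth_rw 1 [hnome']
  field_simp

lemma eta_two_mul_neg_one_div_pow_eight {z : ℂ} (hz : 0 < z.im) :
    eta (2 * (-1 / z)) ^ 8 = (z / 2) ^ 4 * eta (z / 2) ^ 8 := by
  have hz0 := ne_zero_of_im_pos hz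
  rw [← eta_neg_one_div_pow_eight (by simpa using hz)]
  congr 2
  field_simp

lemma isModularPair_kappa :
    IsModularPair 4 kappa (C 16 * beta.map (algebraMap ℤ ℂ)) := by
  refine ⟨_, _, hasDiskSum_kappa, hasDiskSum_beta.map_algebraMap.C_mul 16, fun z hz => ?_⟩
  have hz0 := ne_zero_of_im_pos hz
  beta_reduce
  rw [eta_pow_sixteen_div_eta_two_mul, eta_two_mul_neg_one_div_pow_eight hz,
    show eta (-1 / z) ^ 16 = (eta (-1 / z) ^ 8) ^ 2 by ring, eta_neg_one_div_pow_eight hz]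
  simp only [eta_two_mul_pow_sixteen_div_eta, mul_div_cancel₀ z two_ne_zero,
    Algebra.algebraMap_self_apply]
  field_simp
  norm_num

lemma isModularPair_beta :
    IsModularPair 4 beta (C (1 / 256) * kappa.map (algebraMap ℤ ℂ)) := by
  refine ⟨_, _, hasDiskSum_beta, hasDiskSum_kappa.map_algebraMap.C_mul (1 / 256), fun z hz => ?_⟩
  have hz0 := ne_zero_of_im_pos hz
  beta_reduce
  rw [eta_two_mul_pow_sixteen_div_eta,
    show eta (2 * (-1 / z)) ^ 16 = (eta (2 * (-1 / z)) ^ 8) ^ 2 by ring,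
    eta_two_mul_neg_one_div_pow_eight hz, eta_neg_one_div_pow_eight hz]
  simp only [eta_pow_sixteen_div_eta_two_mul, mul_div_cancel₀ z two_ne_zero,
    Algebra.algebraMap_self_apply]
  field_simp
  ring

end EtaQuotients

section LevelOneForms

open UpperHalfPlane ModularForm MatrixGroups

variable {k : ℕ} (f : ModularForm 𝒮ℒ k) {g : ℤ⟦X⟧}

lemma levelOne_apply_S_smul (τ : ℍ) : f (ModularGroup.S • τ) = (τ : ℂ) ^ k * f τ := by
  have h := SlashInvariantForm.slash_action_eqn'' f
    (γ := Matrix.SpecialLinearGroup.mapGL ℝ ModularGroup.S)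
    (show _ ∈ (Matrix.SpecialLinearGroup.mapGL ℝ).range from ⟨ModularGroup.S, rfl⟩) τ
  have hdenom : denom (Matrix.SpecialLinearGroup.mapGL ℝ ModularGroup.S) τ = τ :=
    ModularGroup.denom_S τ
  rw [hdenom] at h
  exact_mod_cast h

variable {f}

lemma hasDiskSum_cuspFunction (hg : ∀ n, (qExpansion 1 f).coeff n = algebraMap ℤ ℂ (coeff n g)) :
    HasDiskSum g (cuspFunction 1 f) := fun q hq => by
  have hsum := hasSum_qExpansion_of_norm_lt (h := 1) (f := f) one_pos
    (SlashInvariantFormClass.periodic_comp_ofComplex _ one_mem_strictPeriods_SL)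
    (ModularFormClass.holo _) (ModularFormClass.bdd_at_infty _) hq
  simpa only [hg, smul_eq_mul] using hsum

lemma cuspFunction_nome (τ : ℍ) : cuspFunction 1 f (nome τ) = f τ := by
  simpa [Function.Periodic.qParam, nome] using
    SlashInvariantFormClass.eq_cuspFunction f τ one_mem_strictPeriods_SL one_ne_zero

lemma isModularPair_of_levelOne
    (hg : ∀ n, (qExpansion 1 f).coeff n = algebraMap ℤ ℂ (coeff n g)) :
    IsModularPair k g ((g.map (algebraMap ℤ ℂ)).expand 2 two_ne_zero) := by
  have hsum := hasDiskSum_cuspFunction hg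
  refine ⟨_, _, hsum, hsum.map_algebraMap.expand 2 two_ne_zero, fun z hz => ?_⟩
  have hS := cuspFunction_nome (f := f) (ModularGroup.S • ⟨z, hz⟩)
  rw [levelOne_apply_S_smul, ← cuspFunction_nome, modular_S_smul] at hS
  rw [nome_pow, Nat.cast_ofNat, mul_div_cancel₀ z two_ne_zero, ← hS]
  congr 2
  rw [neg_div, one_div, neg_inv]

end LevelOneForms

lemma IsModularPair.eq_of_coeff_eq {m : ℕ} {f g : ℤ⟦X⟧} {f' g' : ℂ⟦X⟧}
    (hf : IsModularPair (4 * m) f f') (hg : IsModularPair (4 * m) g g')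
    (h : ∀ n ≤ m, coeff n f = coeff n g) : f = g :=
  sub_eq_zero.1 ((hf.sub hg).eq_zero_of_X_pow_dvd
    (X_pow_dvd_iff.2 fun n hn => by rw [map_sub, h n (by lia), sub_self]))

lemma IsModularPair.expand_two {k : ℕ} {g : ℤ⟦X⟧}
    (h : IsModularPair k g ((g.map (algebraMap ℤ ℂ)).expand 2 two_ne_zero)) :
    IsModularPair k (g.expand 2 two_ne_zero) (C (1 / 2 ^ k) * g.map (algebraMap ℤ ℂ)) := by
  obtain ⟨G, G', hG, hG', hGG'⟩ := h
  refine ⟨_, _, hG.expand 2 two_ne_zero, hG.map_algebraMap.C_mul (1 / 2 ^ k), fun z hz => ?_⟩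
  have hz0 := ne_zero_of_im_pos hz
  have hhalf : 0 < (z / 2 / 2).im := by simpa using hz
  have hG'G : G' (nome (z / 2 / 2)) = G (nome (z / 2 / 2) ^ 2) :=
    (hG' _ (norm_nome_lt_one hhalf)).unique
    (hG.map_algebraMap.expand 2 two_ne_zero _ (norm_nome_lt_one hhalf))
  beta_reduce
  rw [nome_pow, show ((2 : ℕ) : ℂ) * (-1 / z) = -1 / (z / 2) by push_cast; field_simp,
    hGG' _ (by simpa using hz), hG'G, nome_pow, Nat.cast_ofNat, mul_div_cancel₀ _ two_ne_zero,
    Algebra.algebraMap_self_apply, div_pow]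
  field_simp

section Eisenstein

open UpperHalfPlane ModularForm

/-- The power series `1 + c ∑ σₛ(n) Xⁿ`. -/
def divisorSeries (s : ℕ) (c : ℤ) : ℤ⟦X⟧ :=
  PowerSeries.mk fun n => (if n = 0 then 1 else 0) + c * (ArithmeticFunction.sigma s n : ℤ)

lemma coeff_divisorSeries (s : ℕ) (c : ℤ) (n : ℕ) :
    coeff n (divisorSeries s c)
      = (if n = 0 then 1 else 0) + c * (ArithmeticFunction.sigma s n : ℤ) :=
  coeff_mk _ _

lemma isModularPair_divisorSeries {k : ℕ} (hk : 3 ≤ k) (hk2 : Even k) {c : ℤ}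
    (hc : c = -(2 * k / bernoulli k : ℚ)) :
    IsModularPair k (divisorSeries (k - 1) c)
      (((divisorSeries (k - 1) c).map (algebraMap ℤ ℂ)).expand 2 two_ne_zero) := by
  refine isModularPair_of_levelOne (f := ModularForm.E hk) fun n => ?_
  have hc' : (c : ℂ) = -(2 * k / bernoulli k) := by exact_mod_cast congrArg (Rat.cast (K := ℂ)) hc
  rw [EisensteinSeries.E_qExpansion_coeff hk hk2, coeff_divisorSeries]
  split_ifs with hn
  · simp [hn]
  · simp [hc']

/-- The `q`-expansion of the Eisenstein series of weight `6`. -/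
def eisensteinSix : ℤ⟦X⟧ := divisorSeries 5 (-504)

lemma isModularPair_eisensteinSix : IsModularPair 6 eisensteinSix
    ((eisensteinSix.map (algebraMap ℤ ℂ)).expand 2 two_ne_zero) :=
  isModularPair_divisorSeries (by norm_num) (by decide)
    (by rw [show bernoulli 6 = 1 / 42 by decide +kernel]; norm_num)

/-- The `q`-expansion of the Eisenstein series of weight `4`. -/
def eisensteinFour : ℤ⟦X⟧ := divisorSeries 3 240

lemma isModularPair_eisensteinFour : IsModularPair 4 eisensteinFour
    ((eisensteinFour.map (algebraMap ℤ ℂ)).expand 2 two_ne_zero) :=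
  isModularPair_divisorSeries (by norm_num) (by decide)
    (by rw [show bernoulli 4 = -1 / 30 by decide +kernel]; norm_num)

end Eisenstein

section EisensteinFour

lemma constantCoeff_Jinv {b : ℕ} (hb : b ≠ 0) : constantCoeff (Jinv b) = 1 := by
  simpa [constantCoeff_J hb] using congrArg constantCoeff (J_mul_Jinv hb)

lemma coeff_one_J_two : coeff 1 (J 2) = 0 := by
  simp [J, Finset.prod_range_succ, coeff_one_mul, coeff_X_pow]

lemma coeff_one_Jinv_two : coeff 1 (Jinv 2) = 0 := by
  have h := congrArg (coeff 1) (J_mul_Jinv two_ne_zero)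
  simpa [coeff_one_mul, coeff_one_J_two, constantCoeff_J, coeff_one] using h

lemma coeff_one_J_one : coeff 1 (J 1) = -1 := by
  simp [J, Finset.prod_range_succ, coeff_one_mul, coeff_X_pow]

lemma constantCoeff_kappa : constantCoeff kappa = 1 := by
  simp [kappa, constantCoeff_J, constantCoeff_Jinv]

lemma coeff_one_kappa : coeff 1 kappa = -16 := by
  simp [kappa, coeff_one_mul, coeff_one_pow, constantCoeff_J, constantCoeff_Jinv, coeff_one_J_one,
    coeff_one_Jinv_two]

lemma constantCoeff_beta : constantCoeff beta = 0 := by simp [beta]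

lemma coeff_one_beta : coeff 1 beta = 1 := by
  simp [beta, constantCoeff_J, constantCoeff_Jinv]

lemma isModularPair_kappa_add_C_mul_beta (c : ℤ) : ∃ g', IsModularPair 4 (kappa + C c * beta) g' :=
  ⟨_, isModularPair_kappa.add (isModularPair_beta.C_mul c)⟩

lemma eisensteinFour_eq : eisensteinFour = kappa + C 256 * beta := by
  obtain ⟨g', hg'⟩ := isModularPair_kappa_add_C_mul_beta 256
  refine IsModularPair.eq_of_coeff_eq (m := 1) isModularPair_eisensteinFour hg' fun n hn => ?_
  rw [eisensteinFour, coeff_divisorSeries, map_add, coeff_C_mul]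
  interval_cases n <;>
    simp [constantCoeff_kappa, constantCoeff_beta, coeff_one_kappa, coeff_one_beta]

lemma expand_two_eisensteinFour_eq :
    eisensteinFour.expand 2 two_ne_zero = kappa + C 16 * beta := by
  obtain ⟨g', hg'⟩ := isModularPair_kappa_add_C_mul_beta 16
  refine IsModularPair.eq_of_coeff_eq (m := 1) isModularPair_eisensteinFour.expand_two hg'
    fun n hn => ?_
  rw [eisensteinFour, coeff_expand, coeff_divisorSeries, map_add, coeff_C_mul]
  interval_cases n <;>
    simp [constantCoeff_kappa, constantCoeff_beta, coeff_one_kappa, coeff_one_beta]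

lemma coeff_beta (n : ℕ) :
    coeff n beta = ArithmeticFunction.sigma 3 n
      - if 2 ∣ n then (ArithmeticFunction.sigma 3 (n / 2) : ℤ) else 0 := by
  have hone := congrArg (coeff n) eisensteinFour_eq
  have htwo := congrArg (coeff n) expand_two_eisensteinFour_eq
  simp only [eisensteinFour, coeff_divisorSeries, coeff_expand, map_add, coeff_C_mul] at hone htwo
  split_ifs at hone htwo ⊢ <;> lia

lemma coeff_kappa (n : ℕ) :
    coeff n kappa = (if n = 0 then 1 else 0) - 16 * ArithmeticFunction.sigma 3 n
      + 256 * if 2 ∣ n then (ArithmeticFunction.sigma 3 (n / 2) : ℤ) else 0 := by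
  have hone := congrArg (coeff n) eisensteinFour_eq
  simp only [eisensteinFour, coeff_divisorSeries, map_add, coeff_C_mul, coeff_beta] at hone
  linear_combination -hone

end EisensteinFour

section Packing

/-- Kronecker substitution: the natural number with base-`B` digits `d 0, …, d (N - 1)`. -/
def digitSum (B N : ℕ) (d : ℕ → ℕ) : ℕ :=
  ∑ n ∈ range N, d n * B ^ n

/-- Reduces each of the lowest `N` base-`B` digits modulo `m` and drops the higher ones. It is
written with the bare recursor so that the kernel evaluates it quickly. -/
def reduceDigits (m B N : ℕ) : ℕ → ℕ :=
  Nat.rec (fun _ => 0) (fun _ reduce x => x % B % m + B * reduce (x / B)) N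

/-- Keeps the base-`B` digits at the positions `0, p, …, p * (N - 1)`; on packed power series this
is the operator `atkinU p`. -/
def everyDigit (p B N : ℕ) : ℕ → ℕ :=
  Nat.rec (fun _ => 0) (fun _ keep x => x % B + B * keep (x / B ^ p)) N

lemma digitSum_add (B M N : ℕ) (d : ℕ → ℕ) :
    digitSum B (M + N) d = digitSum B M d + B ^ M * digitSum B N (fun n ↦ d (M + n)) := by
  simp only [digitSum, sum_range_add, mul_sum, pow_add]
  exact congrArg _ (sum_congr rfl fun n _ ↦ by ring)

lemma digitSum_succ' (B N : ℕ) (d : ℕ → ℕ) :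
    digitSum B (N + 1) d = d 0 + B * digitSum B N (fun n ↦ d (n + 1)) := by
  rw [add_comm N, digitSum_add]
  simp [digitSum, add_comm]

lemma reduceDigits_digitSum_add (m : ℕ) {B N : ℕ} {d : ℕ → ℕ} (hd : ∀ n < N, d n < B) (y : ℕ) :
    reduceDigits m B N (digitSum B N d + B ^ N * y) = digitSum B N (fun n ↦ d n % m) := by
  induction N generalizing d with
  | zero => rfl
  | succ N ih =>
    have hd0 : d 0 < B := hd 0 N.succ_pos
    have hsplit : digitSum B (N + 1) d + B ^ (N + 1) * y
        = d 0 + B * (digitSum B N (fun n ↦ d (n + 1)) + B ^ N * y) := by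
      rw [digitSum_succ']; ring
    change (digitSum B (N + 1) d + B ^ (N + 1) * y) % B % m
      + B * reduceDigits m B N ((digitSum B (N + 1) d + B ^ (N + 1) * y) / B) = _
    rw [hsplit, Nat.add_mul_mod_self_left, Nat.mod_eq_of_lt hd0,
      Nat.add_mul_div_left _ _ (by omega), Nat.div_eq_of_lt hd0, zero_add,
      ih fun n hn ↦ hd _ (by omega), ← digitSum_succ' B N (fun n ↦ d n % m)]

lemma digitSum_lt_pow {B N : ℕ} {d : ℕ → ℕ} (hd : ∀ n < N, d n < B) :
    digitSum B N d < B ^ N := by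
  induction N with
  | zero => simp [digitSum]
  | succ N ih =>
    have hlow := ih fun n hn ↦ hd n (by omega)
    have htop : d N * B ^ N + B ^ N ≤ B ^ (N + 1) := by
      rw [pow_succ', ← add_one_mul]
      exact Nat.mul_le_mul_right _ (hd N N.lt_succ_self)
    rw [digitSum, sum_range_succ]
    exact (Nat.add_lt_add_right hlow _).trans_le (by omega)

lemma digitSum_inj {B N : ℕ} {d e : ℕ → ℕ} (hd : ∀ n < N, d n < B) (he : ∀ n < N, e n < B)
    (h : digitSum B N d = digitSum B N e) {n : ℕ} (hn : n < N) : d n = e n := by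
  induction N generalizing d e n with
  | zero => omega
  | succ N ih =>
    rw [digitSum_succ', digitSum_succ'] at h
    have hd0 := hd 0 N.succ_pos
    have he0 := he 0 N.succ_pos
    have hmod := congrArg (· % B) h
    have hdiv := congrArg (· / B) h
    simp only [Nat.add_mul_mod_self_left, Nat.mod_eq_of_lt hd0, Nat.mod_eq_of_lt he0] at hmod
    simp only [Nat.add_mul_div_left _ _ (show 0 < B by omega), Nat.div_eq_of_lt hd0,
      Nat.div_eq_of_lt he0, zero_add] at hdiv
    obtain _ | n := n
    · exact hmod
    · exact ih (fun n hn ↦ hd _ (by omega)) (fun n hn ↦ he _ (by omega)) hdiv (by omega)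

lemma everyDigit_digitSum {p : ℕ} (hp : 0 < p) {B N : ℕ} {d : ℕ → ℕ}
    (hd : ∀ n < p * N, d n < B) :
    everyDigit p B N (digitSum B (p * N) d) = digitSum B N (fun n ↦ d (p * n)) := by
  induction N generalizing d with
  | zero => rfl
  | succ N ih =>
    obtain ⟨r, rfl⟩ : ∃ r, p = r + 1 := ⟨p - 1, by omega⟩
    have hlen : (r + 1) * (N + 1) = (r + 1) + (r + 1) * N := by ring
    have hlow : digitSum B (r + 1) d < B ^ (r + 1) :=
      digitSum_lt_pow fun n hn ↦ hd n (by rw [hlen]; omega)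
    have hd0 : d 0 < B := hd 0 (by positivity)
    have hmod : digitSum B (r + 1 + (r + 1) * N) d % B = d 0 := by
      rw [show r + 1 + (r + 1) * N = r + (r + 1) * N + 1 by ring, digitSum_succ',
        Nat.add_mul_mod_self_left, Nat.mod_eq_of_lt hd0]
    have hdiv : digitSum B (r + 1 + (r + 1) * N) d / B ^ (r + 1)
        = digitSum B ((r + 1) * N) (fun n ↦ d (r + 1 + n)) := by
      rw [digitSum_add, Nat.add_mul_div_left _ _ (by omega), Nat.div_eq_of_lt hlow, zero_add]
    change digitSum B ((r + 1) * (N + 1)) d % B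
      + B * everyDigit (r + 1) B N (digitSum B ((r + 1) * (N + 1)) d / B ^ (r + 1)) = _
    rw [hlen, hmod, hdiv, ih fun n hn ↦ hd _ (by omega), digitSum_succ']
    congr 3
    funext n
    congr 1
    ring

lemma digitSum_mul (B N : ℕ) (d e : ℕ → ℕ) : ∃ y, digitSum B N d * digitSum B N e
    = digitSum B N (fun n ↦ ∑ p ∈ antidiagonal n, d p.1 * e p.2) + B ^ N * y := by
  have heval (d : ℕ → ℕ) : digitSum B N d = (trunc N (mk d)).eval B := by
    rw [← Polynomial.eval₂_id, eval₂_trunc_eq_sum_range]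
    simp [digitSum]
  set P := trunc N (mk d) * trunc N (mk e)
  have hP : P.eval B = digitSum B (N + P.natDegree.succ) P.coeff :=
    Polynomial.eval_eq_sum_range' (by omega) B
  refine ⟨digitSum B P.natDegree.succ fun n ↦ P.coeff (N + n), ?_⟩
  rw [heval d, heval e, ← Polynomial.eval_mul, hP, digitSum_add]
  congr 1
  refine sum_congr rfl fun n hn ↦ congrArg (· * B ^ n) ?_
  rw [Polynomial.coeff_mul]
  refine sum_congr rfl fun p hp ↦ ?_
  have hlt := mem_range.1 hn
  have hsum := mem_antidiagonal.1 hp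
  simp only [coeff_trunc, coeff_mk]
  rw [if_pos (by omega), if_pos (by omega)]

variable {m : ℕ}

/-- The first `N` coefficients of a power series over `ZMod m`, packed as base-`B` digits. -/
def packSeries (B N : ℕ) (f : (ZMod m)⟦X⟧) : ℕ :=
  digitSum B N fun n ↦ (coeff n f).val

lemma packSeries_C {B N : ℕ} (hN : 0 < N) (c : ZMod m) : packSeries B N (C c) = c.val := by
  obtain ⟨N, rfl⟩ : ∃ M, N = M + 1 := ⟨N - 1, by omega⟩
  rw [packSeries, digitSum_succ']
  simp [digitSum, coeff_C]

lemma reduceDigits_eq_packSeries {B N : ℕ} {d : ℕ → ℕ} {f : (ZMod m)⟦X⟧}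
    (hd : ∀ n < N, d n < B) (hf : ∀ n < N, (d n : ZMod m) = coeff n f) (y : ℕ) :
    reduceDigits m B N (digitSum B N d + B ^ N * y) = packSeries B N f := by
  rw [reduceDigits_digitSum_add m hd]
  refine sum_congr rfl fun n hn ↦ congrArg (· * B ^ n) ?_
  change d n % m = (coeff n f).val
  rw [← hf n (mem_range.1 hn), ZMod.val_natCast]

variable [NeZero m]

lemma packSeries_add {B : ℕ} (hB : 2 * m ≤ B) (N : ℕ) (f g : (ZMod m)⟦X⟧) :
    packSeries B N (f + g) = reduceDigits m B N (packSeries B N f + packSeries B N g) := by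
  have hsum : packSeries B N f + packSeries B N g
      = digitSum B N (fun n ↦ (coeff n f).val + (coeff n g).val) + B ^ N * 0 := by
    simp only [packSeries, digitSum, add_mul, sum_add_distrib, mul_zero, add_zero]
  rw [hsum, reduceDigits_eq_packSeries]
  · intro n _
    have hf := (coeff n f).val_lt
    have hg := (coeff n g).val_lt
    omega
  · simp

lemma packSeries_mul {B N : ℕ} (hB : N * (m * m) < B) (f g : (ZMod m)⟦X⟧) :
    packSeries B N (f * g) = reduceDigits m B N (packSeries B N f * packSeries B N g) := by
  obtain ⟨y, hy⟩ := digitSum_mul B N (fun n ↦ (coeff n f).val) (fun n ↦ (coeff n g).val)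
  rw [packSeries.eq_1 B N f, packSeries.eq_1 B N g, hy, reduceDigits_eq_packSeries]
  · intro n hn
    calc ∑ p ∈ antidiagonal n, (coeff p.1 f).val * (coeff p.2 g).val
        ≤ #(antidiagonal n) • (m * m) := sum_le_card_nsmul _ _ _ fun p _ ↦
          Nat.mul_le_mul (ZMod.val_lt _).le (ZMod.val_lt _).le
      _ ≤ N * (m * m) := by
          rw [Nat.card_antidiagonal, smul_eq_mul]
          exact Nat.mul_le_mul_right _ hn
      _ < B := hB
  · simp [coeff_mul]

lemma packSeries_atkinU {p : ℕ} (hp : 0 < p) {B : ℕ} (hB : m ≤ B) (N : ℕ) (f : (ZMod m)⟦X⟧) :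
    packSeries B N (atkinU p f) = everyDigit p B N (packSeries B (p * N) f) := by
  simp only [packSeries]
  rw [everyDigit_digitSum hp fun n _ ↦ (ZMod.val_lt _).trans_le hB]
  simp only [coeff_atkinU]

lemma coeff_eq_of_packSeries_eq {B N : ℕ} (hB : m ≤ B) {f g : (ZMod m)⟦X⟧}
    (h : packSeries B N f = packSeries B N g) {n : ℕ} (hn : n < N) : coeff n f = coeff n g :=
  ZMod.val_injective m <| digitSum_inj (fun _ _ ↦ (ZMod.val_lt _).trans_le hB)
    (fun _ _ ↦ (ZMod.val_lt _).trans_le hB) h hn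

end Packing

section BinaryForms

variable (R : Type*) {A : Type*} [CommSemiring R] [CommSemiring A] [Algebra R A]

/-- The values at `a, b` of the homogeneous polynomials of degree `d` in two variables. -/
def binaryForms (a b : A) (d : ℕ) : Submodule R A :=
  Submodule.span R {a, b} ^ d

variable {R} {a b f g : A} {d e : ℕ}

lemma left_mem_binaryForms : a ∈ binaryForms R a b 1 := by
  rw [binaryForms, pow_one]
  exact Submodule.subset_span (by simp)

lemma mem_binaryForms_comm : f ∈ binaryForms R a b d ↔ f ∈ binaryForms R b a d := by
  rw [binaryForms, Set.pair_comm, binaryForms]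

lemma algebraMap_mem_binaryForms (c : R) : algebraMap R A c ∈ binaryForms R a b 0 := by
  rw [binaryForms, pow_zero]
  exact Submodule.mem_one.2 ⟨c, rfl⟩

lemma exists_eq_algebraMap_of_mem_binaryForms (hf : f ∈ binaryForms R a b 0) :
    ∃ c : R, f = algebraMap R A c := by
  rw [binaryForms, pow_zero] at hf
  obtain ⟨c, rfl⟩ := Submodule.mem_one.1 hf
  exact ⟨c, rfl⟩

lemma mul_mem_binaryForms (hf : f ∈ binaryForms R a b d) (hg : g ∈ binaryForms R a b e) :
    f * g ∈ binaryForms R a b (d + e) := by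
  rw [binaryForms, pow_add]
  exact Submodule.mul_mem_mul hf hg

lemma pow_mem_binaryForms (hf : f ∈ binaryForms R a b d) (n : ℕ) :
    f ^ n ∈ binaryForms R a b (d * n) := by
  rw [binaryForms, pow_mul]
  exact Submodule.pow_mem_pow _ hf n

lemma exists_eq_of_mem_binaryForms_succ (hf : f ∈ binaryForms R a b (d + 1)) :
    ∃ c : R, ∃ g ∈ binaryForms R a b d, f = algebraMap R A c * a ^ (d + 1) + b * g := by
  induction d generalizing f with
  | zero =>
    rw [binaryForms, zero_add, pow_one] at hf
    obtain ⟨c, c', rfl⟩ := Submodule.mem_span_pair.1 hf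
    exact ⟨c, _, algebraMap_mem_binaryForms c', by simp [Algebra.smul_def, mul_comm]⟩
  | succ d ih =>
    rw [binaryForms, pow_succ'] at hf
    induction hf using Submodule.mul_induction_on' with
    | mem_mul_mem x hx y hy =>
      obtain ⟨r, s, rfl⟩ := Submodule.mem_span_pair.1 hx
      obtain ⟨c, g, hg, rfl⟩ := ih hy
      refine ⟨r * c, r • (a * g) + s • (algebraMap R A c * a ^ (d + 1) + b * g), ?_, ?_⟩
      · refine add_mem (Submodule.smul_mem _ _ ?_) (Submodule.smul_mem _ _ hy)
        rw [add_comm d]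
        exact mul_mem_binaryForms left_mem_binaryForms hg
      · simp only [Algebra.smul_def, map_mul]
        ring
    | add x _ y _ hx hy =>
      obtain ⟨c, g, hg, rfl⟩ := hx
      obtain ⟨c', g', hg', rfl⟩ := hy
      exact ⟨c + c', g + g', add_mem hg hg', by rw [map_add]; ring⟩

end BinaryForms

section FormSpace

/-- The modular forms of weight `4 * d` on `Γ₀(2)` with integral `q`-expansion, given as the
binary forms of degree `d` in `kappa` and `beta`. -/
def formSpace (d : ℕ) : Submodule ℤ ℤ⟦X⟧ :=
  binaryForms ℤ kappa beta d

variable {d e : ℕ} {f g : ℤ⟦X⟧}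

lemma kappa_mem_formSpace : kappa ∈ formSpace 1 :=
  left_mem_binaryForms

lemma beta_mem_formSpace : beta ∈ formSpace 1 :=
  mem_binaryForms_comm.1 left_mem_binaryForms

lemma C_mem_formSpace (c : ℤ) : C c ∈ formSpace 0 :=
  algebraMap_mem_binaryForms c

lemma mul_mem_formSpace (hf : f ∈ formSpace d) (hg : g ∈ formSpace e) :
    f * g ∈ formSpace (d + e) :=
  mul_mem_binaryForms hf hg

lemma C_mul_mem_formSpace (c : ℤ) (hf : f ∈ formSpace d) : C c * f ∈ formSpace d :=
  zero_add d ▸ mul_mem_formSpace (C_mem_formSpace c) hf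

lemma pow_mem_formSpace (hf : f ∈ formSpace d) (n : ℕ) : f ^ n ∈ formSpace (d * n) :=
  pow_mem_binaryForms hf n

lemma kappa_pow_mul_beta_pow_mem_formSpace (i l : ℕ) :
    kappa ^ i * beta ^ l ∈ formSpace (i + l) := by
  simpa only [one_mul] using mul_mem_formSpace (pow_mem_formSpace kappa_mem_formSpace i)
    (pow_mem_formSpace beta_mem_formSpace l)

lemma exists_eq_kappa_pow_add_beta_mul (hf : f ∈ formSpace (d + 1)) :
    ∃ c : ℤ, ∃ g ∈ formSpace d, f = C c * kappa ^ (d + 1) + beta * g :=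
  exists_eq_of_mem_binaryForms_succ hf

lemma exists_eq_beta_pow_add_kappa_mul (hf : f ∈ formSpace (d + 1)) :
    ∃ c : ℤ, ∃ g ∈ formSpace d, f = C c * beta ^ (d + 1) + kappa * g := by
  obtain ⟨c, g, hg, rfl⟩ := exists_eq_of_mem_binaryForms_succ (mem_binaryForms_comm.1 hf)
  exact ⟨c, g, mem_binaryForms_comm.1 hg, rfl⟩

/-- `beta` divided by its leading term `X`. -/
def betaUnit : ℤ⟦X⟧ := J 2 ^ 16 * Jinv 1 ^ 8

lemma beta_eq_X_mul : beta = X * betaUnit := rfl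

lemma isUnit_betaUnit : IsUnit betaUnit :=
  isUnit_iff_constantCoeff.2 <| by simp [betaUnit, constantCoeff_J, constantCoeff_Jinv]

lemma X_pow_succ_dvd_map_beta_mul {R : Type*} [CommRing R] (φ : ℤ →+* R) {n : ℕ} {r : R⟦X⟧} :
    X ^ (n + 1) ∣ beta.map φ * r ↔ X ^ n ∣ r := by
  have hX {s : R⟦X⟧} : X ^ (n + 1) ∣ X * s ↔ X ^ n ∣ s := by
    simp only [pow_succ', Dvd.dvd, mul_assoc, X_mul_inj]
  rw [beta_eq_X_mul, map_mul, map_X, mul_assoc, hX, (isUnit_betaUnit.map _).dvd_mul_left]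

lemma constantCoeff_map_apply {R S : Type*} [Semiring R] [Semiring S] (φ : R →+* S) (f : R⟦X⟧) :
    constantCoeff (f.map φ) = φ (constantCoeff f) := by
  simp only [← coeff_zero_eq_constantCoeff_apply, coeff_map]

lemma X_pow_succ_dvd_beta_mul {n : ℕ} {r : ℤ⟦X⟧} : X ^ (n + 1) ∣ beta * r ↔ X ^ n ∣ r := by
  simpa using X_pow_succ_dvd_map_beta_mul (RingHom.id ℤ) (r := r)

lemma isUnit_kappa : IsUnit kappa :=
  isUnit_iff_constantCoeff.2 <| by simp [constantCoeff_kappa]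

lemma exists_mem_formSpace_X_pow_dvd_sub (d : ℕ) (g : ℤ⟦X⟧) :
    ∃ w ∈ formSpace d, X ^ (d + 1) ∣ g - w := by
  induction d generalizing g with
  | zero =>
    refine ⟨C (constantCoeff g), C_mem_formSpace _, ?_⟩
    rw [zero_add, pow_one, X_dvd_iff]
    simp
  | succ d ih =>
    obtain ⟨r, hr⟩ : X ∣ g - C (constantCoeff g) * kappa ^ (d + 1) := by
      rw [X_dvd_iff]
      simp [constantCoeff_kappa]
    obtain ⟨u, hu⟩ := isUnit_betaUnit.exists_right_inv
    obtain ⟨w, hw, hdvd⟩ := ih (u * r)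
    refine ⟨C (constantCoeff g) * kappa ^ (d + 1) + beta * w, add_mem ?_ ?_, ?_⟩
    · simpa using C_mul_mem_formSpace _ (pow_mem_formSpace kappa_mem_formSpace (d + 1))
    · simpa [add_comm] using mul_mem_formSpace beta_mem_formSpace hw
    · have hbeta : g - (C (constantCoeff g) * kappa ^ (d + 1) + beta * w)
          = beta * (u * r - w) := by
        rw [beta_eq_X_mul]
        linear_combination hr - X * r * hu
      rwa [hbeta, X_pow_succ_dvd_beta_mul]

lemma exists_isModularPair_of_mem_formSpace (hf : f ∈ formSpace d) :
    ∃ f', IsModularPair (4 * d) f f' := by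
  induction d generalizing f with
  | zero =>
    obtain ⟨c, rfl⟩ := exists_eq_algebraMap_of_mem_binaryForms hf
    exact ⟨_, by simpa using IsModularPair.one.C_mul c⟩
  | succ d ih =>
    obtain ⟨c, g, hg, rfl⟩ := exists_eq_kappa_pow_add_beta_mul hf
    obtain ⟨g', hg'⟩ := ih hg
    have hprod := isModularPair_beta.mul hg'
    rw [add_comm, ← mul_add_one] at hprod
    exact ⟨_, ((isModularPair_kappa.pow (d + 1)).C_mul c).add hprod⟩

theorem mem_formSpace_of_isModularPair {g' : ℂ⟦X⟧} (h : IsModularPair (4 * d) g g') :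
    g ∈ formSpace d := by
  obtain ⟨w, hw, hdvd⟩ := exists_mem_formSpace_X_pow_dvd_sub d g
  obtain ⟨w', hw'⟩ := exists_isModularPair_of_mem_formSpace hw
  rwa [sub_eq_zero.1 ((h.sub hw').eq_zero_of_X_pow_dvd hdvd)]

lemma exists_eq_beta_pow_mul_of_X_pow_dvd {l : ℕ} (hf : f ∈ formSpace (d + l)) (h : X ^ l ∣ f) :
    ∃ w ∈ formSpace d, f = beta ^ l * w := by
  induction l generalizing f with
  | zero => exact ⟨f, hf, by simp⟩
  | succ l ih =>
    obtain ⟨c, g, hg, rfl⟩ := exists_eq_kappa_pow_add_beta_mul hf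
    have hc : c = 0 := by
      simpa [constantCoeff_kappa, constantCoeff_beta] using
        X_dvd_iff.1 ((dvd_pow_self X l.succ_ne_zero).trans h)
    rw [hc, map_zero, zero_mul, zero_add] at h ⊢
    obtain ⟨w, hw, rfl⟩ := ih hg (X_pow_succ_dvd_beta_mul.1 h)
    exact ⟨w, hw, by ring⟩

lemma exists_eq_kappa_pow_mul_of_X_pow_dvd {i : ℕ} {f' : ℂ⟦X⟧} (hf : f ∈ formSpace (d + i))
    (hpair : IsModularPair (4 * (d + i)) f f') (h : X ^ i ∣ f') :
    ∃ w ∈ formSpace d, f = kappa ^ i * w := by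
  induction i generalizing f f' with
  | zero => exact ⟨f, hf, by simp⟩
  | succ i ih =>
    obtain ⟨c, g, hg, rfl⟩ := exists_eq_beta_pow_add_kappa_mul hf
    obtain ⟨g', hg'⟩ := exists_isModularPair_of_mem_formSpace hg
    have hprod := isModularPair_kappa.mul hg'
    rw [add_comm, ← mul_add_one] at hprod
    obtain rfl := hpair.right_unique (((isModularPair_beta.pow (d + i + 1)).C_mul c).add hprod)
    have hc : c = 0 := by
      simpa [constantCoeff_map_apply, constantCoeff_kappa, constantCoeff_beta] using
        X_dvd_iff.1 ((dvd_pow_self X i.succ_ne_zero).trans h)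
    have hdvd : X ^ i ∣ C 16 * g' := by
      rw [← X_pow_succ_dvd_map_beta_mul (algebraMap ℤ ℂ)]
      simpa [hc, mul_left_comm, mul_assoc] using h
    obtain ⟨w, hw, rfl⟩ := ih hg hg' (by simpa using hdvd)
    exact ⟨w, hw, by simp [hc]; ring⟩

lemma X_pow_dvd_heckeSeven {R : Type*} [CommRing R] (k : ℕ) {i i' : ℕ} (hi : 7 * i' < i + 7)
    {f : R⟦X⟧} (h : X ^ i ∣ f) : X ^ i' ∣ heckeSeven k f := by
  rw [X_pow_dvd_iff] at h ⊢
  intro n hn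
  rw [heckeSeven_apply, map_add, coeff_atkinU, h _ (by omega), coeff_C_mul, coeff_expand]
  split_ifs
  · rw [h _ (by omega)]
    simp
  · simp

theorem exists_heckeSeven_eq {i l i' l' : ℕ} (hf : f ∈ formSpace d) (hpos : 1 ≤ i + l + d)
    (hi : 7 * i' < i + 7) (hl : 7 * l' < l + 7) (he : i' + l' + e = i + l + d) :
    ∃ w ∈ formSpace e,
      heckeSeven (4 * (i + l + d)) (kappa ^ i * beta ^ l * f) = kappa ^ i' * beta ^ l' * w := by
  obtain ⟨f', hf'⟩ := exists_isModularPair_of_mem_formSpace hf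
  have hpair := ((isModularPair_kappa.pow i).mul (isModularPair_beta.pow l)).mul hf'
  rw [← mul_add, ← mul_add] at hpair
  have hhecke := hpair.heckeSeven ⟨2 * (i + l + d), by ring⟩ (by omega)
  have hX : X ^ i ∣ (C 16 * beta.map (algebraMap ℤ ℂ)) ^ i := by
    refine pow_dvd_pow_of_dvd (Dvd.dvd.mul_left ?_ _) i
    simp [beta_eq_X_mul]
  obtain ⟨w, hw, hw'⟩ := exists_eq_kappa_pow_mul_of_X_pow_dvd (d := l' + e) (i := i')
    (by convert mem_formSpace_of_isModularPair hhecke using 2; omega)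
    (by convert hhecke using 2; omega)
    (X_pow_dvd_heckeSeven _ hi ((hX.mul_right _).mul_right _))
  have hdvd : X ^ l' ∣ w := by
    rw [← (isUnit_kappa.pow i').dvd_mul_left, ← hw']
    refine X_pow_dvd_heckeSeven _ hl (Dvd.dvd.mul_right (Dvd.dvd.mul_left ?_ _) _)
    exact pow_dvd_pow_of_dvd (beta_eq_X_mul ▸ dvd_mul_right _ _) l
  obtain ⟨v, hv, rfl⟩ := exists_eq_beta_pow_mul_of_X_pow_dvd (add_comm l' e ▸ hw) hdvd
  exact ⟨v, hv, by rw [hw', mul_assoc]⟩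

end FormSpace

section Congruence

/-- The ideal of integral power series all of whose coefficients are divisible by `7 ^ i`. -/
def sevenPow (i : ℕ) : Ideal ℤ⟦X⟧ := Ideal.span {7 ^ i}

variable {i j : ℕ} {f g : ℤ⟦X⟧}

lemma smodEq_sevenPow_iff_dvd : f ≡ g [SMOD sevenPow i] ↔ 7 ^ i ∣ f - g := by
  rw [SModEq.sub_mem, sevenPow, Ideal.mem_span_singleton]

lemma C_dvd_iff_dvd_coeff {R : Type*} [CommSemiring R] {r : R} {f : R⟦X⟧} :
    C r ∣ f ↔ ∀ n, r ∣ coeff n f := by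
  refine ⟨?_, fun h => ?_⟩
  · rintro ⟨g, rfl⟩ n
    rw [coeff_C_mul]
    exact dvd_mul_right _ _
  · choose g hg using h
    exact ⟨PowerSeries.mk g, by ext n; rw [coeff_C_mul, coeff_mk, hg]⟩

lemma smodEq_sevenPow_iff_coeff :
    f ≡ g [SMOD sevenPow i] ↔ ∀ n, (7 : ℤ) ^ i ∣ coeff n f - coeff n g := by
  rw [smodEq_sevenPow_iff_dvd, show (7 : ℤ⟦X⟧) ^ i = C (7 ^ i) by rw [map_pow]; rfl,
    C_dvd_iff_dvd_coeff]
  simp only [map_sub]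

lemma smodEq_sevenPow_iff_map {m : ℕ} (hm : m = 7 ^ i) : f ≡ g [SMOD sevenPow i] ↔
    f.map (Int.castRingHom (ZMod m)) = g.map (Int.castRingHom (ZMod m)) := by
  rw [SModEq.comm, smodEq_sevenPow_iff_coeff, PowerSeries.ext_iff]
  simp [hm, ZMod.intCast_eq_intCast_iff_dvd_sub]

lemma smodEq_sevenPow_mono (h : f ≡ g [SMOD sevenPow i]) (hij : j ≤ i) :
    f ≡ g [SMOD sevenPow j] :=
  h.mono (Ideal.span_singleton_le_span_singleton.2 (pow_dvd_pow 7 hij))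

lemma seven_mul_smodEq_iff :
    7 * f ≡ 7 * g [SMOD sevenPow (i + 1)] ↔ f ≡ g [SMOD sevenPow i] := by
  have hseven : (7 : ℤ⟦X⟧) ≠ 0 := fun h => by
    simpa only [map_ofNat, map_zero, OfNat.ofNat_ne_zero] using congrArg constantCoeff h
  rw [smodEq_sevenPow_iff_dvd, smodEq_sevenPow_iff_dvd, ← mul_sub, pow_succ',
    mul_dvd_mul_iff_left hseven]

lemma isUnit_mul_smodEq_iff {I : Ideal ℤ⟦X⟧} {u : ℤ⟦X⟧} (hu : IsUnit u) :
    u * f ≡ u * g [SMOD I] ↔ f ≡ g [SMOD I] := by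
  rw [SModEq.sub_mem, SModEq.sub_mem, ← mul_sub, Ideal.unit_mul_mem_iff_mem I hu]

lemma X_pow_mul_smodEq_iff {n : ℕ} :
    X ^ n * f ≡ X ^ n * g [SMOD sevenPow i] ↔ f ≡ g [SMOD sevenPow i] := by
  rw [smodEq_sevenPow_iff_map rfl, smodEq_sevenPow_iff_map rfl, map_mul, map_mul, map_pow, map_X,
    X_pow_mul_inj]

lemma atkinU_smodEq (m : ℕ) (h : f ≡ g [SMOD sevenPow i]) :
    atkinU m f ≡ atkinU m g [SMOD sevenPow i] := by
  rw [smodEq_sevenPow_iff_coeff] at h ⊢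
  intro n
  simpa using h (m * n)

lemma pow_seven_smodEq_expand (f : ℤ⟦X⟧) :
    f ^ 7 ≡ f.expand 7 (by norm_num) [SMOD sevenPow 1] := by
  have hprime : Fact (Nat.Prime 7) := ⟨by norm_num⟩
  have hfrob := MvPowerSeries.map_frobenius_expand (p := 7) (hp := by norm_num)
    (f := f.map (Int.castRingHom (ZMod 7)))
  rw [ZMod.frobenius_zmod] at hfrob
  rw [smodEq_sevenPow_iff_map (pow_one 7).symm, map_pow, map_expand, ← hfrob]
  ext n
  simp [PowerSeries.expand, PowerSeries.coeff]

lemma pow_seven_pow_smodEq (h : f ≡ g [SMOD sevenPow 1]) (j : ℕ) :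
    f ^ 7 ^ j ≡ g ^ 7 ^ j [SMOD sevenPow (j + 1)] := by
  rw [smodEq_sevenPow_iff_dvd] at h ⊢
  simpa using dvd_sub_pow_of_dvd_sub (p := 7) (a := f) (b := g) (by simpa using h) j

lemma pow_smodEq_expand (f : ℤ⟦X⟧) (j k : ℕ) :
    f ^ (7 * (7 ^ j * k)) ≡ (f ^ (7 ^ j * k)).expand 7 (by norm_num) [SMOD sevenPow (j + 1)] := by
  rw [map_pow, pow_mul, pow_mul, pow_mul]
  exact (pow_seven_pow_smodEq (pow_seven_smodEq_expand f) j).pow k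

lemma atkinU_expand_mul {R : Type*} [CommRing R] {m : ℕ} (hm : m ≠ 0) (f g : R⟦X⟧) :
    atkinU m (g.expand m hm * f) = g * atkinU m f := by
  ext n
  rw [coeff_atkinU, coeff_mul, coeff_mul]
  refine (sum_of_injOn (fun p : ℕ × ℕ => (m * p.1, m * p.2)) ?_ ?_ ?_ ?_).symm
  · rintro ⟨a, b⟩ - ⟨c, d⟩ - h
    simpa [hm] using h
  · rintro ⟨a, b⟩ h
    simp_all [← mul_add]
  · rintro ⟨a, b⟩ h h'
    rw [HasAntidiagonal.mem_antidiagonal] at h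
    have hdvd : ¬ m ∣ a := by
      rintro ⟨c, rfl⟩
      obtain ⟨d, rfl⟩ : m ∣ b := (Nat.dvd_add_right (dvd_mul_right m c)).1 ⟨n, h⟩
      refine h' ⟨(c, d), ?_, rfl⟩
      rw [← mul_add] at h
      simpa using Nat.eq_of_mul_eq_mul_left (Nat.pos_of_ne_zero hm) h
    simp [coeff_expand_of_not_dvd m hm _ hdvd]
  · rintro ⟨a, b⟩ -
    simp [coeff_expand_mul]

end Congruence

section FormSpaceCongruence

variable {d e i : ℕ} {f g : ℤ⟦X⟧}

lemma exists_eq_C_mul_of_X_pow_dvd_map {m : ℕ} (hf : f ∈ formSpace d)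
    (h : X ^ (d + 1) ∣ f.map (Int.castRingHom (ZMod m))) :
    ∃ g ∈ formSpace d, f = C (m : ℤ) * g := by
  have hconst {f : ℤ⟦X⟧} (h : X ∣ f.map (Int.castRingHom (ZMod m))) :
      (m : ℤ) ∣ constantCoeff f := by
    rw [X_dvd_iff, constantCoeff_map_apply] at h
    exact (ZMod.intCast_zmod_eq_zero_iff_dvd _ _).1 h
  induction d generalizing f with
  | zero =>
    obtain ⟨c, rfl⟩ := exists_eq_algebraMap_of_mem_binaryForms hf
    obtain ⟨c', hc'⟩ := hconst (by rwa [zero_add, pow_one] at h)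
    refine ⟨C c', C_mem_formSpace c', ?_⟩
    rw [← map_mul, ← hc']
    exact congrArg C (constantCoeff_C c).symm
  | succ d ih =>
    obtain ⟨c, g, hg, rfl⟩ := exists_eq_kappa_pow_add_beta_mul hf
    obtain ⟨c', rfl⟩ : (m : ℤ) ∣ c := by
      simpa [constantCoeff_kappa, constantCoeff_beta]
        using hconst ((dvd_pow_self X (by omega)).trans h)
    rw [map_add, map_mul, map_C, map_mul] at h
    obtain ⟨g', hg', rfl⟩ := ih hg ((X_pow_succ_dvd_map_beta_mul _).1 (by simpa using h))
    refine ⟨C c' * kappa ^ (d + 1) + beta * g', add_mem ?_ ?_, by rw [map_mul]; ring⟩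
    · simpa using C_mul_mem_formSpace c' (pow_mem_formSpace kappa_mem_formSpace (d + 1))
    · simpa [add_comm] using mul_mem_formSpace beta_mem_formSpace hg'

lemma exists_atkinU_smodEq {k l k' l' : ℕ} (hf : f ∈ formSpace d) (hk : 7 * k' < k + 7)
    (hl : 7 * l' < l + 7) (he : k' + l' + e = k + l + d) (hi : i + 1 ≤ 4 * (k + l + d)) :
    ∃ w ∈ formSpace e,
      atkinU 7 (kappa ^ k * beta ^ l * f) ≡ kappa ^ k' * beta ^ l' * w [SMOD sevenPow i] := by
  obtain ⟨w, hw, h⟩ := exists_heckeSeven_eq hf (by omega) hk hl he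
  refine ⟨w, hw, ?_⟩
  rw [← h, heckeSeven_apply, smodEq_sevenPow_iff_dvd, sub_add_cancel_left, dvd_neg, map_pow]
  exact (pow_dvd_pow _ (by omega)).mul_right _

lemma smodEq_of_coeff_eq {m : ℕ} (hm : m = 7 ^ i) (hf : f ∈ formSpace d) (hg : g ∈ formSpace d)
    (h : ∀ n ≤ d, coeff n (f.map (Int.castRingHom (ZMod m)))
      = coeff n (g.map (Int.castRingHom (ZMod m)))) : f ≡ g [SMOD sevenPow i] := by
  obtain ⟨r, -, hr⟩ := exists_eq_C_mul_of_X_pow_dvd_map (m := m) (sub_mem hf hg) <| by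
    rw [X_pow_dvd_iff]
    intro n hn
    rw [map_sub, map_sub, h n (by omega), sub_self]
  rw [smodEq_sevenPow_iff_dvd, hr]
  exact ⟨r, by simp [hm]⟩

lemma atkinU_smodEq_of_coeff_eq {m : ℕ} (hm : m = 7 ^ i) (hi : i + 1 ≤ 4 * d)
    (hf : f ∈ formSpace d) (hg : g ∈ formSpace d)
    (h : ∀ n ≤ d, coeff n ((atkinU 7 f).map (Int.castRingHom (ZMod m)))
      = coeff n (g.map (Int.castRingHom (ZMod m)))) : atkinU 7 f ≡ g [SMOD sevenPow i] := by
  obtain ⟨w, hw, hfw⟩ := exists_atkinU_smodEq (k := 0) (l := 0) (k' := 0) (l' := 0) (e := d)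
    hf (by omega) (by omega) (by omega) (by omega : i + 1 ≤ _)
  simp only [pow_zero, one_mul] at hfw
  refine hfw.trans (smodEq_of_coeff_eq hm hw hg fun n hn => ?_)
  rw [← (smodEq_sevenPow_iff_map hm).1 hfw, h n hn]

lemma X_pow_dvd_sub_of_coeff_eq {R : Type*} [CommRing R] {n : ℕ} {f g : R⟦X⟧}
    (h : ∀ k < n, coeff k f = coeff k g) : X ^ n ∣ f - g :=
  X_pow_dvd_iff.2 fun k hk => by rw [map_sub, h k hk, sub_self]

lemma sigma_two (s : ℕ) : ArithmeticFunction.sigma s 2 = 1 + 2 ^ s := by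
  simp [ArithmeticFunction.sigma_apply, show Nat.divisors 2 = {1, 2} from rfl]

lemma sigma_three (s : ℕ) : ArithmeticFunction.sigma s 3 = 1 + 3 ^ s := by
  simp [ArithmeticFunction.sigma_apply, show Nat.divisors 3 = {1, 3} from rfl]

lemma X_pow_four_dvd_eisensteinSix_sub :
    X ^ 4 ∣ eisensteinSix - (1 - C 504 * X - C 16632 * X ^ 2 - C 122976 * X ^ 3) :=
  X_pow_dvd_sub_of_coeff_eq fun n hn => by
    interval_cases n <;>
      simp [eisensteinSix, coeff_divisorSeries, sigma_two, sigma_three, coeff_X_pow, coeff_one,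
        coeff_C_mul, -eq_intCast]

lemma X_pow_four_dvd_kappa_sub :
    X ^ 4 ∣ kappa - (1 - C 16 * X + C 112 * X ^ 2 - C 448 * X ^ 3) :=
  X_pow_dvd_sub_of_coeff_eq fun n hn => by
    interval_cases n <;>
      simp [coeff_kappa, sigma_two, sigma_three, coeff_X_pow, coeff_one, coeff_C_mul, -eq_intCast]

lemma X_pow_four_dvd_beta_sub : X ^ 4 ∣ beta - (X + C 8 * X ^ 2 + C 28 * X ^ 3) :=
  X_pow_dvd_sub_of_coeff_eq fun n hn => by
    interval_cases n <;>
      simp [coeff_beta, sigma_two, sigma_three, coeff_X, coeff_X_pow, coeff_C_mul, -eq_intCast]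

lemma eisensteinSix_sq_eq :
    eisensteinSix ^ 2 = (kappa + C 64 * beta) * (kappa + C (-512) * beta) ^ 2 := by
  have hlin (c : ℤ) := isModularPair_kappa.add (isModularPair_beta.C_mul c)
  refine sub_eq_zero.1 (((isModularPair_eisensteinSix.pow 2).sub
    ((hlin 64).mul ((hlin (-512)).pow 2))).eq_zero_of_X_pow_dvd (m := 3) ?_)
  have hE := SModEq.sub_mem.2 (Ideal.mem_span_singleton.2 X_pow_four_dvd_eisensteinSix_sub)
  have hK := SModEq.sub_mem.2 (Ideal.mem_span_singleton.2 X_pow_four_dvd_kappa_sub)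
  have hB := SModEq.sub_mem.2 (Ideal.mem_span_singleton.2 X_pow_four_dvd_beta_sub)
  have hB' (c : ℤ) := (SModEq.refl (C c)).mul hB
  rw [← Ideal.mem_span_singleton, ← SModEq.sub_mem]
  refine (hE.pow 2).trans (.trans ?_ ((hK.add (hB' 64)).mul ((hK.add (hB' (-512))).pow 2)).symm)
  rw [SModEq.sub_mem, Ideal.mem_span_singleton]
  refine ⟨1007424 - 509124096 * X - 16010542080 * X ^ 2 - 126312431616 * X ^ 3
    - 294707331072 * X ^ 4 - 293753585664 * X ^ 5, ?_⟩
  simp only [map_neg, map_ofNat]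
  ring

lemma eisensteinSix_sq_mem_formSpace : eisensteinSix ^ 2 ∈ formSpace 3 :=
  mem_formSpace_of_isModularPair (isModularPair_eisensteinSix.pow 2)

lemma exists_sq_eq_one_add_four_mul {R : Type*} [CommRing R] {z : R⟦X⟧}
    (hz : constantCoeff z = 0) : ∃ c : R⟦X⟧, (1 + 2 * (z * c)) ^ 2 = 1 + 4 * z := by
  have hsubst := HasSubst.of_constantCoeff_zero' (a := -z) (by simp [hz])
  have hcatalan := congrArg (fun f => substAlgHom hsubst (f.map (Nat.castRingHom R)))
    catalanSeries_sq_mul_X_add_one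
  simp only [map_add, map_mul, map_pow, map_one, map_X, substAlgHom_X] at hcatalan
  exact ⟨substAlgHom hsubst (catalanSeries.map (Nat.castRingHom R)), by
    linear_combination (-4 * z) * hcatalan⟩

lemma exists_sq_eq_eisensteinSix :
    ∃ h : ℤ⟦X⟧, h ^ 2 = eisensteinSix ∧ h ≡ 1 [SMOD sevenPow 1] := by
  let s : ℤ⟦X⟧ := PowerSeries.mk fun n => (ArithmeticFunction.sigma 5 n : ℤ)
  have heis : 1 + 4 * (C (-126) * s) = eisensteinSix := by
    rw [show (4 : ℤ⟦X⟧) = C 4 from rfl, ← mul_assoc, ← map_mul]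
    ext n
    rw [map_add, coeff_one, coeff_C_mul, coeff_mk, eisensteinSix, coeff_divisorSeries]
    norm_num
  obtain ⟨c, hc⟩ := exists_sq_eq_one_add_four_mul (z := C (-126) * s) (by simp [s])
  refine ⟨_, hc.trans heis, smodEq_sevenPow_iff_dvd.2 ⟨2 * (C (-18) * s * c), ?_⟩⟩
  rw [show (-126 : ℤ) = 7 * -18 by norm_num, map_mul, map_ofNat]
  ring

/-- A square root of the Eisenstein series of weight `6`, normalised to be `1` modulo `7`. Powers of
it change the weight of a form by multiples of `3` without changing the form modulo `7`. -/
def sqrtEisensteinSix : ℤ⟦X⟧ := exists_sq_eq_eisensteinSix.choose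

lemma sqrtEisensteinSix_pow_four : sqrtEisensteinSix ^ 4 = eisensteinSix ^ 2 := by
  rw [← exists_sq_eq_eisensteinSix.choose_spec.1, ← pow_mul]
  rfl

lemma sqrtEisensteinSix_smodEq_one : sqrtEisensteinSix ≡ 1 [SMOD sevenPow 1] :=
  exists_sq_eq_eisensteinSix.choose_spec.2

lemma sqrtEisensteinSix_pow_mem_formSpace (n : ℕ) :
    sqrtEisensteinSix ^ (4 * n) ∈ formSpace (3 * n) := by
  rw [pow_mul, sqrtEisensteinSix_pow_four]
  exact pow_mem_formSpace eisensteinSix_sq_mem_formSpace n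

lemma atkinU_smodEq_of_coeff_eq_mod_seven {t : ℕ} (hd : 1 ≤ d + 3 * t)
    (hf : f ∈ formSpace (d + 3 * t)) (hg : g ∈ formSpace d)
    (h : ∀ n ≤ d + 3 * t, coeff n ((atkinU 7 f).map (Int.castRingHom (ZMod 7)))
      = coeff n (g.map (Int.castRingHom (ZMod 7)))) : atkinU 7 f ≡ g [SMOD sevenPow 1] := by
  have hone : g * sqrtEisensteinSix ^ (4 * t) ≡ g [SMOD sevenPow 1] := by
    simpa using (SModEq.refl g).mul (sqrtEisensteinSix_smodEq_one.pow (4 * t))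
  refine (atkinU_smodEq_of_coeff_eq (pow_one 7).symm (by omega) hf
    (mul_mem_formSpace hg (sqrtEisensteinSix_pow_mem_formSpace t)) fun n hn => ?_).trans hone
  rw [(smodEq_sevenPow_iff_map (pow_one 7).symm).1 hone, h n hn]

end FormSpaceCongruence

section PackedForms

/-- The power sum `σₛ(n)` of the divisors of `n`, written with the bare recursor so that the kernel
evaluates it quickly. -/
def divisorPowerSum (s n : ℕ) : ℕ :=
  Nat.rec 0 (fun d t => t + if n % (d + 1) = 0 then (d + 1) ^ s else 0) n

lemma sigma_eq_divisorPowerSum (s n : ℕ) : ArithmeticFunction.sigma s n = divisorPowerSum s n := by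
  have hrec (k : ℕ) : ∑ d ∈ range k, (if n % (d + 1) = 0 then (d + 1) ^ s else 0)
      = Nat.rec 0 (fun d t => t + if n % (d + 1) = 0 then (d + 1) ^ s else 0) k := by
    induction k with
    | zero => rfl
    | succ k ih => rw [sum_range_succ, ih]
  rw [divisorPowerSum, ← hrec, ArithmeticFunction.sigma_apply, Nat.divisors, sum_filter,
    sum_Ico_eq_sum_range]
  simp only [Nat.dvd_iff_mod_eq_zero, add_comm 1, add_tsub_cancel_right]

/-- The first `N` coefficients of `f` modulo `m`, packed as the base-`2 ^ 20` digits of a natural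
number. -/
def packMod (m N : ℕ) (f : ℤ⟦X⟧) : ℕ :=
  packSeries (2 ^ 20) N (f.map (Int.castRingHom (ZMod m)))

/-- The `k`-th power of a packed power series. -/
def packedPow (m N x : ℕ) : ℕ → ℕ :=
  Nat.rec (1 % m) fun _ y => reduceDigits m (2 ^ 20) N (y * x)

variable {m N : ℕ} [NeZero m]

lemma packMod_eq_digitSum {a : ℕ → ℤ} {f : ℤ⟦X⟧} (h : ∀ n, coeff n f = a n) :
    packMod m N f = digitSum (2 ^ 20) N fun n => (a n % m).toNat := by
  rw [packMod, packSeries]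
  congr! 2 with n
  rw [coeff_map, h, eq_intCast, ← ZMod.val_intCast, Int.toNat_natCast]

lemma packMod_C (hN : 0 < N) (c : ℤ) : packMod m N (C c) = (c % m).toNat := by
  rw [packMod, map_C, packSeries_C hN, eq_intCast, ← ZMod.val_intCast, Int.toNat_natCast]

lemma packMod_kappa : packMod m N kappa = digitSum (2 ^ 20) N fun n =>
    (((if n = 0 then 1 else 0) - 16 * (divisorPowerSum 3 n : ℤ)
      + 256 * if 2 ∣ n then (divisorPowerSum 3 (n / 2) : ℤ) else 0) % m).toNat :=
  packMod_eq_digitSum fun n => by rw [coeff_kappa]; simp only [sigma_eq_divisorPowerSum]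

lemma packMod_beta : packMod m N beta = digitSum (2 ^ 20) N fun n =>
    (((divisorPowerSum 3 n : ℤ)
      - if 2 ∣ n then (divisorPowerSum 3 (n / 2) : ℤ) else 0) % m).toNat :=
  packMod_eq_digitSum fun n => by rw [coeff_beta]; simp only [sigma_eq_divisorPowerSum]

lemma packMod_add (hm : 2 * m ≤ 2 ^ 20) (f g : ℤ⟦X⟧) :
    packMod m N (f + g) = reduceDigits m (2 ^ 20) N (packMod m N f + packMod m N g) := by
  rw [packMod, map_add, packSeries_add hm, packMod, packMod]

lemma packMod_mul (hN : N * (m * m) < 2 ^ 20) (f g : ℤ⟦X⟧) :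
    packMod m N (f * g) = reduceDigits m (2 ^ 20) N (packMod m N f * packMod m N g) := by
  rw [packMod, map_mul, packSeries_mul hN, packMod, packMod]

lemma packMod_pow (hN0 : 0 < N) (hN : N * (m * m) < 2 ^ 20) (f : ℤ⟦X⟧) (k : ℕ) :
    packMod m N (f ^ k) = packedPow m N (packMod m N f) k := by
  induction k with
  | zero =>
    rw [pow_zero, ← map_one C, packMod_C hN0]
    exact Int.toNat_natCast (1 % m)
  | succ k ih =>
    rw [pow_succ, packMod_mul hN, ih]
    rfl

lemma packMod_atkinU (hm : m ≤ 2 ^ 20) (f : ℤ⟦X⟧) :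
    packMod m N (atkinU 7 f) = everyDigit 7 (2 ^ 20) N (packMod m (7 * N) f) := by
  rw [packMod, packMod, ← packSeries_atkinU (by norm_num) hm]
  congr 1

lemma coeff_eq_of_packMod_eq (hm : m ≤ 2 ^ 20) {f g : ℤ⟦X⟧} (h : packMod m N f = packMod m N g)
    {n : ℕ} (hn : n < N) : coeff n (f.map (Int.castRingHom (ZMod m)))
      = coeff n (g.map (Int.castRingHom (ZMod m))) :=
  coeff_eq_of_packSeries_eq hm h hn

end PackedForms

section ExplicitCongruences

variable {i l : ℕ}

lemma atkinU_smodEq_of_packMod_eq {d e t : ℕ} {f g : ℤ⟦X⟧} (hd : 1 ≤ d + 3 * t)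
    (he : e = d + 3 * t) (hf : f ∈ formSpace e) (hg : g ∈ formSpace d)
    (h : packMod 7 (d + 3 * t + 1) (atkinU 7 f) = packMod 7 (d + 3 * t + 1) g) :
    atkinU 7 f ≡ g [SMOD sevenPow 1] :=
  atkinU_smodEq_of_coeff_eq_mod_seven hd (he ▸ hf) hg fun _ hn =>
    coeff_eq_of_packMod_eq (by norm_num) h (Nat.lt_succ_of_le hn)

lemma C_mul_kappa_add_C_mul_beta_mem_formSpace (a b : ℤ) :
    C a * kappa + C b * beta ∈ formSpace 1 :=
  add_mem (C_mul_mem_formSpace a kappa_mem_formSpace) (C_mul_mem_formSpace b beta_mem_formSpace)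

lemma kappa_mul_beta_mem_formSpace : kappa * beta ∈ formSpace 2 :=
  mul_mem_formSpace kappa_mem_formSpace beta_mem_formSpace

lemma kappa_sq_sub_beta_sq_mem_formSpace : kappa ^ 2 + C (-1) * beta ^ 2 ∈ formSpace 2 :=
  add_mem (pow_mem_formSpace kappa_mem_formSpace 2)
    (C_mul_mem_formSpace (-1) (pow_mem_formSpace beta_mem_formSpace 2))

lemma atkinU_degree_four_smodEq (h : i + l = 4) : atkinU 7 (kappa ^ i * beta ^ l) ≡
    C (if l = 0 then 1 else 0) * kappa + C (if i = 0 then 1 else 0) * beta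
      [SMOD sevenPow 1] := by
  refine atkinU_smodEq_of_packMod_eq (t := 1) (by norm_num) h
    (kappa_pow_mul_beta_pow_mem_formSpace i l)
    (C_mul_kappa_add_C_mul_beta_mem_formSpace _ _) ?_
  simp only [packMod_atkinU, packMod_mul, packMod_add, packMod_pow, packMod_C, packMod_kappa,
    packMod_beta, Nat.reduceMul, Nat.reduceAdd, Nat.reducePow, Nat.reduceLT, Nat.reduceLeDiff]
  obtain ⟨hi, rfl⟩ : i ≤ 4 ∧ l = 4 - i := by omega
  interval_cases i <;> decide +kernel

lemma atkinU_degree_eleven_smodEq (h : i + l = 11) (hi : i < 7) (hl : l < 7) :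
    atkinU 7 (kappa ^ i * beta ^ l) ≡ C 3 * (kappa * beta) [SMOD sevenPow 1] := by
  refine atkinU_smodEq_of_packMod_eq (t := 3) (by norm_num) h
    (kappa_pow_mul_beta_pow_mem_formSpace i l)
    (C_mul_mem_formSpace 3 kappa_mul_beta_mem_formSpace) ?_
  simp only [packMod_atkinU, packMod_mul, packMod_pow, packMod_C, packMod_kappa, packMod_beta,
    Nat.reduceMul, Nat.reduceAdd, Nat.reducePow, Nat.reduceLT, Nat.reduceLeDiff]
  obtain ⟨rfl, rfl⟩ | ⟨rfl, rfl⟩ : i = 5 ∧ l = 6 ∨ i = 6 ∧ l = 5 := by omega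
  all_goals decide +kernel

lemma atkinU_degree_six_smodEq (h : i + l = 6) : atkinU 7 (kappa ^ i * beta ^ l) ≡
    (C (if l = 0 then 1 else 0) * kappa + C (if i = 0 then -1 else 0) * beta)
      * (kappa ^ 2 + C (-1) * beta ^ 2) [SMOD sevenPow 1] := by
  refine atkinU_smodEq_of_packMod_eq (t := 1) (by norm_num) h
    (kappa_pow_mul_beta_pow_mem_formSpace i l)
    (mul_mem_formSpace (C_mul_kappa_add_C_mul_beta_mem_formSpace _ _)
      kappa_sq_sub_beta_sq_mem_formSpace) ?_
  simp only [packMod_atkinU, packMod_mul, packMod_add, packMod_pow, packMod_C, packMod_kappa,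
    packMod_beta, Nat.reduceMul, Nat.reduceAdd, Nat.reducePow, Nat.reduceLT, Nat.reduceLeDiff]
  obtain ⟨hi, rfl⟩ : i ≤ 6 ∧ l = 6 - i := by omega
  interval_cases i <;> decide +kernel

lemma atkinU_kappa_pow_five_mul_beta_pow_five_smodEq :
    atkinU 7 (kappa ^ 5 * beta ^ 5) ≡ 0 [SMOD sevenPow 1] := by
  refine atkinU_smodEq_of_packMod_eq (d := 1) (t := 3) (by norm_num) rfl
    (kappa_pow_mul_beta_pow_mem_formSpace 5 5) (zero_mem _) ?_
  rw [← map_zero C]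
  simp only [packMod_atkinU, packMod_mul, packMod_pow, packMod_C, packMod_kappa, packMod_beta,
    Nat.reduceMul, Nat.reduceAdd, Nat.reducePow, Nat.reduceLT, Nat.reduceLeDiff]
  decide +kernel

lemma atkinU_kappa_mul_beta_sq_mul_kappa_sq_sub_beta_sq_smodEq :
    atkinU 7 (kappa * beta ^ 2 * (kappa ^ 2 + C (-1) * beta ^ 2)) ≡ C 3 * (kappa * beta)
      [SMOD sevenPow 1] := by
  refine atkinU_smodEq_of_packMod_eq (e := 5) (t := 1) (by norm_num) rfl
    (mul_mem_formSpace (mul_mem_formSpace kappa_mem_formSpace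
      (pow_mem_formSpace beta_mem_formSpace 2)) kappa_sq_sub_beta_sq_mem_formSpace)
    (C_mul_mem_formSpace 3 kappa_mul_beta_mem_formSpace) ?_
  simp only [packMod_atkinU, packMod_mul, packMod_add, packMod_pow, packMod_C, packMod_kappa,
    packMod_beta, Nat.reduceMul, Nat.reduceAdd, Nat.reducePow, Nat.reduceLT, Nat.reduceLeDiff]
  decide +kernel

lemma atkinU_smodEq_of_packMod_eq_mod_fortyNine {g p : ℤ⟦X⟧} (hg : g ∈ formSpace 6)
    (hp : p ∈ formSpace 5)
    (h : packMod 49 39 (atkinU 7 (kappa ^ 5 * beta ^ 12 * ((eisensteinSix ^ 2) ^ 5 * g)))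
      = packMod 49 39 (kappa * beta ^ 2 * ((eisensteinSix ^ 2) ^ 10 * p))) :
    atkinU 7 (kappa ^ 5 * beta ^ 12 * ((eisensteinSix ^ 2) ^ 5 * g))
      ≡ kappa * beta ^ 2 * ((eisensteinSix ^ 2) ^ 10 * p) [SMOD sevenPow 2] := by
  have hE (n : ℕ) := pow_mem_formSpace eisensteinSix_sq_mem_formSpace n
  have hleft := mul_mem_formSpace (kappa_pow_mul_beta_pow_mem_formSpace 5 12)
    (mul_mem_formSpace (hE 5) hg)
  have hright := mul_mem_formSpace (mul_mem_formSpace kappa_mem_formSpace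
    (pow_mem_formSpace beta_mem_formSpace 2)) (mul_mem_formSpace (hE 10) hp)
  exact atkinU_smodEq_of_coeff_eq (m := 49) (by norm_num) (by norm_num) hleft hright fun _ hn =>
    coeff_eq_of_packMod_eq (by norm_num) h (Nat.lt_succ_of_le hn)

/-- The forms `κ ^ i * β ^ j * (κ ^ 2 - β ^ 2)`. The two of them of bidegree `(3, 1)` and `(2, 2)`
span, modulo `7`, the image of the even step of the tower. -/
def twistedMonomial (i j : ℕ) : ℤ⟦X⟧ := kappa ^ i * beta ^ j * (kappa ^ 2 + C (-1) * beta ^ 2)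

lemma twistedMonomial_mem_formSpace (i j : ℕ) : twistedMonomial i j ∈ formSpace (i + j + 2) :=
  mul_mem_formSpace (kappa_pow_mul_beta_pow_mem_formSpace i j) kappa_sq_sub_beta_sq_mem_formSpace

lemma exists_atkinU_twistedMonomial_three_one_smodEq : ∃ p ∈ formSpace 5,
    atkinU 7 (kappa ^ 5 * beta ^ 12 * ((eisensteinSix ^ 2) ^ 5 * twistedMonomial 3 1))
      ≡ kappa * beta ^ 2 * ((eisensteinSix ^ 2) ^ 10 * (C 7 * p)) [SMOD sevenPow 2] := by
  have hp : C 2 * (kappa ^ 4 * beta ^ 1) + C 6 * (kappa ^ 3 * beta ^ 2)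
      + C 5 * (kappa ^ 2 * beta ^ 3) + C 1 * (kappa ^ 1 * beta ^ 4) ∈ formSpace 5 := by
    have hmonomial (a : ℤ) (i j : ℕ) :=
      C_mul_mem_formSpace a (kappa_pow_mul_beta_pow_mem_formSpace i j)
    exact add_mem (add_mem (add_mem (hmonomial 2 4 1) (hmonomial 6 3 2)) (hmonomial 5 2 3))
      (hmonomial 1 1 4)
  refine ⟨_, hp, atkinU_smodEq_of_packMod_eq_mod_fortyNine (twistedMonomial_mem_formSpace 3 1)
    (C_mul_mem_formSpace 7 hp) ?_⟩
  rw [eisensteinSix_sq_eq, twistedMonomial]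
  simp only [packMod_atkinU, packMod_mul, packMod_add, packMod_pow, packMod_C, packMod_kappa,
    packMod_beta, Nat.reduceMul, Nat.reducePow, Nat.reduceLT, Nat.reduceLeDiff]
  decide +kernel

/-- The form that represents modulo `49`, up to a power of the Eisenstein series, the series
`towerVector` on which two steps of the tower act by a scalar modulo `7`. -/
def eigenForm : ℤ⟦X⟧ :=
  kappa ^ 5 + C 20 * (kappa ^ 4 * beta ^ 1) + C 47 * (kappa ^ 3 * beta ^ 2)
    + C 16 * (kappa ^ 2 * beta ^ 3) + C 1 * (kappa ^ 1 * beta ^ 4) + C 13 * beta ^ 5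

lemma eigenForm_mem_formSpace : eigenForm ∈ formSpace 5 := by
  have hmonomial (a : ℤ) (i j : ℕ) :=
    C_mul_mem_formSpace a (kappa_pow_mul_beta_pow_mem_formSpace i j)
  exact add_mem (add_mem (add_mem (add_mem (add_mem (pow_mem_formSpace kappa_mem_formSpace 5)
    (hmonomial 20 4 1)) (hmonomial 47 3 2)) (hmonomial 16 2 3)) (hmonomial 1 1 4))
    (C_mul_mem_formSpace 13 (pow_mem_formSpace beta_mem_formSpace 5))

lemma atkinU_twistedMonomial_two_two_smodEq :
    atkinU 7 (kappa ^ 5 * beta ^ 12 * ((eisensteinSix ^ 2) ^ 5 * twistedMonomial 2 2))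
      ≡ kappa * beta ^ 2 * ((eisensteinSix ^ 2) ^ 10 * eigenForm) [SMOD sevenPow 2] := by
  refine atkinU_smodEq_of_packMod_eq_mod_fortyNine (twistedMonomial_mem_formSpace 2 2)
    eigenForm_mem_formSpace ?_
  rw [eisensteinSix_sq_eq, twistedMonomial, eigenForm]
  simp only [packMod_atkinU, packMod_mul, packMod_add, packMod_pow, packMod_C, packMod_kappa,
    packMod_beta, Nat.reduceMul, Nat.reducePow, Nat.reduceLT, Nat.reduceLeDiff]
  decide +kernel

end ExplicitCongruences

section Steps

variable {i j : ℕ} {f g : ℤ⟦X⟧}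

lemma pow_mul_pow_eq_of_mul_eq_one {M : Type*} [CommMonoid M] {u v : M} (h : u * v = 1)
    {p q p' q' : ℕ} (hpq : p + q' = p' + q) : u ^ p * v ^ q = u ^ p' * v ^ q' := by
  have hone (n : ℕ) : u ^ n * v ^ n = 1 := by rw [← mul_pow, h, one_pow]
  calc u ^ p * v ^ q = u ^ (p + q') * v ^ q * v ^ q' := by
        rw [pow_add, mul_right_comm _ _ (v ^ q), mul_assoc _ _ (v ^ q'), hone, mul_one]
    _ = u ^ p' * v ^ q' := by
        rw [hpq, pow_add, mul_assoc (u ^ p'), hone, mul_one]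

lemma kappa_pow_mul_beta_pow_eq {m n a a' b b' : ℕ} (h₁ : 16 * m + a' = a + 8 * n)
    (h₂ : 16 * n + b' = b + 8 * m) :
    kappa ^ m * beta ^ n = X ^ n * (J 1 ^ a * Jinv 1 ^ a') * (J 2 ^ b * Jinv 2 ^ b') := by
  rw [← pow_mul_pow_eq_of_mul_eq_one (J_mul_Jinv one_ne_zero) h₁,
    ← pow_mul_pow_eq_of_mul_eq_one (J_mul_Jinv two_ne_zero) h₂, kappa, beta]
  ring

lemma kappa_pow_mul_beta_pow_mul_smodEq_iff {m n : ℕ} :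
    kappa ^ m * beta ^ n * f ≡ kappa ^ m * beta ^ n * g [SMOD sevenPow i] ↔
      f ≡ g [SMOD sevenPow i] := by
  rw [mul_assoc, mul_assoc, isUnit_mul_smodEq_iff (isUnit_kappa.pow m), beta_eq_X_mul, mul_pow,
    mul_assoc, mul_assoc, X_pow_mul_smodEq_iff, isUnit_mul_smodEq_iff (isUnit_betaUnit.pow n)]

/-- The passage `L_{2α+1} ↦ L_{2α+2}` of the tower, with eta factors removed from both series. -/
def evenStep : ℤ⟦X⟧ →ₗ[ℤ] ℤ⟦X⟧ :=
  LinearMap.mulLeft ℤ (J 1 ^ 16 * Jinv 2 ^ 5) ∘ₗ atkinU 7 ∘ₗ LinearMap.mulLeft ℤ (X ^ 2 * J 2 ^ 3)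

lemma evenStep_apply (f : ℤ⟦X⟧) :
    evenStep f = J 1 ^ 16 * Jinv 2 ^ 5 * atkinU 7 (X ^ 2 * J 2 ^ 3 * f) := rfl

/-- The series `∑ f(m n + r) q^n`. -/
def progressionPart {R : Type*} [CommRing R] (m r : ℕ) : R⟦X⟧ →ₗ[R] R⟦X⟧ where
  toFun f := PowerSeries.mk fun n => coeff (m * n + r) f
  map_add' f g := by ext; simp
  map_smul' c f := by ext; simp

lemma atkinU_X_pow_mul {R : Type*} [CommRing R] {m r s : ℕ} (hrs : r + s = m) (hr : r ≠ 0)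
    (f : R⟦X⟧) : atkinU m (X ^ r * f) = X * progressionPart m s f := by
  ext n
  rw [coeff_atkinU, coeff_X_pow_mul']
  rcases n with _ | n
  · simp [hr]
  · rw [show m * (n + 1) = m * n + s + r by rw [← hrs]; ring, if_pos (by omega),
      Nat.add_sub_cancel, coeff_succ_X_mul, progressionPart]
    simp

/-- The passage `L_{2α} ↦ L_{2α+1}` of the tower, with eta factors removed from both series. -/
def oddStep : ℤ⟦X⟧ →ₗ[ℤ] ℤ⟦X⟧ :=
  LinearMap.mulLeft ℤ (Jinv 2 ^ 3) ∘ₗ progressionPart 7 2 ∘ₗ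
    LinearMap.mulLeft ℤ (J 2 ^ 5 * Jinv 1 ^ 16)

lemma atkinU_eq_oddStep (f : ℤ⟦X⟧) :
    atkinU 7 (X ^ 5 * (J 2 ^ 5 * Jinv 1 ^ 16 * f)) = X * (J 2 ^ 3 * oddStep f) := by
  rw [atkinU_X_pow_mul (s := 2) (by norm_num) (by norm_num)]
  change _ = X * (J 2 ^ 3 * (Jinv 2 ^ 3 * _))
  rw [← mul_assoc (J 2 ^ 3), ← mul_pow, J_mul_Jinv two_ne_zero, one_pow, one_mul]
  rfl

lemma atkinU_eta_pow_mul_smodEq (g : ℤ⟦X⟧) (j a x y : ℕ) :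
    atkinU 7 (X ^ (7 * a) * J 1 ^ (7 * (7 ^ j * x)) * J 2 ^ (7 * (7 ^ j * y)) * g) ≡
      X ^ a * J 1 ^ (7 ^ j * x) * J 2 ^ (7 ^ j * y) * atkinU 7 g [SMOD sevenPow (j + 1)] := by
  have hX : (X ^ (7 * a) : ℤ⟦X⟧) = (X ^ a : ℤ⟦X⟧).expand 7 (by norm_num) := by
    rw [map_pow, expand_X, pow_mul]
  have hexpand : X ^ (7 * a) * J 1 ^ (7 * (7 ^ j * x)) * J 2 ^ (7 * (7 ^ j * y)) ≡
      (X ^ a * J 1 ^ (7 ^ j * x) * J 2 ^ (7 ^ j * y)).expand 7 (by norm_num)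
        [SMOD sevenPow (j + 1)] := by
    rw [map_mul, map_mul, ← hX]
    exact ((SModEq.refl _).mul (pow_smodEq_expand _ j x)).mul (pow_smodEq_expand _ j y)
  rw [← atkinU_expand_mul (by norm_num : 7 ≠ 0)]
  exact atkinU_smodEq 7 (hexpand.mul (SModEq.refl g))

lemma kappa_mul_atkinU_smodEq_evenStep {a c x y : ℕ} (f : ℤ⟦X⟧) (h₁ : 16 * c = 7 ^ j * x + 8 * a)
    (h₂ : 16 * a + 3 = 7 ^ j * y + 8 * c) :
    kappa * atkinU 7 (kappa ^ (7 * c + 1) * beta ^ (7 * a + 2) * f) ≡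
      kappa ^ c * beta ^ a * evenStep f [SMOD sevenPow (j + 1)] := by
  have hsource : kappa ^ (7 * c + 1) * beta ^ (7 * a + 2) * f = X ^ (7 * a) *
      J 1 ^ (7 * (7 ^ j * x)) * J 2 ^ (7 * (7 ^ j * y)) * (X ^ 2 * J 2 ^ 3 * f) := by
    rw [kappa_pow_mul_beta_pow_eq (a := 7 * (7 ^ j * x)) (a' := 0) (b := 7 * (7 ^ j * y) + 3)
      (b' := 0) (by omega) (by omega)]
    ring
  have htarget : kappa ^ c * beta ^ a = X ^ a * (J 1 ^ (7 ^ j * x) * Jinv 1 ^ 0) *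
      (J 2 ^ (7 ^ j * y) * Jinv 2 ^ 3) :=
    kappa_pow_mul_beta_pow_eq (by omega) (by omega)
  have hresult : kappa ^ c * beta ^ a * evenStep f = kappa * (X ^ a * J 1 ^ (7 ^ j * x) *
      J 2 ^ (7 ^ j * y) * atkinU 7 (X ^ 2 * J 2 ^ 3 * f)) := by
    rw [htarget, evenStep_apply, kappa]
    ring
  rw [hsource, hresult]
  exact (SModEq.refl kappa).mul (atkinU_eta_pow_mul_smodEq _ j a x y)

lemma atkinU_smodEq_oddStep {a c x y : ℕ} (f : ℤ⟦X⟧) (h₁ : 16 * c + 8 = 7 ^ j * x + 8 * a)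
    (h₂ : 16 * a + 5 = 7 ^ j * y + 8 * c) :
    atkinU 7 (kappa ^ (7 * c + 5) * beta ^ (7 * a + 5) * f) ≡
      kappa ^ (c + 1) * beta ^ (a + 1) * oddStep f [SMOD sevenPow (j + 1)] := by
  have hsource : kappa ^ (7 * c + 5) * beta ^ (7 * a + 5) * f = X ^ (7 * a) *
      J 1 ^ (7 * (7 ^ j * x)) * J 2 ^ (7 * (7 ^ j * y)) *
        (X ^ 5 * (J 2 ^ 5 * Jinv 1 ^ 16 * f)) := by
    rw [kappa_pow_mul_beta_pow_eq (a := 7 * (7 ^ j * x)) (a' := 16) (b := 7 * (7 ^ j * y) + 5)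
      (b' := 0) (by omega) (by omega)]
    ring
  have hresult : kappa ^ (c + 1) * beta ^ (a + 1) * oddStep f = X ^ a * J 1 ^ (7 ^ j * x) *
      J 2 ^ (7 ^ j * y) * atkinU 7 (X ^ 5 * (J 2 ^ 5 * Jinv 1 ^ 16 * f)) := by
    rw [atkinU_eq_oddStep, kappa_pow_mul_beta_pow_eq (a := 7 ^ j * x) (a' := 0)
      (b := 7 ^ j * y + 3) (b' := 0) (by omega) (by omega)]
    ring
  rw [hsource, hresult]
  exact atkinU_eta_pow_mul_smodEq _ j a x y

end Steps

section FormQuotient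

variable {s d i j : ℕ} {f : ℤ⟦X⟧}

/-- Series congruent modulo `7 ^ i` to a quotient `w / h ^ s` with `w` of weight `4 * d` and `h` the
square root of the Eisenstein series of weight `6`, so that the quotient has weight
`4 * d - 3 * s`. -/
def formQuotient (s d i : ℕ) : Submodule ℤ ℤ⟦X⟧ where
  carrier := {f | ∃ w ∈ formSpace d, sqrtEisensteinSix ^ s * f ≡ w [SMOD sevenPow i]}
  zero_mem' := ⟨0, zero_mem _, by rw [mul_zero]⟩
  add_mem' := by
    rintro f g ⟨w, hw, hf⟩ ⟨w', hw', hg⟩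
    exact ⟨w + w', add_mem hw hw', by rw [mul_add]; exact hf.add hg⟩
  smul_mem' := by
    rintro c f ⟨w, hw, hf⟩
    exact ⟨c • w, zsmul_mem hw c, by rw [mul_smul_comm]; exact hf.zsmul c⟩

lemma mem_formQuotient : f ∈ formQuotient s d i ↔
    ∃ w ∈ formSpace d, sqrtEisensteinSix ^ s * f ≡ w [SMOD sevenPow i] := Iff.rfl

lemma formQuotient_le_of_level_le {i' : ℕ} (hi : i' ≤ i) :
    formQuotient s d i ≤ formQuotient s d i' :=
  fun _ ⟨w, hw, hf⟩ => ⟨w, hw, smodEq_sevenPow_mono hf hi⟩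

lemma formQuotient_le {s' d' : ℕ} (k : ℕ) (hs : s + 4 * k = s') (hd : d + 3 * k = d') :
    formQuotient s d i ≤ formQuotient s' d' i := by
  subst hs hd
  rintro f ⟨w, hw, hf⟩
  refine ⟨w * sqrtEisensteinSix ^ (4 * k),
    mul_mem_formSpace hw (sqrtEisensteinSix_pow_mem_formSpace k), ?_⟩
  rw [pow_add, mul_right_comm]
  exact hf.mul (SModEq.refl _)

lemma seven_mul_mem_formQuotient_iff :
    7 * f ∈ formQuotient s d (i + 1) ↔ f ∈ formQuotient s d i := by
  simp only [mem_formQuotient, mul_left_comm _ (7 : ℤ⟦X⟧)]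
  refine ⟨fun ⟨w, hw, h⟩ => ?_, fun ⟨w, hw, h⟩ =>
    ⟨7 * w, C_mul_mem_formSpace 7 hw, seven_mul_smodEq_iff.2 h⟩⟩
  have hmap : w.map (Int.castRingHom (ZMod 7)) = 0 := by
    rw [← (smodEq_sevenPow_iff_map (pow_one 7).symm).1 (smodEq_sevenPow_mono h (by omega)),
      map_mul, show (7 : ℤ⟦X⟧) = C 7 from rfl, map_C]
    simp [show (7 : ZMod 7) = 0 from rfl]
  obtain ⟨w', hw', rfl⟩ := exists_eq_C_mul_of_X_pow_dvd_map hw (hmap ▸ dvd_zero _)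
  exact ⟨w', hw', seven_mul_smodEq_iff.1 h⟩

lemma sqrtEisensteinSix_pow_smodEq_one (hs : 7 ^ j ∣ s) :
    sqrtEisensteinSix ^ s ≡ 1 [SMOD sevenPow (j + 1)] := by
  obtain ⟨k, rfl⟩ := hs
  simpa [pow_mul] using (pow_seven_pow_smodEq sqrtEisensteinSix_smodEq_one j).pow k

lemma mem_formQuotient_iff_of_dvd (hs : 7 ^ j ∣ s) : f ∈ formQuotient s d (j + 1) ↔
    ∃ w ∈ formSpace d, f ≡ w [SMOD sevenPow (j + 1)] := by
  have h : sqrtEisensteinSix ^ s * f ≡ f [SMOD sevenPow (j + 1)] := by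
    simpa using (sqrtEisensteinSix_pow_smodEq_one hs).mul (SModEq.refl f)
  rw [mem_formQuotient]
  exact exists_congr fun w => and_congr_right fun _ => ⟨h.symm.trans, h.trans⟩

lemma evenStep_mem_formQuotient {a c x y s' d' : ℕ} (hf : f ∈ formQuotient s d (j + 1))
    (h₁ : 16 * c = 7 ^ j * x + 8 * a) (h₂ : 16 * a + 3 = 7 ^ j * y + 8 * c) (hy : 0 < y)
    (hs : 7 ^ j ∣ s) (hs' : 7 ^ j ∣ s') (hd : d + 6 * (a + c) + 4 = d') :
    evenStep f ∈ formQuotient s' d' (j + 1) := by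
  obtain ⟨w, hw, hfw⟩ := (mem_formQuotient_iff_of_dvd hs).1 hf
  have hj : j < 7 ^ j * y := (Nat.lt_pow_self (by norm_num)).trans_le (Nat.le_mul_of_pos_right _ hy)
  obtain ⟨w', hw', hU⟩ := exists_atkinU_smodEq (k := 7 * c + 1) (l := 7 * a + 2) (k' := c)
    (l' := a) (e := d + 6 * (a + c) + 3) (i := j + 1) hw (by omega) (by omega) (by omega)
    (by omega)
  have hmem : kappa * w' ∈ formSpace d' := by
    rw [← hd, add_comm _ 4, ← (by ring : 1 + (d + 6 * (a + c) + 3) = 4 + (d + 6 * (a + c)))]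
    exact mul_mem_formSpace kappa_mem_formSpace hw'
  refine (mem_formQuotient_iff_of_dvd hs').2 ⟨kappa * w', hmem,
    kappa_pow_mul_beta_pow_mul_smodEq_iff.1
      ((kappa_mul_atkinU_smodEq_evenStep f h₁ h₂).symm.trans ?_)⟩
  rw [mul_left_comm]
  exact (SModEq.refl _).mul ((atkinU_smodEq 7 ((SModEq.refl _).mul hfw)).trans hU)

lemma oddStep_mem_formQuotient {a c x y s' d' : ℕ} (hf : f ∈ formQuotient s d (j + 1))
    (h₁ : 16 * c + 8 = 7 ^ j * x + 8 * a) (h₂ : 16 * a + 5 = 7 ^ j * y + 8 * c) (hy : 0 < y)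
    (hs : 7 ^ j ∣ s) (hs' : 7 ^ j ∣ s') (hd : d + 6 * (a + c) + 8 = d') :
    oddStep f ∈ formQuotient s' d' (j + 1) := by
  obtain ⟨w, hw, hfw⟩ := (mem_formQuotient_iff_of_dvd hs).1 hf
  have hj : j < 7 ^ j * y := (Nat.lt_pow_self (by norm_num)).trans_le (Nat.le_mul_of_pos_right _ hy)
  obtain ⟨w', hw', hU⟩ := exists_atkinU_smodEq (k := 7 * c + 5) (l := 7 * a + 5) (k' := c + 1)
    (l' := a + 1) (e := d') (i := j + 1) hw (by omega) (by omega) (by omega) (by omega)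
  exact (mem_formQuotient_iff_of_dvd hs').2 ⟨w', hw', kappa_pow_mul_beta_pow_mul_smodEq_iff.1
    ((atkinU_smodEq_oddStep f h₁ h₂).symm.trans
      ((atkinU_smodEq 7 ((SModEq.refl _).mul hfw)).trans hU))⟩

end FormQuotient

section StepBounds

variable {i j n N : ℕ} {f : ℤ⟦X⟧}

/-- The series of weight `4 * d - 3 * s` modulo `7 ^ i`, the bound `n` limiting the power of the
Eisenstein series of weight `6` allowed in the denominator. -/
abbrev boundedQuotient (s d n i : ℕ) : Submodule ℤ ℤ⟦X⟧ :=
  formQuotient (s + 4 * n) (d + 3 * n) i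

/-- The series of weight `0` modulo `7 ^ i` with denominator bounded by `n`. The even-indexed
terms of the tower lie here, up to eta factors. -/
abbrev weightZero (n i : ℕ) : Submodule ℤ ℤ⟦X⟧ := boundedQuotient 0 0 n i

/-- The series of weight `-7` modulo `7 ^ i` with denominator bounded by `n`. The odd-indexed
terms of the tower lie here, up to eta factors. -/
abbrev weightNegSeven (n i : ℕ) : Submodule ℤ ℤ⟦X⟧ := boundedQuotient 5 2 n i

lemma boundedQuotient_mono (s d i : ℕ) : Monotone fun n => boundedQuotient s d n i :=
  fun n N h => formQuotient_le (N - n) (by omega) (by omega)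

lemma exists_dvd_lt_le (n : ℕ) {p : ℕ} (hp : 0 < p) : ∃ m, p ∣ m ∧ n < m ∧ m ≤ n + p :=
  ⟨p * (n / p + 1), dvd_mul_right _ _, Nat.lt_mul_div_succ n hp, by
    rw [mul_add, mul_one]; exact Nat.add_le_add_right (Nat.mul_div_le n p) p⟩

lemma exists_seven_pow_eq (j : ℕ) : ∃ q, 7 ^ j = 48 * q + 1 ∨ 7 ^ j = 48 * q + 7 := by
  induction j with
  | zero => exact ⟨0, by simp⟩
  | succ j ih =>
    obtain ⟨q, h | h⟩ := ih
    · exact ⟨7 * q, .inr (by rw [pow_succ, h]; ring)⟩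
    · exact ⟨7 * q + 1, .inl (by rw [pow_succ, h]; ring)⟩

lemma evenStep_mem_weightZero (hN : n + 5 * 7 ^ j ≤ N) (hf : f ∈ weightNegSeven n (j + 1)) :
    evenStep f ∈ weightZero N (j + 1) := by
  obtain ⟨m, hdvd, hnm, hmn⟩ := exists_dvd_lt_le n (show 0 < 7 ^ j by positivity)
  obtain ⟨q, hq | hq⟩ := exists_seven_pow_eq j
  · have hf' : f ∈ formQuotient (4 * m + 7 ^ j) (3 * m + 36 * q - 1) (j + 1) :=
      formQuotient_le (m - n - 1 + 12 * q) (by omega) (by omega) hf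
    have hstep : evenStep f ∈ weightZero (m + 7 ^ j) (j + 1) :=
      evenStep_mem_formQuotient (a := 12 * q) (c := 6 * q) (x := 0) (y := 3) hf' (by omega)
        (by omega) (by omega) ((hdvd.mul_left 4).add dvd_rfl)
        ((dvd_zero _).add ((hdvd.add dvd_rfl).mul_left 4)) (by omega)
    exact boundedQuotient_mono 0 0 _ (by omega) hstep
  · have hf' : f ∈ formQuotient (4 * m + 3 * 7 ^ j) (3 * m + 108 * q + 14) (j + 1) :=
      formQuotient_le (m - n + 36 * q + 4) (by omega) (by omega) hf
    have hstep : evenStep f ∈ weightZero (m + 4 * 7 ^ j) (j + 1) :=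
      evenStep_mem_formQuotient (a := 36 * q + 5) (c := 42 * q + 6) (x := 8) (y := 5) hf'
        (by omega) (by omega) (by omega) ((hdvd.mul_left 4).add (dvd_mul_left _ 3))
        ((dvd_zero _).add ((hdvd.add (dvd_mul_left _ 4)).mul_left 4)) (by omega)
    exact boundedQuotient_mono 0 0 _ (by omega) hstep

lemma oddStep_mem_weightNegSeven (hN : n + 5 * 7 ^ j ≤ N) (hf : f ∈ weightZero n (j + 1)) :
    oddStep f ∈ weightNegSeven N (j + 1) := by
  obtain ⟨m, hdvd, hnm, hmn⟩ := exists_dvd_lt_le n (show 0 < 7 ^ j by positivity)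
  have hf' : f ∈ formQuotient (4 * m) (3 * m) (j + 1) :=
    formQuotient_le (m - n) (by omega) (by omega) hf
  obtain ⟨q, hq | hq⟩ := exists_seven_pow_eq j
  · have hstep : oddStep f ∈ formQuotient (4 * m + 13 * 7 ^ j) (3 * m + 468 * q + 8) (j + 1) :=
      oddStep_mem_formQuotient (a := 36 * q) (c := 42 * q) (x := 8) (y := 5) hf' (by omega)
        (by omega) (by omega) (hdvd.mul_left 4) ((hdvd.mul_left 4).add (dvd_mul_left _ 13))
        (by omega)
    exact formQuotient_le (N - (m + 156 * q + 2)) (by omega) (by omega) hstep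
  · have hstep : oddStep f ∈ formQuotient (4 * m + 3 * 7 ^ j) (3 * m + 108 * q + 14) (j + 1) :=
      oddStep_mem_formQuotient (a := 12 * q + 1) (c := 6 * q) (x := 0) (y := 3) hf' (by omega)
        (by omega) (by omega) (hdvd.mul_left 4) ((hdvd.mul_left 4).add (dvd_mul_left _ 3))
        (by omega)
    exact formQuotient_le (N - (m + 36 * q + 4)) (by omega) (by omega) hstep

end StepBounds

section ModSeven

variable {d e i n N : ℕ} {f : ℤ⟦X⟧}

lemma exists_mem_smodEq_of_mem_formSpace {F : ℤ⟦X⟧ →ₗ[ℤ] ℤ⟦X⟧} {S : Submodule ℤ ℤ⟦X⟧}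
    (h : ∀ k l, k + l = d → ∃ w ∈ S, F (kappa ^ k * beta ^ l) ≡ w [SMOD sevenPow i])
    (hf : f ∈ formSpace d) : ∃ w ∈ S, F f ≡ w [SMOD sevenPow i] := by
  have hC (c : ℤ) (g : ℤ⟦X⟧) : C c * g = c • g := by rw [zsmul_eq_mul, eq_intCast]
  induction d generalizing F f with
  | zero =>
    obtain ⟨c, rfl⟩ := exists_eq_algebraMap_of_mem_binaryForms hf
    obtain ⟨w, hw, hFw⟩ := h 0 0 rfl
    refine ⟨c • w, zsmul_mem hw c, ?_⟩
    rw [pow_zero, pow_zero, mul_one] at hFw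
    have hc : algebraMap ℤ ℤ⟦X⟧ c = c • (1 : ℤ⟦X⟧) := by rw [← hC, mul_one]; rfl
    rw [hc, map_zsmul]
    exact hFw.zsmul c
  | succ d ih =>
    obtain ⟨c, g, hg, rfl⟩ := exists_eq_kappa_pow_add_beta_mul hf
    obtain ⟨w, hw, hFw⟩ := h (d + 1) 0 rfl
    obtain ⟨w', hw', hFw'⟩ := ih (F := F ∘ₗ LinearMap.mulLeft ℤ beta) (fun k l hkl => by
      rw [LinearMap.comp_apply, LinearMap.mulLeft_apply, mul_left_comm, ← pow_succ']
      exact h k (l + 1) (by omega)) hg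
    refine ⟨c • w + w', add_mem (zsmul_mem hw c) hw', ?_⟩
    rw [pow_zero, mul_one] at hFw
    rw [map_add, hC, map_zsmul]
    exact (hFw.zsmul c).add hFw'

lemma atkinU_kappa_pow_mul_beta_pow_smodEq (a b k l : ℕ) :
    atkinU 7 (kappa ^ (7 * a + k) * beta ^ (7 * b + l)) ≡
      kappa ^ a * beta ^ b * atkinU 7 (kappa ^ k * beta ^ l) [SMOD sevenPow 1] := by
  rw [← atkinU_expand_mul (by norm_num : 7 ≠ 0), pow_add, pow_add, mul_mul_mul_comm, pow_mul,
    pow_mul]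
  refine atkinU_smodEq 7 (SModEq.mul ?_ (SModEq.refl _))
  rw [map_mul, map_pow, map_pow]
  exact ((pow_seven_smodEq_expand kappa).pow a).mul ((pow_seven_smodEq_expand beta).pow b)

lemma exists_atkinU_monomial_smodEq {k l k' l' : ℕ} (hn : k + l = 7 * n + 4) (hk : 7 * k' < k + 3)
    (hl : 7 * l' < l + 3) (he : k' + l' + e = n + 1) : ∃ w ∈ formSpace e,
      atkinU 7 (kappa ^ k * beta ^ l) ≡ kappa ^ k' * beta ^ l' * w [SMOD sevenPow 1] := by
  obtain ⟨a, r, hr, rfl⟩ : ∃ a r, r < 7 ∧ k = 7 * a + r := ⟨k / 7, k % 7, by omega, by omega⟩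
  obtain ⟨b, s, hs, rfl⟩ : ∃ b s, s < 7 ∧ l = 7 * b + s := ⟨l / 7, l % 7, by omega, by omega⟩
  have hpull := atkinU_kappa_pow_mul_beta_pow_smodEq a b r s
  obtain hrs | hrs : r + s = 4 ∨ r + s = 11 := by omega
  · obtain ⟨a, rfl⟩ := Nat.exists_eq_add_of_le (show k' ≤ a by omega)
    obtain ⟨b, rfl⟩ := Nat.exists_eq_add_of_le (show l' ≤ b by omega)
    obtain rfl : e = a + b + 1 := by omega
    refine ⟨_, mul_mem_formSpace (kappa_pow_mul_beta_pow_mem_formSpace a b)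
      (C_mul_kappa_add_C_mul_beta_mem_formSpace (if s = 0 then 1 else 0)
        (if r = 0 then 1 else 0)), hpull.trans ?_⟩
    rw [pow_add, pow_add, mul_mul_mul_comm, mul_assoc]
    exact (SModEq.refl _).mul ((SModEq.refl _).mul (atkinU_degree_four_smodEq hrs))
  · obtain ⟨a', ha⟩ := Nat.exists_eq_add_of_le (show k' ≤ a + 1 by omega)
    obtain ⟨b', hb⟩ := Nat.exists_eq_add_of_le (show l' ≤ b + 1 by omega)
    obtain rfl : e = a' + b' := by omega
    refine ⟨_, C_mul_mem_formSpace 3 (kappa_pow_mul_beta_pow_mem_formSpace a' b'),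
      hpull.trans (((SModEq.refl _).mul (atkinU_degree_eleven_smodEq hrs hr hs)).trans ?_)⟩
    rw [show kappa ^ a * beta ^ b * (C 3 * (kappa * beta)) =
      C 3 * (kappa ^ (a + 1) * beta ^ (b + 1)) by ring, ha, hb, pow_add, pow_add,
      mul_mul_mul_comm, mul_left_comm (C 3)]
    exact SModEq.rfl

lemma exists_atkinU_smodEq_mod_seven {k l k' l' : ℕ} (hf : f ∈ formSpace d)
    (hn : k + l + d = 7 * n + 4) (hk : 7 * k' < k + 3) (hl : 7 * l' < l + 3)
    (he : k' + l' + e = n + 1) : ∃ w ∈ formSpace e,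
      atkinU 7 (kappa ^ k * beta ^ l * f) ≡ kappa ^ k' * beta ^ l' * w [SMOD sevenPow 1] := by
  obtain ⟨_, ⟨w, hw, rfl⟩, h⟩ := exists_mem_smodEq_of_mem_formSpace (i := 1)
    (F := atkinU 7 ∘ₗ LinearMap.mulLeft ℤ (kappa ^ k * beta ^ l))
    (S := (formSpace e).map (LinearMap.mulLeft ℤ (kappa ^ k' * beta ^ l'))) (fun p q hpq => by
      obtain ⟨w, hw, h⟩ := exists_atkinU_monomial_smodEq (k := k + p) (l := l + q) (k' := k')
        (l' := l') (by omega : _ = 7 * n + 4) (by omega) (by omega) he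
      rw [pow_add, pow_add, mul_mul_mul_comm] at h
      exact ⟨_, ⟨w, hw, rfl⟩, h⟩) hf
  exact ⟨w, hw, h⟩

lemma kappa_mul_atkinU_smodEq_evenStep_mod_seven (f : ℤ⟦X⟧) :
    kappa * atkinU 7 (kappa ^ 1 * beta ^ 2 * f) ≡ evenStep f [SMOD sevenPow 1] := by
  simpa using kappa_mul_atkinU_smodEq_evenStep (j := 0) (a := 0) (c := 0) (x := 0) (y := 3) f
    (by norm_num) (by norm_num)

lemma atkinU_smodEq_oddStep_mod_seven (f : ℤ⟦X⟧) :
    atkinU 7 (kappa ^ 5 * beta ^ 5 * f) ≡ kappa ^ 1 * beta ^ 1 * oddStep f [SMOD sevenPow 1] :=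
  atkinU_smodEq_oddStep (j := 0) (a := 0) (c := 0) (x := 8) (y := 5) f (by norm_num) (by norm_num)

lemma evenStep_mem_weightZero_mod_seven (hN : n + 5 ≤ 7 * N) (hf : f ∈ weightNegSeven n 1) :
    evenStep f ∈ weightZero N 1 := by
  obtain ⟨w, hw, hfw⟩ := (mem_formQuotient_iff_of_dvd (j := 0) (one_dvd _)).1
    (boundedQuotient_mono 5 2 1 (show n ≤ 7 * N - 5 by omega) hf)
  obtain ⟨w', hw', hU⟩ := exists_atkinU_smodEq_mod_seven (k := 1) (l := 2) (k' := 0) (l' := 0)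
    (n := 3 * N - 2) (e := 3 * N - 1) hw (by omega) (by omega) (by omega) (by omega)
  rw [pow_zero, pow_zero, one_mul, one_mul] at hU
  refine (mem_formQuotient_iff_of_dvd (j := 0) (one_dvd _)).2 ⟨kappa * w', ?_,
    (kappa_mul_atkinU_smodEq_evenStep_mod_seven f).symm.trans ((SModEq.refl _).mul
      ((atkinU_smodEq 7 ((SModEq.refl _).mul hfw)).trans hU))⟩
  rw [show 0 + 3 * N = 1 + (3 * N - 1) by omega]
  exact mul_mem_formSpace kappa_mem_formSpace hw'

lemma oddStep_mem_weightNegSeven_mod_seven (hN : n ≤ 7 * N + 5) (hf : f ∈ weightZero n 1) :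
    oddStep f ∈ weightNegSeven N 1 := by
  obtain ⟨w, hw, hfw⟩ := (mem_formQuotient_iff_of_dvd (j := 0) (one_dvd _)).1
    (boundedQuotient_mono 0 0 1 hN hf)
  obtain ⟨w', hw', hU⟩ := exists_atkinU_smodEq_mod_seven (k := 5) (l := 5) (k' := 1) (l' := 1)
    (n := 3 * N + 3) (e := 2 + 3 * N) hw (by omega) (by omega) (by omega) (by omega)
  exact (mem_formQuotient_iff_of_dvd (j := 0) (one_dvd _)).2 ⟨w', hw',
    kappa_pow_mul_beta_pow_mul_smodEq_iff.1 ((atkinU_smodEq_oddStep_mod_seven f).symm.trans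
      ((atkinU_smodEq 7 ((SModEq.refl _).mul hfw)).trans hU))⟩

end ModSeven

section Lift

variable {s d s' d' i N : ℕ} {f w : ℤ⟦X⟧}

lemma isUnit_sqrtEisensteinSix : IsUnit sqrtEisensteinSix := by
  have hconst : constantCoeff eisensteinSix = 1 := by
    rw [← coeff_zero_eq_constantCoeff_apply, eisensteinSix, coeff_divisorSeries]
    simp
  rw [← isUnit_pow_iff four_ne_zero, sqrtEisensteinSix_pow_four, isUnit_iff_constantCoeff,
    map_pow, hconst, one_pow]
  exact isUnit_one

/-- The quotient of `w` by the `s`-th power of the square root of the Eisenstein series of weight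
`6`. -/
def divSqrtEisensteinSix (s : ℕ) (w : ℤ⟦X⟧) : ℤ⟦X⟧ :=
  Ring.inverse sqrtEisensteinSix ^ s * w

lemma sqrtEisensteinSix_pow_mul_div (s : ℕ) (w : ℤ⟦X⟧) :
    sqrtEisensteinSix ^ s * divSqrtEisensteinSix s w = w := by
  rw [divSqrtEisensteinSix, ← mul_assoc, ← mul_pow,
    Ring.mul_inverse_cancel _ isUnit_sqrtEisensteinSix, one_pow, one_mul]

lemma divSqrtEisensteinSix_mem_formQuotient (hw : w ∈ formSpace d) (i : ℕ) :
    divSqrtEisensteinSix s w ∈ formQuotient s d i :=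
  ⟨w, hw, by rw [sqrtEisensteinSix_pow_mul_div]⟩

lemma smodEq_divSqrtEisensteinSix_iff :
    f ≡ divSqrtEisensteinSix s w [SMOD sevenPow i] ↔
      sqrtEisensteinSix ^ s * f ≡ w [SMOD sevenPow i] := by
  rw [← isUnit_mul_smodEq_iff (isUnit_sqrtEisensteinSix.pow s), sqrtEisensteinSix_pow_mul_div]

lemma exists_eq_add_seven_mul (h : f ≡ w [SMOD sevenPow 1]) : ∃ y, f = w + 7 * y := by
  obtain ⟨y, hy⟩ := smodEq_sevenPow_iff_dvd.1 h
  exact ⟨y, by rw [← sub_eq_iff_eq_add', hy, pow_one]⟩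

lemma map_seven_mul (F : ℤ⟦X⟧ →ₗ[ℤ] ℤ⟦X⟧) (f : ℤ⟦X⟧) : F (7 * f) = 7 * F f := by
  simpa only [zsmul_eq_mul, Int.cast_ofNat] using map_zsmul F 7 f

/- Expanding `f` in powers of `7`, the `l`-th digit has denominator bounded by `o l` and only
matters modulo `7 ^ (i + 1 - l)`. -/
lemma map_mem_boundedQuotient {o : ℕ → ℕ} (ho : Monotone o) {F : ℤ⟦X⟧ →ₗ[ℤ] ℤ⟦X⟧}
    (hF : ∀ l k, l + k = i → ∀ g ∈ boundedQuotient s d (o l) (k + 1),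
      F g ∈ boundedQuotient s' d' N (k + 1))
    (hf : ∀ l ≤ i, f ∈ boundedQuotient s d (o l) (l + 1)) :
    F f ∈ boundedQuotient s' d' N (i + 1) := by
  induction i generalizing o f with
  | zero => exact hF 0 0 rfl f (hf 0 le_rfl)
  | succ i ih =>
    obtain ⟨w, hw, hfw⟩ := hf 0 (Nat.zero_le _)
    set x := divSqrtEisensteinSix (s + 4 * o 0) w
    have hxmem (k : ℕ) : x ∈ boundedQuotient s d (o 0) k :=
      divSqrtEisensteinSix_mem_formQuotient hw k
    obtain ⟨y, rfl⟩ := exists_eq_add_seven_mul (smodEq_divSqrtEisensteinSix_iff.2 hfw)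
    have hy (l : ℕ) (hl : l ≤ i) : y ∈ boundedQuotient s d (o (l + 1)) (l + 1) := by
      refine seven_mul_mem_formQuotient_iff.1 ?_
      rw [← add_sub_cancel_left x (7 * y)]
      exact sub_mem (hf (l + 1) (by omega))
        (boundedQuotient_mono s d _ (ho (Nat.zero_le _)) (hxmem _))
    have hFy := ih (o := fun l => o (l + 1)) (fun a b hab => ho (by omega))
      (fun l k hlk => hF (l + 1) k (by omega)) hy
    rw [map_add, map_seven_mul]
    exact add_mem (hF 0 (i + 1) (by omega) x (hxmem _)) (seven_mul_mem_formQuotient_iff.2 hFy)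

end Lift

section TowerModule

variable {f : ℤ⟦X⟧}

/-- The bound on the denominators modulo `7 ^ (i + 1)` of the odd-indexed terms of the tower. It is
reproduced by two steps because `evenStep` and `oddStep` roughly divide denominators by `7` modulo
`7`, and add `5 * 7 ^ k` to them modulo `7 ^ (k + 1)`. -/
def denominatorBound : ℕ → ℕ
  | 0 => 5
  | i + 1 => 49 * denominatorBound i + 30

lemma five_le_denominatorBound (i : ℕ) : 5 ≤ denominatorBound i := by
  induction i with
  | zero => exact le_rfl
  | succ i ih => rw [denominatorBound]; omega

lemma denominatorBound_mono : Monotone denominatorBound :=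
  monotone_nat_of_le_succ fun i => by rw [denominatorBound]; omega

lemma denominatorBound_add_le (l k : ℕ) :
    denominatorBound l + 5 * 7 ^ (k + 1) ≤ 7 * denominatorBound (l + k) + 5 := by
  induction k with
  | zero => have := five_le_denominatorBound l; rw [add_zero, zero_add, pow_one]; omega
  | succ k ih => rw [← add_assoc, denominatorBound, pow_succ]; omega

lemma seven_mul_denominatorBound_add_le (l k : ℕ) :
    7 * denominatorBound l + 5 + 5 * 7 ^ (k + 1) ≤ denominatorBound (l + k + 1) := by
  have := denominatorBound_add_le l k
  have : 0 < 7 ^ k := by positivity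
  rw [denominatorBound]
  omega

/-- The series all of whose reductions have weight `-7`, with denominators growing like
`denominatorBound`. -/
def oddModule : Submodule ℤ ℤ⟦X⟧ := ⨅ i, weightNegSeven (denominatorBound i) (i + 1)

lemma mem_oddModule : f ∈ oddModule ↔ ∀ i, f ∈ weightNegSeven (denominatorBound i) (i + 1) :=
  Submodule.mem_iInf _

lemma evenStep_mem_of_mem_oddModule (hf : f ∈ oddModule) (i : ℕ) :
    evenStep f ∈ weightZero (7 * denominatorBound i + 5) (i + 2) := by
  refine map_mem_boundedQuotient (i := i + 1) denominatorBound_mono (fun l k hlk g hg => ?_)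
    fun l _ => mem_oddModule.1 hf l
  obtain _ | k := k
  · obtain rfl : l = i + 1 := hlk
    exact evenStep_mem_weightZero_mod_seven (by rw [denominatorBound]; omega) hg
  · obtain rfl : l + k = i := by omega
    exact evenStep_mem_weightZero (denominatorBound_add_le l k) hg

lemma oddStep_mem_oddModule (hf : ∀ i, f ∈ weightZero (7 * denominatorBound i + 5) (i + 1)) :
    oddStep f ∈ oddModule := by
  refine mem_oddModule.2 fun i => map_mem_boundedQuotient (o := fun l => 7 * denominatorBound l + 5)
    (fun a b hab => by have := denominatorBound_mono hab; dsimp only; omega)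
    (fun l k hlk g hg => ?_) fun l _ => hf l
  obtain _ | k := k
  · obtain rfl : l = i := hlk
    exact oddStep_mem_weightNegSeven_mod_seven le_rfl hg
  · obtain rfl : l + k + 1 = i := by omega
    exact oddStep_mem_weightNegSeven (seven_mul_denominatorBound_add_le l k) hg

lemma oddStep_mem_of_forall_mem_weightZero (hf : ∀ i, f ∈ weightZero 2 i)
    (h : oddStep f ∈ weightNegSeven 5 2) (i : ℕ) :
    oddStep f ∈ weightNegSeven (denominatorBound i) (i + 2) := by
  obtain _ | i := i
  · exact h
  · have := denominatorBound_add_le 0 i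
    rw [zero_add] at this
    exact oddStep_mem_weightNegSeven (by rw [denominatorBound, pow_succ]; omega) (hf _)

lemma mem_oddModule_of_seven_mul
    (h : ∀ i, 7 * f ∈ weightNegSeven (denominatorBound i) (i + 2)) : f ∈ oddModule :=
  mem_oddModule.2 fun i => seven_mul_mem_formQuotient_iff.1 (h i)

end TowerModule

section TowerOperator

variable {f p : ℤ⟦X⟧} {i j : ℕ}

/-- The weight-zero series `κ ^ i * β ^ j * (κ ^ 2 - β ^ 2) / E₆ ^ 4`, meant for `i + j = 4`. -/
def twistedQuotient (i j : ℕ) : ℤ⟦X⟧ := divSqrtEisensteinSix 8 (twistedMonomial i j)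

lemma twistedQuotient_mem_weightZero (hij : i + j = 4) (k : ℕ) :
    twistedQuotient i j ∈ weightZero 2 k := by
  have hmem := twistedMonomial_mem_formSpace i j
  rw [hij] at hmem
  exact divSqrtEisensteinSix_mem_formQuotient hmem k

lemma twistedQuotient_smodEq (i j : ℕ) :
    twistedQuotient i j ≡ twistedMonomial i j [SMOD sevenPow 1] := by
  refine (smodEq_divSqrtEisensteinSix_iff.2 ?_).symm
  simpa using (sqrtEisensteinSix_pow_smodEq_one (j := 0) (one_dvd 8)).mul
    (SModEq.refl (twistedMonomial i j))

lemma twistedQuotient_smodEq_mod_fortyNine (i j : ℕ) :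
    twistedQuotient i j ≡ (eisensteinSix ^ 2) ^ 5 * twistedMonomial i j [SMOD sevenPow 2] := by
  refine (smodEq_divSqrtEisensteinSix_iff.2 ?_).symm
  rw [← mul_assoc, ← sqrtEisensteinSix_pow_four, ← pow_mul, ← pow_add]
  simpa using (sqrtEisensteinSix_pow_smodEq_one (j := 1) (show 7 ^ 1 ∣ 28 by norm_num)).mul
    (SModEq.refl (twistedMonomial i j))

lemma oddStep_twistedQuotient_smodEq
    (h : atkinU 7 (kappa ^ 5 * beta ^ 12 * ((eisensteinSix ^ 2) ^ 5 * twistedMonomial i j))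
      ≡ kappa * beta ^ 2 * ((eisensteinSix ^ 2) ^ 10 * p) [SMOD sevenPow 2]) :
    oddStep (twistedQuotient i j) ≡ (eisensteinSix ^ 2) ^ 10 * p [SMOD sevenPow 2] := by
  have hstep := atkinU_smodEq_oddStep (j := 1) (a := 1) (c := 0) (x := 0) (y := 3)
    (twistedQuotient i j) (by norm_num) (by norm_num)
  refine kappa_pow_mul_beta_pow_mul_smodEq_iff.1 (hstep.symm.trans ((atkinU_smodEq 7
    ((SModEq.refl _).mul (twistedQuotient_smodEq_mod_fortyNine i j))).trans ?_))
  rw [zero_add, pow_one]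
  exact h

lemma mem_weightNegSeven_of_smodEq (hp : p ∈ formSpace 5)
    (h : f ≡ (eisensteinSix ^ 2) ^ 10 * p [SMOD sevenPow 2]) : f ∈ weightNegSeven 5 2 := by
  have hpow : sqrtEisensteinSix ^ 25 * ((eisensteinSix ^ 2) ^ 10 * p)
      = sqrtEisensteinSix ^ 49 * ((eisensteinSix ^ 2) ^ 4 * p) := by
    rw [← sqrtEisensteinSix_pow_four]; ring
  have hone := (sqrtEisensteinSix_pow_smodEq_one (j := 1) (show 7 ^ 1 ∣ 49 by norm_num)).mul
    (SModEq.refl ((eisensteinSix ^ 2) ^ 4 * p))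
  rw [one_mul, ← hpow] at hone
  have hmem := mul_mem_formSpace (pow_mem_formSpace eisensteinSix_sq_mem_formSpace 4) hp
  exact ⟨_, hmem, ((SModEq.refl _).mul h).trans hone⟩

lemma exists_mem_oddModule_oddStep_eq_seven_mul (hf : ∀ i, f ∈ weightZero 2 i)
    (h : oddStep f ∈ weightNegSeven 5 2) (hzero : oddStep f ≡ 0 [SMOD sevenPow 1]) :
    ∃ y ∈ oddModule, oddStep f = 7 * y := by
  obtain ⟨y, hy⟩ := exists_eq_add_seven_mul hzero
  rw [zero_add] at hy
  exact ⟨y, mem_oddModule_of_seven_mul fun i =>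
    hy ▸ oddStep_mem_of_forall_mem_weightZero hf h i, hy⟩

lemma exists_mem_oddModule_oddStep_twistedQuotient_three_one :
    ∃ y ∈ oddModule, oddStep (twistedQuotient 3 1) = 7 * y := by
  obtain ⟨p, hp, hU⟩ := exists_atkinU_twistedMonomial_three_one_smodEq
  have hstep := oddStep_twistedQuotient_smodEq hU
  refine exists_mem_oddModule_oddStep_eq_seven_mul (twistedQuotient_mem_weightZero rfl)
    (mem_weightNegSeven_of_smodEq (C_mul_mem_formSpace 7 hp) hstep)
    ((smodEq_sevenPow_mono hstep one_le_two).trans (smodEq_sevenPow_iff_dvd.2 ?_))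
  rw [sub_zero, pow_one]
  exact (dvd_mul_right (C 7) p).mul_left _

lemma one_mem_formQuotient (i : ℕ) : 1 ∈ formQuotient 0 0 i :=
  ⟨1, C_mem_formSpace 1, by rw [pow_zero, one_mul]⟩

lemma exists_mem_oddModule_oddStep_one : ∃ y ∈ oddModule, oddStep 1 = 7 * y := by
  refine exists_mem_oddModule_oddStep_eq_seven_mul
    (fun i => formQuotient_le 2 rfl rfl (one_mem_formQuotient i)) ?_ ?_
  · have hstep : oddStep 1 ∈ formQuotient 21 14 2 :=
      oddStep_mem_formQuotient (j := 1) (a := 1) (c := 0) (x := 0) (y := 3)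
        (one_mem_formQuotient 2) (by norm_num) (by norm_num) (by norm_num) (dvd_zero _)
        (by norm_num) (by norm_num)
    exact formQuotient_le 1 rfl rfl hstep
  · have hzero := (atkinU_smodEq_oddStep_mod_seven 1).symm
    rw [mul_one] at hzero
    rw [← kappa_pow_mul_beta_pow_mul_smodEq_iff (m := 1) (n := 1), mul_zero]
    exact hzero.trans atkinU_kappa_pow_five_mul_beta_pow_five_smodEq

/-- The series spanning modulo `7` the image of two steps of the tower; they multiply it by `-3`
modulo `7`. -/
def towerVector : ℤ⟦X⟧ := oddStep (twistedQuotient 2 2)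

lemma towerVector_mem_oddModule : towerVector ∈ oddModule :=
  mem_oddModule.2 fun i => formQuotient_le_of_level_le (by omega)
    (oddStep_mem_of_forall_mem_weightZero (twistedQuotient_mem_weightZero rfl)
      (mem_weightNegSeven_of_smodEq eigenForm_mem_formSpace
        (oddStep_twistedQuotient_smodEq atkinU_twistedMonomial_two_two_smodEq)) i)

lemma eisensteinSix_sq_smodEq_one : eisensteinSix ^ 2 ≡ 1 [SMOD sevenPow 1] := by
  rw [← sqrtEisensteinSix_pow_four]
  simpa using sqrtEisensteinSix_smodEq_one.pow 4

lemma one_smodEq_cubic : 1 ≡ kappa ^ 3 - kappa ^ 2 * beta - kappa * beta ^ 2 + beta ^ 3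
    [SMOD sevenPow 1] := by
  refine eisensteinSix_sq_smodEq_one.symm.trans (smodEq_sevenPow_iff_dvd.2
    ⟨-137 * (kappa ^ 2 * beta) + 28087 * (kappa * beta ^ 2) + 2396745 * beta ^ 3, ?_⟩)
  rw [eisensteinSix_sq_eq, map_ofNat, map_neg, map_ofNat]
  ring

lemma towerVector_smodEq : towerVector ≡ kappa ^ 2 + C (-1) * beta ^ 2 [SMOD sevenPow 1] := by
  have hform : eigenForm ≡ (kappa ^ 3 - kappa ^ 2 * beta - kappa * beta ^ 2 + beta ^ 3)
      * (kappa ^ 2 + C (-1) * beta ^ 2) [SMOD sevenPow 1] := by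
    refine smodEq_sevenPow_iff_dvd.2 ⟨3 * kappa ^ 4 * beta + 7 * kappa ^ 3 * beta ^ 2
      + 2 * kappa ^ 2 * beta ^ 3 + 2 * beta ^ 5, ?_⟩
    rw [eigenForm, map_neg]
    simp only [map_ofNat, map_one]
    ring
  have hcubic := one_smodEq_cubic.symm.mul (SModEq.refl (kappa ^ 2 + C (-1) * beta ^ 2))
  have hpow := (eisensteinSix_sq_smodEq_one.pow 10).mul (hform.trans hcubic)
  rw [one_pow, one_mul, one_mul] at hpow
  exact (smodEq_sevenPow_mono (oddStep_twistedQuotient_smodEq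
    atkinU_twistedMonomial_two_two_smodEq) one_le_two).trans hpow

lemma evenStep_towerVector_smodEq : evenStep towerVector ≡
    (3 : ℤ) • twistedQuotient 3 1 + (-3 : ℤ) • twistedQuotient 2 2 [SMOD sevenPow 1] := by
  have hU : atkinU 7 (kappa ^ 1 * beta ^ 2 * towerVector) ≡ C 3 * (kappa * beta)
      [SMOD sevenPow 1] := by
    rw [pow_one]
    exact (atkinU_smodEq 7 ((SModEq.refl _).mul towerVector_smodEq)).trans
      atkinU_kappa_mul_beta_sq_mul_kappa_sq_sub_beta_sq_smodEq
  have hstep := (kappa_mul_atkinU_smodEq_evenStep_mod_seven towerVector).symm.trans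
    ((SModEq.refl kappa).mul hU)
  have hcubic := (SModEq.refl (kappa * (C 3 * (kappa * beta)))).mul one_smodEq_cubic
  have htwisted : kappa * (C 3 * (kappa * beta))
      * (kappa ^ 3 - kappa ^ 2 * beta - kappa * beta ^ 2 + beta ^ 3)
      = (3 : ℤ) • twistedMonomial 3 1 + (-3 : ℤ) • twistedMonomial 2 2 := by
    simp only [twistedMonomial, zsmul_eq_mul, eq_intCast]
    push_cast
    ring
  rw [mul_one, htwisted] at hcubic
  exact hstep.trans (hcubic.trans (((twistedQuotient_smodEq 3 1).zsmul 3).add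
    ((twistedQuotient_smodEq 2 2).zsmul (-3))).symm)

lemma twistedMonomial_mem_span (hij : i + j = 4) (hi : 2 ≤ i) (hj : 1 ≤ j) :
    twistedMonomial i j ∈ Submodule.span ℤ {twistedMonomial 3 1, twistedMonomial 2 2} := by
  obtain ⟨rfl, rfl⟩ | ⟨rfl, rfl⟩ : i = 3 ∧ j = 1 ∨ i = 2 ∧ j = 2 := by omega
  · exact Submodule.mem_span_of_mem (Set.mem_insert _ _)
  · exact Submodule.mem_span_of_mem (Set.mem_insert_of_mem _ rfl)

lemma exists_mem_span_kappa_mul_atkinU_smodEq {k l : ℕ} (hkl : k + l = 20) (hk : 1 ≤ k)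
    (hl : 1 ≤ l) : ∃ w ∈ Submodule.span ℤ {twistedMonomial 3 1, twistedMonomial 2 2},
      kappa * atkinU 7 (kappa ^ k * beta ^ l) ≡ w [SMOD sevenPow 1] := by
  obtain ⟨a, r, hr, rfl⟩ : ∃ a r, r < 7 ∧ k = 7 * a + r := ⟨k / 7, k % 7, by omega, by omega⟩
  obtain ⟨b, s, hs, rfl⟩ : ∃ b s, s < 7 ∧ l = 7 * b + s := ⟨l / 7, l % 7, by omega, by omega⟩
  have hU := (atkinU_kappa_pow_mul_beta_pow_smodEq a b r s).trans
    ((SModEq.refl _).mul (atkinU_degree_six_smodEq (by omega)))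
  have hcomb (c e : ℤ) : kappa * (kappa ^ a * beta ^ b * ((C c * kappa + C e * beta)
      * (kappa ^ 2 + C (-1) * beta ^ 2)))
      = c • twistedMonomial (a + 2) b + e • twistedMonomial (a + 1) (b + 1) := by
    simp only [twistedMonomial, zsmul_eq_mul, eq_intCast]
    ring
  refine ⟨(if s = 0 then 1 else 0 : ℤ) • twistedMonomial (a + 2) b
    + (if r = 0 then -1 else 0 : ℤ) • twistedMonomial (a + 1) (b + 1), add_mem ?_ ?_, ?_⟩
  · split_ifs with hs
    · exact zsmul_mem (twistedMonomial_mem_span (by omega) (by omega) (by omega)) _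
    · rw [zero_smul]; exact zero_mem _
  · split_ifs with hr
    · exact zsmul_mem (twistedMonomial_mem_span (by omega) (by omega) (by omega)) _
    · rw [zero_smul]; exact zero_mem _
  · rw [← hcomb]
    exact (SModEq.refl kappa).mul hU

lemma exists_evenStep_smodEq (hf : f ∈ oddModule) : ∃ a b : ℤ,
    evenStep f ≡ a • twistedQuotient 3 1 + b • twistedQuotient 2 2 [SMOD sevenPow 1] := by
  obtain ⟨w, hw, hfw⟩ := (mem_formQuotient_iff_of_dvd (j := 0) (one_dvd _)).1
    (mem_oddModule.1 hf 0)
  obtain ⟨v, hv, hU⟩ := exists_mem_smodEq_of_mem_formSpace (i := 1)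
    (F := LinearMap.mulLeft ℤ kappa ∘ₗ atkinU 7 ∘ₗ LinearMap.mulLeft ℤ (kappa ^ 1 * beta ^ 2))
    (S := Submodule.span ℤ {twistedMonomial 3 1, twistedMonomial 2 2}) (fun k l hkl => by
      obtain ⟨v, hv, hU⟩ := exists_mem_span_kappa_mul_atkinU_smodEq (k := 1 + k) (l := 2 + l)
        (by rw [denominatorBound] at hkl; omega) (by omega) (by omega)
      rw [pow_add, pow_add, mul_mul_mul_comm] at hU
      exact ⟨v, hv, hU⟩) hw
  obtain ⟨a, b, rfl⟩ := Submodule.mem_span_pair.1 hv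
  exact ⟨a, b, (kappa_mul_atkinU_smodEq_evenStep_mod_seven f).symm.trans (((SModEq.refl _).mul
    (atkinU_smodEq 7 ((SModEq.refl _).mul hfw))).trans (hU.trans
      (((twistedQuotient_smodEq 3 1).zsmul a).add ((twistedQuotient_smodEq 2 2).zsmul b)).symm))⟩

end TowerOperator

section RankOne

variable {R M : Type*} [CommRing R] [AddCommGroup M] [Module R M] {π c : R} {N : Submodule R M}
  {T : Module.End R M} {v x : M}

lemma apply_mem_of_rankOne (hv : v ∈ N)
    (hT : ∀ x ∈ N, ∃ a : R, ∃ y ∈ N, T x = a • v + π • y) (hx : x ∈ N) : T x ∈ N := by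
  obtain ⟨a, y, hy, hxy⟩ := hT x hx
  rw [hxy]
  exact add_mem (N.smul_mem a hv) (N.smul_mem π hy)

lemma exists_pow_apply_eigenvector_eq (hv : v ∈ N)
    (hT : ∀ x ∈ N, ∃ a : R, ∃ y ∈ N, T x = a • v + π • y)
    (hTv : ∃ y ∈ N, T v = c • v + π • y) (n : ℕ) :
    ∃ y ∈ N, (T ^ n) v = c ^ n • v + π • y := by
  induction n with
  | zero => exact ⟨0, zero_mem N, by simp⟩
  | succ n ih =>
    obtain ⟨y, hy, hn⟩ := ih
    obtain ⟨z, hz, h⟩ := hTv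
    refine ⟨c ^ n • z + T y, add_mem (N.smul_mem _ hz) (apply_mem_of_rankOne hv hT hy), ?_⟩
    rw [pow_succ', Module.End.mul_apply, hn, map_add, map_smul, map_smul, h]
    module

lemma exists_pow_succ_apply_eq_smul_eigenvector (hv : v ∈ N)
    (hT : ∀ x ∈ N, ∃ a : R, ∃ y ∈ N, T x = a • v + π • y)
    (hTv : ∃ y ∈ N, T v = c • v + π • y) (hc : IsCoprime c π) (n : ℕ) (hx : x ∈ N) :
    ∃ a : R, ∃ y ∈ N, (T ^ (n + 1)) x = a • (T ^ n) v + π ^ (n + 1) • y := by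
  induction n with
  | zero => simpa using hT x hx
  | succ n ih =>
    obtain ⟨a, y, hy, hxy⟩ := ih
    obtain ⟨b, z, hz, hyz⟩ := hT y hy
    obtain ⟨m, hm, hvm⟩ := exists_pow_apply_eigenvector_eq hv hT hTv (n + 1)
    obtain ⟨u, w, huw⟩ := hc.pow_left (m := n + 1)
    have hv_eq : v = u • (T ^ (n + 1)) v + π • (w • v - u • m) := by
      rw [hvm]
      linear_combination (norm := module) -(huw • v)
    refine ⟨a + π ^ (n + 1) * (b * u), b • (w • v - u • m) + z,
      add_mem (N.smul_mem b (sub_mem (N.smul_mem w hv) (N.smul_mem u hm))) hz, ?_⟩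
    have hy_eq : T y = (b * u) • (T ^ (n + 1)) v + π • (b • (w • v - u • m) + z) := by
      rw [hyz]
      linear_combination (norm := module) b • hv_eq
    rw [pow_succ' T (n + 1), Module.End.mul_apply, hxy, map_add, map_smul, map_smul, hy_eq,
      ← Module.End.mul_apply, ← pow_succ']
    module

lemma exists_pow_succ_apply_eq_smul_pow_apply (hv : v ∈ N)
    (hT : ∀ x ∈ N, ∃ a : R, ∃ y ∈ N, T x = a • v + π • y)
    (hTv : ∃ y ∈ N, T v = c • v + π • y) (hc : IsCoprime c π) (n : ℕ) (hx : x ∈ N) :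
    ∃ a : R, ∃ y ∈ N, (T ^ (n + 1)) x = a • (T ^ n) x + π ^ n • y := by
  cases n with
  | zero => exact ⟨0, T x, apply_mem_of_rankOne hv hT hx, by simp⟩
  | succ n =>
    obtain ⟨a, y, hy, hxy⟩ := exists_pow_succ_apply_eq_smul_eigenvector hv hT hTv hc n hx
    obtain ⟨b, z, hz, hvz⟩ := exists_pow_succ_apply_eq_smul_eigenvector hv hT hTv hc n hv
    refine ⟨b, a • z + T y - b • y, sub_mem (add_mem (N.smul_mem a hz)
      (apply_mem_of_rankOne hv hT hy)) (N.smul_mem b hy), ?_⟩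
    rw [pow_succ' T (n + 1), Module.End.mul_apply, hxy, map_add, map_smul, map_smul,
      ← Module.End.mul_apply, ← pow_succ', hvz]
    module

end RankOne

section Tower

variable {f : ℤ⟦X⟧}

/-- Two consecutive steps of the tower, on the odd-indexed terms stripped of eta factors. -/
def towerOperator : Module.End ℤ ℤ⟦X⟧ := oddStep ∘ₗ evenStep

lemma towerOperator_apply (f : ℤ⟦X⟧) : towerOperator f = oddStep (evenStep f) := rfl

lemma exists_towerOperator_eq_of_evenStep_smodEq {a b : ℤ} (hf : f ∈ oddModule)
    (h : evenStep f ≡ a • twistedQuotient 3 1 + b • twistedQuotient 2 2 [SMOD sevenPow 1]) :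
    ∃ y ∈ oddModule, towerOperator f = b • towerVector + (7 : ℤ) • y := by
  obtain ⟨z, hz⟩ := exists_eq_add_seven_mul h
  obtain ⟨y, hy, hy_eq⟩ := exists_mem_oddModule_oddStep_twistedQuotient_three_one
  have hmem {i j : ℕ} (hij : i + j = 4) (k : ℕ) :
      twistedQuotient i j ∈ weightZero (7 * denominatorBound k + 5) (k + 2) :=
    boundedQuotient_mono 0 0 _ (by omega) (twistedQuotient_mem_weightZero hij _)
  have hz_mem (i : ℕ) : z ∈ weightZero (7 * denominatorBound i + 5) (i + 1) := by
    refine seven_mul_mem_formQuotient_iff.1 ?_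
    rw [← add_sub_cancel_left (a • twistedQuotient 3 1 + b • twistedQuotient 2 2) (7 * z), ← hz]
    exact sub_mem (evenStep_mem_of_mem_oddModule hf i)
      (add_mem (zsmul_mem (hmem rfl i) a) (zsmul_mem (hmem rfl i) b))
  refine ⟨a • y + oddStep z, add_mem (zsmul_mem hy a) (oddStep_mem_oddModule hz_mem), ?_⟩
  rw [towerOperator_apply, hz, map_add, map_add, map_zsmul, map_zsmul, map_seven_mul, hy_eq,
    ← towerVector]
  simp only [zsmul_eq_mul, Int.cast_ofNat]
  ring

lemma exists_towerOperator_pow_oddStep_one_smodEq (n : ℕ) : ∃ x : ℤ,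
    (towerOperator ^ (n + 1)) (oddStep 1) ≡ x • (towerOperator ^ n) (oddStep 1)
      [SMOD sevenPow (n + 1)] := by
  obtain ⟨m, hm, hone⟩ := exists_mem_oddModule_oddStep_one
  obtain ⟨a, y, -, hy⟩ := exists_pow_succ_apply_eq_smul_pow_apply (π := 7)
    towerVector_mem_oddModule
    (fun f hf => by
      obtain ⟨a, b, h⟩ := exists_evenStep_smodEq hf
      exact ⟨b, exists_towerOperator_eq_of_evenStep_smodEq hf h⟩)
    (exists_towerOperator_eq_of_evenStep_smodEq towerVector_mem_oddModule
      evenStep_towerVector_smodEq)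
    (by norm_num) n hm
  refine ⟨a, smodEq_sevenPow_iff_dvd.2 ⟨y, ?_⟩⟩
  rw [hone, map_seven_mul, map_seven_mul, hy]
  simp only [zsmul_eq_mul, Int.cast_pow, Int.cast_ofNat]
  ring

lemma J_seven_mul {b : ℕ} (hb : b ≠ 0) : J (7 * b) = (J b).expand 7 (by norm_num) := by
  rw [J_eq_expand hb, J_eq_expand (by omega), expand_mul_eq_comp (hp := by norm_num) (hq := hb)]
  rfl

lemma Jinv_seven_mul {b : ℕ} (hb : b ≠ 0) : Jinv (7 * b) = (Jinv b).expand 7 (by norm_num) := by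
  refine eq_comm.1 (left_inv_eq_right_inv ?_ (J_mul_Jinv (b := 7 * b) (by omega)))
  rw [J_seven_mul hb, ← map_mul, mul_comm, J_mul_Jinv hb, map_one]

/-- The power series `A₅`. -/
def towerMultiplier : ℤ⟦X⟧ := X ^ 12 * J 2 ^ 5 * J 49 ^ 16 * (Jinv 1 ^ 16 * Jinv 98 ^ 5)

/-- The eta factor carried by the odd-indexed terms of the tower. -/
def oddFactor : ℤ⟦X⟧ := X ^ 2 * J 2 ^ 3 * (J 7 ^ 16 * Jinv 14 ^ 5)

lemma atkinU_towerMultiplier_mul (f : ℤ⟦X⟧) :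
    atkinU 7 (towerMultiplier * f) = oddFactor * oddStep f := by
  have hfactor : towerMultiplier = (X * (J 7 ^ 16 * Jinv 14 ^ 5)).expand 7 (by norm_num)
      * (X ^ 5 * (J 2 ^ 5 * Jinv 1 ^ 16)) := by
    rw [map_mul, map_mul, map_pow, map_pow, expand_X, ← J_seven_mul (by norm_num),
      ← Jinv_seven_mul (by norm_num), towerMultiplier]
    ring
  rw [hfactor, mul_assoc, atkinU_expand_mul, mul_assoc (X ^ 5), atkinU_eq_oddStep, oddFactor]
  ring

lemma atkinU_oddFactor_mul (f : ℤ⟦X⟧) : atkinU 7 (oddFactor * f) = evenStep f := by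
  have hfactor : oddFactor * f
      = (J 1 ^ 16 * Jinv 2 ^ 5).expand 7 (by norm_num) * (X ^ 2 * J 2 ^ 3 * f) := by
    rw [map_mul, map_pow, map_pow, ← J_seven_mul one_ne_zero, ← Jinv_seven_mul two_ne_zero]
    exact (mul_right_comm _ _ _).trans (mul_comm _ _)
  rw [hfactor, atkinU_expand_mul, evenStep_apply]

end Tower

section Laurent

open HahnSeries

lemma coeff_ofPowerSeries_of_neg {R : Type*} [Semiring R] (f : R⟦X⟧) {n : ℤ} (hn : n < 0) :
    (ofPowerSeries ℤ R f).coeff n = 0 := by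
  rw [ofPowerSeries_apply, embDomain_of_notMem_range]
  rintro ⟨k, rfl⟩
  exact hn.not_ge (Int.natCast_nonneg k)

lemma eq_ofPowerSeries_atkinU {R : Type*} [CommRing R] {m : ℕ} (hm : m ≠ 0)
    {F : LaurentSeries R} {f : R⟦X⟧} (hF : ∀ n, F.coeff n = (ofPowerSeries ℤ R f).coeff (m * n)) :
    F = ofPowerSeries ℤ R (atkinU m f) := by
  ext n
  rw [hF]
  obtain hn | hn := lt_or_ge n 0
  · rw [coeff_ofPowerSeries_of_neg _ hn,
      coeff_ofPowerSeries_of_neg _ (mul_neg_of_pos_of_neg (by positivity) hn)]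
  · obtain ⟨k, rfl⟩ := Int.eq_ofNat_of_zero_le hn
    rw [← Nat.cast_mul, ofPowerSeries_apply_coeff, ofPowerSeries_apply_coeff, coeff_atkinU]

lemma eq_ofPowerSeries_towerMultiplier {A : LaurentSeries ℤ}
    (hA : A * ofPowerSeries ℤ ℤ (J 1 ^ 16 * J 98 ^ 5)
      = ofPowerSeries ℤ ℤ (X ^ 12 * J 2 ^ 5 * J 49 ^ 16)) :
    A = ofPowerSeries ℤ ℤ towerMultiplier := by
  have hinv : (J 1 ^ 16 * J 98 ^ 5) * (Jinv 1 ^ 16 * Jinv 98 ^ 5) = 1 := by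
    rw [mul_mul_mul_comm, ← mul_pow, ← mul_pow, J_mul_Jinv one_ne_zero,
      J_mul_Jinv (by norm_num), one_pow, one_pow, one_mul]
  rw [towerMultiplier, map_mul, ← hA, mul_assoc, ← map_mul, hinv, map_one, mul_one]

lemma tower_odd_eq {U : LaurentSeries ℤ → LaurentSeries ℤ}
    (hU : ∀ f, U (ofPowerSeries ℤ ℤ f) = ofPowerSeries ℤ ℤ (atkinU 7 f)) {L : ℕ → LaurentSeries ℤ}
    (hzero : L 0 = 1)
    (hodd : ∀ β, L (2 * β + 1) = U (ofPowerSeries ℤ ℤ towerMultiplier * L (2 * β)))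
    (heven : ∀ β, L (2 * β + 2) = U (L (2 * β + 1))) (β : ℕ) :
    L (2 * β + 1) = ofPowerSeries ℤ ℤ (oddFactor * (towerOperator ^ β) (oddStep 1)) := by
  have hstep {β : ℕ} {f : ℤ⟦X⟧} (h : L (2 * β) = ofPowerSeries ℤ ℤ f) :
      L (2 * β + 1) = ofPowerSeries ℤ ℤ (oddFactor * oddStep f) := by
    rw [hodd, h, ← map_mul, hU, atkinU_towerMultiplier_mul]
  induction β with
  | zero => exact hstep (by rw [mul_zero, hzero, map_one])
  | succ β ih =>
    rw [pow_succ', Module.End.mul_apply, towerOperator_apply]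
    exact hstep (by rw [mul_add_one, heven, ih, hU, atkinU_oddFactor_mul])

lemma modEq_coeff_ofPowerSeries {i : ℕ} {f g : ℤ⟦X⟧} (h : f ≡ g [SMOD sevenPow i]) (n : ℤ) :
    (ofPowerSeries ℤ ℤ f).coeff n ≡ (ofPowerSeries ℤ ℤ g).coeff n [ZMOD 7 ^ i] := by
  obtain hn | hn := lt_or_ge n 0
  · rw [coeff_ofPowerSeries_of_neg _ hn, coeff_ofPowerSeries_of_neg _ hn]
  · obtain ⟨k, rfl⟩ := Int.eq_ofNat_of_zero_le hn
    rw [ofPowerSeries_apply_coeff, ofPowerSeries_apply_coeff]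
    exact (Int.modEq_iff_dvd.2 (smodEq_sevenPow_iff_coeff.1 h k)).symm

end Laurent

/-- in the d₅ tower (`A₅ = q^{12}·J_2^5·J_49^{16}/(J_1^{16}·J_98^5)`,
`L_0 = 1`, `L_{2β+1} = U_7(A₅·L_{2β})`, `L_{2β+2} = U_7(L_{2β+1})`), for every `α ≥ 1`
there is an integer `x` with `L_{2α+1} ≡ x·L_{2α−1} (mod 7^α)` coefficientwise. -/
theorem stmt18
    (U : LaurentSeries ℤ → LaurentSeries ℤ)
    (hU : ∀ (f : LaurentSeries ℤ) (n : ℤ), (U f).coeff n = f.coeff (7 * n))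
    (A5 : LaurentSeries ℤ)
    (hA5 : A5 * HahnSeries.ofPowerSeries ℤ ℤ ((J 1) ^ 16 * (J 98) ^ 5)
        = HahnSeries.ofPowerSeries ℤ ℤ (PowerSeries.X ^ 12 * (J 2) ^ 5 * (J 49) ^ 16))
    (L : ℕ → LaurentSeries ℤ) (hL0 : L 0 = 1)
    (hLodd : ∀ β : ℕ, L (2 * β + 1) = U (A5 * L (2 * β)))
    (hLeven : ∀ β : ℕ, L (2 * β + 2) = U (L (2 * β + 1)))
    (α : ℕ) (hα : 1 ≤ α) :
    ∃ x : ℤ, ∀ n : ℤ,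
      Int.ModEq (7 ^ α) ((L (2 * α + 1)).coeff n) (x * (L (2 * α - 1)).coeff n) := by
  obtain ⟨β, rfl⟩ := Nat.exists_eq_add_of_le' hα
  rw [eq_ofPowerSeries_towerMultiplier hA5] at hLodd
  have htower := tower_odd_eq (fun f => eq_ofPowerSeries_atkinU (by norm_num) (hU _)) hL0 hLodd
    hLeven
  obtain ⟨x, hx⟩ := exists_towerOperator_pow_oddStep_one_smodEq β
  refine ⟨x, fun n => ?_⟩
  have hcongr := modEq_coeff_ofPowerSeries ((SModEq.refl oddFactor).mul hx) n
  rw [mul_smul_comm, map_zsmul, HahnSeries.coeff_smul, smul_eq_mul] at hcongr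
  rw [htower, show 2 * (β + 1) - 1 = 2 * β + 1 by omega, htower]
  exact hcongr
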